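/- Let n ≥ 1, β ∈ (0,n) ∪ (n,∞), and let φ be a doubling Young function satisfying C_β := sup_{t>0} (t^β/φ(t)) ∫_0^t φ(s) s^{-β-1} ds < ∞. Then a domain Ω ⊂ ℝⁿ is a Ẇ^{β,φ}-extension domain if and only if Ω is Ahlfors n-regular. -/

import Mathlib

/-!
Admissibility of `λ` for the seminorm is a unit bound on the modular `fracModular` of `u / λ`, so
both implications are proved for modulars.

An extension domain is Ahlfors regular: extend a radial cutoff equal to `H` on `B(x,s)` and
vanishing outside `B(x,t)`. Finiteness of `C_β` bounds its modular on `Ω` by a multiple of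
`|B(x,t) ∩ Ω| (t - s)^{-β} φ(H)`, so `H` may be large when `Ω` has little volume in the ball. On
the whole space, chaining averages over dyadic balls bounds the height of a function of unit
modular: by a capacity estimate if `β < n` and by a Morrey estimate if `β > n`. Comparing the two
bounds gives a lower bound for the volume, directly if `β > n`, where connectedness provides a
second point of `Ω` at a suitable distance, and by iteration over shrinking radii if `β < n`.

Conversely, extend `u` from a regular `Ω` to a point `x` outside by averaging `u` over `Ω` against
a cutoff at the scale of `dist(x, Ω)`; the boundary of `Ω` is a null set, so this defines the
extension almost everywhere. The averages are Lipschitz in `x`, which with the finiteness of `C_β`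
controls pairs of points that are close relative to their distance to `Ω`. For the remaining pairs
both values are compared with averages at the scale `|x - y|`; the differences telescope over
dyadic scales into mean oscillations of `u` on `Ω`, whose sum over all scales, weighted by the
kernel, is bounded by the modular of `u`. Convexity of `φ` turns the bound for modulars into one
for seminorms.
-/

open MeasureTheory Metric Set Filter
open scoped ENNReal NNReal Topology Classical

noncomputable section

/-- `φ` is a Young function: convex, continuous on `[0,∞)`, `φ(0)=0`, `φ(t)>0` for `t>0`. -/
def IsYoung (φ : ℝ → ℝ) : Prop :=
  ContinuousOn φ (Set.Ici 0) ∧ ConvexOn ℝ (Set.Ici 0) φ ∧ φ 0 = 0 ∧ ∀ t > 0, 0 < φ t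

/-- `φ` is doubling with constant `K > 1`: `φ(2t) ≤ K φ(t)` for all `t > 0`. -/
def IsDoubling (φ : ℝ → ℝ) (K : ℝ) : Prop :=
  1 < K ∧ ∀ t > 0, φ (2 * t) ≤ K * φ t

/-- The (generalized) inverse of a Young function. -/
def yInv (φ : ℝ → ℝ) (y : ℝ) : ℝ :=
  sInf {t : ℝ | 0 ≤ t ∧ y ≤ φ t}

/-- `sup_{t>0} (t^β/φ(t)) ∫_0^t φ(s) s^{-β-1} ds ≤ M`. -/
def CbetaLE (β : ℝ) (φ : ℝ → ℝ) (M : ℝ) : Prop :=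
  ∀ t > 0,
    ENNReal.ofReal (t ^ β / φ t) *
        (∫⁻ s in Set.Ioc (0 : ℝ) t, ENNReal.ofReal (φ s / s ^ (β + 1))) ≤
      ENNReal.ofReal M

/-- The condition `C_β := sup_{t>0} (t^β/φ(t)) ∫_0^t φ(s) s^{-β-1} ds < ∞`. -/
def CbetaFinite (β : ℝ) (φ : ℝ → ℝ) : Prop :=
  ∃ M : ℝ, CbetaLE β φ M

/-- The double integral `∫_Ω ∫_Ω φ(|u(x)-u(y)|/λ) |x-y|^{-n-β} dx dy`. -/
def fracIntegral (n : ℕ) (β : ℝ) (φ : ℝ → ℝ) (Ω : Set (EuclideanSpace ℝ (Fin n)))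
    (u : EuclideanSpace ℝ (Fin n) → ℝ) (lam : ℝ) : ℝ≥0∞ :=
  ∫⁻ x in Ω, ∫⁻ y in Ω,
    ENNReal.ofReal (φ (|u x - u y| / lam) / dist x y ^ ((n : ℝ) + β))

/-- The fractional Orlicz–Sobolev (Luxemburg-type) seminorm `‖u‖_{Ẇ^{β,φ}(Ω)}`,
valued in `[0,∞]` (it is `∞` iff no admissible `λ` exists). -/
def fracNorm (n : ℕ) (β : ℝ) (φ : ℝ → ℝ) (Ω : Set (EuclideanSpace ℝ (Fin n)))
    (u : EuclideanSpace ℝ (Fin n) → ℝ) : ℝ≥0∞ :=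
  sInf {lam : ℝ≥0∞ | 0 < lam ∧ lam ≠ ∞ ∧ fracIntegral n β φ Ω u lam.toReal ≤ 1}

/-- `u ∈ Ẇ^{β,φ}(Ω)` : locally integrable on `Ω` with finite seminorm. -/
def MemW (n : ℕ) (β : ℝ) (φ : ℝ → ℝ) (Ω : Set (EuclideanSpace ℝ (Fin n)))
    (u : EuclideanSpace ℝ (Fin n) → ℝ) : Prop :=
  LocallyIntegrableOn u Ω ∧ fracNorm n β φ Ω u ≠ ∞

/-- The Orlicz (Luxemburg) norm `‖u‖_{L^ψ(Ω)}`, valued in `[0,∞]`. -/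
def luxNorm (n : ℕ) (ψ : ℝ → ℝ) (Ω : Set (EuclideanSpace ℝ (Fin n)))
    (u : EuclideanSpace ℝ (Fin n) → ℝ) : ℝ≥0∞ :=
  sInf {lam : ℝ≥0∞ | 0 < lam ∧ lam ≠ ∞ ∧
    (∫⁻ x in Ω, ENNReal.ofReal (ψ (|u x| / lam.toReal))) ≤ 1}

/-- `Ω` is Ahlfors `n`-regular: `|B(x,r) ∩ Ω| ≥ θ rⁿ` for all `x ∈ Ω`, `0 < r < 2 diam Ω`. -/
def AhlforsRegular (n : ℕ) (Ω : Set (EuclideanSpace ℝ (Fin n))) : Prop :=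
  ∃ θ > (0 : ℝ), ∀ x ∈ Ω, ∀ r : ℝ, 0 < r → ENNReal.ofReal r < 2 * EMetric.diam Ω →
    ENNReal.ofReal (θ * r ^ n) ≤ volume (Metric.ball x r ∩ Ω)

/-- `Ω` is a `Ẇ^{β,φ}`-extension domain: there are `C > 0` and a linear operator `E`
from `Ẇ^{β,φ}(Ω)` to `Ẇ^{β,φ}(ℝⁿ)` with `Eu = u` a.e. on `Ω` and
`‖Eu‖_{Ẇ^{β,φ}(ℝⁿ)} ≤ C ‖u‖_{Ẇ^{β,φ}(Ω)}`. -/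
def IsExtensionDomain (n : ℕ) (β : ℝ) (φ : ℝ → ℝ)
    (Ω : Set (EuclideanSpace ℝ (Fin n))) : Prop :=
  ∃ C > (0 : ℝ), ∃ E : (EuclideanSpace ℝ (Fin n) → ℝ) → (EuclideanSpace ℝ (Fin n) → ℝ),
    (∀ u v, MemW n β φ Ω u → MemW n β φ Ω v → E (u + v) = E u + E v) ∧
    (∀ (c : ℝ) (u), MemW n β φ Ω u → E (c • u) = c • E u) ∧
    (∀ u, MemW n β φ Ω u →
      MemW n β φ Set.univ (E u) ∧
      (∀ᵐ x ∂(volume.restrict Ω), E u x = u x) ∧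
      fracNorm n β φ Set.univ (E u) ≤ ENNReal.ofReal C * fracNorm n β φ Ω u)

end

open Module (finrank)

/-! ### Young functions -/

/-- The integrand `t ↦ φ(|t|)` of all modulars, as a function on `ℝ` with values in `[0,∞]`. -/
noncomputable def youngAbs (φ : ℝ → ℝ) (t : ℝ) : ℝ≥0∞ := ENNReal.ofReal (φ |t|)

section Young

variable {φ : ℝ → ℝ} {K : ℝ}

lemma IsYoung.nonneg (h : IsYoung φ) {t : ℝ} (ht : 0 ≤ t) : 0 ≤ φ t := by
  rcases ht.eq_or_lt with rfl | h0
  · exact h.2.2.1.ge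
  · exact (h.2.2.2 t h0).le

lemma IsYoung.map_mul_le (h : IsYoung φ) {c t : ℝ} (hc : 0 ≤ c) (hc1 : c ≤ 1) (ht : 0 ≤ t) :
    φ (c * t) ≤ c * φ t := by
  have := h.2.1.2 ht (mem_Ici.2 le_rfl : (0 : ℝ) ∈ Ici (0 : ℝ)) hc (sub_nonneg.2 hc1) (by ring)
  simpa [h.2.2.1] using this

lemma IsYoung.mono (h : IsYoung φ) {s t : ℝ} (hs : 0 ≤ s) (hst : s ≤ t) : φ s ≤ φ t := by
  rcases hst.eq_or_lt with rfl | hlt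
  · exact le_rfl
  have ht : 0 < t := hs.trans_lt hlt
  have hle : s / t ≤ 1 := (div_le_one ht).2 hst
  calc φ s = φ (s / t * t) := by rw [div_mul_cancel₀ _ ht.ne']
    _ ≤ s / t * φ t := h.map_mul_le (by positivity) hle ht.le
    _ ≤ φ t := mul_le_of_le_one_left (h.nonneg ht.le) hle

lemma IsYoung.mul_map_one_le (h : IsYoung φ) {t : ℝ} (ht : 1 ≤ t) : t * φ 1 ≤ φ t := by
  have h0 : 0 < t := one_pos.trans_le ht
  have := h.map_mul_le (c := t⁻¹) (by positivity) (inv_le_one_of_one_le₀ ht) h0.le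
  rwa [inv_mul_cancel₀ h0.ne', ← div_eq_inv_mul, le_div_iff₀ h0, mul_comm] at this

lemma IsYoung.le_one_add_div (h : IsYoung φ) {t : ℝ} (ht : 0 ≤ t) : t ≤ 1 + φ t / φ 1 := by
  have h1 := h.2.2.2 1 one_pos
  have hnn : 0 ≤ φ t / φ 1 := div_nonneg (h.nonneg ht) h1.le
  rcases le_total t 1 with hle | hge
  · linarith
  · linarith [(le_div_iff₀ h1).2 (h.mul_map_one_le hge)]

lemma IsYoung.exists_pos_map_eq (h : IsYoung φ) {y : ℝ} (hy : 0 < y) : ∃ t > 0, φ t = y := by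
  have h1 := h.2.2.2 1 one_pos
  set T := max 1 (y / φ 1)
  have hyT : y ≤ φ T :=
    ((div_le_iff₀ h1).1 (le_max_right _ _)).trans (h.mul_map_one_le (le_max_left _ _))
  obtain ⟨t, ht, rfl⟩ := intermediate_value_Icc (zero_le_one.trans (le_max_left _ _) : 0 ≤ T)
    (h.1.mono Icc_subset_Ici_self) ⟨h.2.2.1.trans_le hy.le, hyT⟩
  exact ⟨t, ht.1.lt_of_ne fun h0 => hy.ne' (h0 ▸ h.2.2.1), rfl⟩

lemma IsYoung.continuous_comp_abs (h : IsYoung φ) : Continuous fun t => φ |t| :=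
  h.1.comp_continuous continuous_abs fun x => abs_nonneg x

lemma IsYoung.map_two_mul_le (h : IsYoung φ) (hK : IsDoubling φ K) {t : ℝ} (ht : 0 ≤ t) :
    φ (2 * t) ≤ K * φ t := by
  rcases ht.eq_or_lt with rfl | h0
  · simp [h.2.2.1]
  · exact hK.2 t h0

lemma IsYoung.map_two_pow_mul_le (h : IsYoung φ) (hK : IsDoubling φ K) {t : ℝ} (ht : 0 ≤ t)
    (m : ℕ) : φ (2 ^ m * t) ≤ K ^ m * φ t := by
  induction m with
  | zero => simp
  | succ m ih =>
    calc φ (2 ^ (m + 1) * t) = φ (2 * (2 ^ m * t)) := by rw [pow_succ', mul_assoc]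
      _ ≤ K * φ (2 ^ m * t) := h.map_two_mul_le hK (by positivity)
      _ ≤ K * (K ^ m * φ t) := mul_le_mul_of_nonneg_left ih (one_pos.trans hK.1).le
      _ = K ^ (m + 1) * φ t := by ring

lemma youngAbs_ne_top (t : ℝ) : youngAbs φ t ≠ ∞ := ENNReal.ofReal_ne_top

lemma youngAbs_neg (t : ℝ) : youngAbs φ (-t) = youngAbs φ t := by simp [youngAbs]

lemma youngAbs_sub_comm (s t : ℝ) : youngAbs φ (s - t) = youngAbs φ (t - s) := by
  rw [← youngAbs_neg, neg_sub]

lemma youngAbs_abs (t : ℝ) : youngAbs φ |t| = youngAbs φ t := by simp [youngAbs]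

lemma IsYoung.measurable_youngAbs (h : IsYoung φ) : Measurable (youngAbs φ) :=
  h.continuous_comp_abs.measurable.ennreal_ofReal

lemma IsYoung.youngAbs_zero (h : IsYoung φ) : youngAbs φ 0 = 0 := by simp [youngAbs, h.2.2.1]

lemma IsYoung.youngAbs_mono (h : IsYoung φ) {s t : ℝ} (hst : |s| ≤ |t|) :
    youngAbs φ s ≤ youngAbs φ t :=
  ENNReal.ofReal_le_ofReal (h.mono (abs_nonneg _) hst)

lemma IsYoung.exists_youngAbs_le_of_abs_le (h : IsYoung φ) (hK : IsDoubling φ K) (c : ℝ) :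
    ∃ C : ℝ≥0, 0 < C ∧ ∀ s t : ℝ, |s| ≤ |c * t| → youngAbs φ s ≤ C * youngAbs φ t := by
  obtain ⟨m, hm⟩ := pow_unbounded_of_one_lt |c| (one_lt_two (α := ℝ))
  have hK0 : 0 < K := one_pos.trans hK.1
  refine ⟨(K ^ m).toNNReal, Real.toNNReal_pos.2 (by positivity), fun s t hst => ?_⟩
  have hle : |s| ≤ 2 ^ m * |t| :=
    (abs_mul c t ▸ hst).trans (mul_le_mul_of_nonneg_right hm.le (abs_nonneg t))
  calc youngAbs φ s ≤ ENNReal.ofReal (K ^ m * φ |t|) := ENNReal.ofReal_le_ofReal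
        ((h.mono (abs_nonneg s) hle).trans (h.map_two_pow_mul_le hK (abs_nonneg t) m))
    _ = (K ^ m).toNNReal * youngAbs φ t := ENNReal.ofReal_mul (by positivity)

lemma IsYoung.map_one_add_mul_le (h : IsYoung φ) (hK : IsDoubling φ K) {η t : ℝ} (hη : 0 ≤ η)
    (hη1 : η ≤ 1) (ht : 0 ≤ t) : φ ((1 + η) * t) ≤ (1 + η * K) * φ t := by
  have hconv := h.2.1.2 (mem_Ici.2 ht) (mem_Ici.2 (by positivity : 0 ≤ 2 * t))
    (sub_nonneg.2 hη1) hη (by ring)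
  simp only [smul_eq_mul] at hconv
  calc φ ((1 + η) * t) = φ ((1 - η) * t + η * (2 * t)) := by congr 1; ring
    _ ≤ (1 - η) * φ t + η * (K * φ t) := hconv.trans
        (add_le_add_right (mul_le_mul_of_nonneg_left (h.map_two_mul_le hK ht) hη) _)
    _ ≤ (1 + η * K) * φ t := by nlinarith [mul_nonneg hη (h.nonneg ht)]

-- Either `|t| ≤ η |s|`, and convexity gives a factor close to `1`, or `s + t` is dominated by `t`.
lemma IsYoung.exists_youngAbs_add_le_mul_add (h : IsYoung φ) (hK : IsDoubling φ K) {q : ℝ≥0}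
    (hq : 1 < q) :
    ∃ C : ℝ≥0, ∀ s t : ℝ, youngAbs φ (s + t) ≤ q * youngAbs φ s + C * youngAbs φ t := by
  have hK0 : 0 < K := one_pos.trans hK.1
  have hq' : (0 : ℝ) < q - 1 := sub_pos.2 (by exact_mod_cast hq)
  set η : ℝ := min 1 ((q - 1) / K)
  have hη0 : 0 < η := lt_min one_pos (by positivity)
  have hηK : 1 + η * K ≤ q := by
    linarith [(le_div_iff₀ hK0).1 (min_le_right 1 (((q : ℝ) - 1) / K))]
  obtain ⟨C, -, hC⟩ := h.exists_youngAbs_le_of_abs_le hK (1 + η⁻¹)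
  refine ⟨C, fun s t => ?_⟩
  rcases le_or_gt |t| (η * |s|) with hts | hts
  · have hle : φ |s + t| ≤ q * φ |s| :=
      calc φ |s + t| ≤ φ ((1 + η) * |s|) :=
            h.mono (abs_nonneg _) ((abs_add_le s t).trans (by linarith))
        _ ≤ (1 + η * K) * φ |s| :=
            h.map_one_add_mul_le hK hη0.le (min_le_left _ _) (abs_nonneg s)
        _ ≤ q * φ |s| := mul_le_mul_of_nonneg_right hηK (h.nonneg (abs_nonneg s))
    refine le_add_right ((ENNReal.ofReal_le_ofReal hle).trans_eq ?_)
    rw [ENNReal.ofReal_mul q.coe_nonneg, ENNReal.ofReal_coe_nnreal, youngAbs]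
  · refine le_add_left (hC _ t ?_)
    have hs : |s| ≤ η⁻¹ * |t| := by rw [← div_eq_inv_mul, le_div_iff₀ hη0]; linarith
    rw [abs_mul, abs_of_pos (by positivity : 0 < 1 + η⁻¹)]
    linarith [abs_add_le s t]

lemma IsYoung.exists_youngAbs_add_le (h : IsYoung φ) (hK : IsDoubling φ K) :
    ∃ C : ℝ≥0, ∀ s t : ℝ, youngAbs φ (s + t) ≤ C * (youngAbs φ s + youngAbs φ t) := by
  obtain ⟨C, hC⟩ := h.exists_youngAbs_add_le_mul_add hK one_lt_two
  refine ⟨2 + C, fun s t => (hC s t).trans ?_⟩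
  rw [mul_add]
  push_cast
  gcongr
  · exact le_self_add
  · exact le_add_self

lemma IsYoung.exists_youngAbs_add_add_le (h : IsYoung φ) (hK : IsDoubling φ K) :
    ∃ C : ℝ≥0, ∀ s t r : ℝ,
      youngAbs φ (s + t + r) ≤ C * (youngAbs φ s + youngAbs φ t + youngAbs φ r) := by
  obtain ⟨C, hC⟩ := h.exists_youngAbs_add_le hK
  refine ⟨C * (C + 1), fun s t r => ?_⟩
  calc youngAbs φ (s + t + r) ≤ C * (C * (youngAbs φ s + youngAbs φ t) + youngAbs φ r) :=
        (hC _ _).trans (mul_le_mul_right (add_le_add_left (hC _ _) _) _)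
    _ ≤ C * (C * (youngAbs φ s + youngAbs φ t + youngAbs φ r)
          + (youngAbs φ s + youngAbs φ t + youngAbs φ r)) := by
        gcongr _ * (_ * ?_ + ?_)
        exacts [le_self_add, le_add_self]
    _ = _ := by push_cast; ring

lemma IsYoung.exists_youngAbs_sub_le_add_add (h : IsYoung φ) (hK : IsDoubling φ K) :
    ∃ C : ℝ≥0, ∀ a b c d : ℝ, youngAbs φ (a - d) ≤
      C * (youngAbs φ (a - b) + youngAbs φ (b - c) + youngAbs φ (c - d)) := by
  obtain ⟨C, hC⟩ := h.exists_youngAbs_add_add_le hK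
  exact ⟨C, fun a b c d => by simpa only [sub_add_sub_cancel] using hC (a - b) (b - c) (c - d)⟩

end Young

/-! ### Jensen's inequality and averages -/

lemma indicator_one_mem_Icc {α : Type*} (s : Set α) (z : α) :
    s.indicator (1 : α → ℝ) z ∈ Icc 0 1 := by
  by_cases hz : z ∈ s <;> simp [hz]

section Jensen

variable {α : Type*} [MeasurableSpace α] {μ : Measure α} {φ : ℝ → ℝ} {f k a b u : α → ℝ}

lemma IsYoung.youngAbs_integral_le [IsProbabilityMeasure μ] (h : IsYoung φ) (hf : Integrable f μ) :
    youngAbs φ (∫ x, f x ∂μ) ≤ ∫⁻ x, youngAbs φ (f x) ∂μ := by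
  have hnn : 0 ≤ᵐ[μ] fun x => φ |f x| := ae_of_all _ fun x => h.nonneg (abs_nonneg _)
  by_cases hfin : ∫⁻ x, youngAbs φ (f x) ∂μ = ∞
  · exact hfin ▸ le_top
  have hi : Integrable (fun x => φ |f x|) μ :=
    ⟨h.continuous_comp_abs.comp_aestronglyMeasurable hf.1,
      (hasFiniteIntegral_iff_ofReal hnn).2 (lt_top_iff_ne_top.2 hfin)⟩
  have hle : φ |∫ x, f x ∂μ| ≤ ∫ x, φ |f x| ∂μ :=
    (h.mono (abs_nonneg _) abs_integral_le_integral_abs).trans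
      (h.2.1.map_integral_le h.1 isClosed_Ici (ae_of_all _ fun x => abs_nonneg (f x)) hf.abs hi)
  exact (ENNReal.ofReal_le_ofReal hle).trans_eq (ofReal_integral_eq_lintegral_ofReal hi hnn)

lemma IsYoung.youngAbs_average_le [IsFiniteMeasure μ] (h : IsYoung φ) (hμ : μ ≠ 0)
    (hf : Integrable f μ) :
    youngAbs φ (⨍ x, f x ∂μ) ≤ (μ univ)⁻¹ * ∫⁻ x, youngAbs φ (f x) ∂μ := by
  have : NeZero μ := ⟨hμ⟩
  have hinv : (μ univ)⁻¹ ≠ ∞ := by simpa using hμ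
  have := h.youngAbs_integral_le (hf.smul_measure hinv)
  rw [lintegral_smul_measure] at this
  simpa [average] using this

lemma integrable_prod_mul_sub [IsFiniteMeasure μ] (hk : Integrable k μ) (hu : Integrable u μ)
    (hku : Integrable (fun x => k x * u x) μ) :
    Integrable (fun p : α × α => k p.1 * (u p.1 - u p.2)) (μ.prod μ) := by
  refine ((hku.mul_prod (integrable_const (1 : ℝ))).sub (hk.mul_prod hu)).congr
    (ae_of_all _ fun p => ?_)
  simp only [Pi.sub_apply]
  ring

lemma integral_prod_mul_sub [IsFiniteMeasure μ] (hk : Integrable k μ) (hu : Integrable u μ)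
    (hku : Integrable (fun x => k x * u x) μ) (hk0 : ∫ x, k x ∂μ = 0) :
    ∫ p : α × α, k p.1 * (u p.1 - u p.2) ∂μ.prod μ = μ.real univ * ∫ x, k x * u x ∂μ := by
  have hsplit : (fun p : α × α => k p.1 * (u p.1 - u p.2)) =
      fun p => k p.1 * u p.1 * 1 - k p.1 * u p.2 := by
    funext p
    ring
  rw [hsplit, integral_sub (hku.mul_prod (integrable_const (1 : ℝ))) (hk.mul_prod hu),
    integral_prod_mul (fun x => k x * u x) fun _ => (1 : ℝ), integral_prod_mul k u, hk0]
  simp [mul_comm]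

-- A kernel of mean zero only sees differences of `u`, to which Jensen applies on `α × α`.
lemma IsYoung.youngAbs_integral_mul_le [IsFiniteMeasure μ] (h : IsYoung φ) (hμ : μ ≠ 0)
    (hu : Integrable u μ) (hk : AEStronglyMeasurable k μ) {M : ℝ} (hM : ∀ x, |k x| ≤ M)
    (hk0 : ∫ x, k x ∂μ = 0) :
    youngAbs φ (∫ x, k x * u x ∂μ) ≤ (μ univ)⁻¹ * (μ univ)⁻¹ *
      ∫⁻ z, ∫⁻ w, youngAbs φ (M * μ.real univ * (u z - u w)) ∂μ ∂μ := by
  set m := μ.real univ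
  have : NeZero μ := ⟨hμ⟩
  have hm : 0 < m := measureReal_univ_pos
  have hki : Integrable k μ := .of_bound hk M (ae_of_all _ hM)
  have hku : Integrable (fun x => k x * u x) μ := hu.bdd_mul hk (ae_of_all _ hM)
  have hprod : (μ.prod μ) univ = μ univ * μ univ := by rw [← univ_prod_univ, Measure.prod_prod]
  have hprod0 : μ.prod μ ≠ 0 := by
    rw [← Measure.measure_univ_ne_zero, hprod]
    simpa using hμ
  have hinv : ((μ.prod μ) univ)⁻¹ = (μ univ)⁻¹ * (μ univ)⁻¹ := by
    rw [hprod]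
    exact ENNReal.mul_inv (.inr (measure_ne_top _ _)) (.inl (measure_ne_top _ _))
  have haverage : ⨍ p : α × α, m * (k p.1 * (u p.1 - u p.2)) ∂μ.prod μ = ∫ x, k x * u x ∂μ := by
    rw [average_eq, integral_const_mul, integral_prod_mul_sub hki hu hku hk0, ← univ_prod_univ,
      measureReal_prod_prod, smul_eq_mul]
    change (m * m)⁻¹ * (m * (m * _)) = _
    field_simp
  have hmeas : AEMeasurable (fun p : α × α => youngAbs φ (M * m * (u p.1 - u p.2))) (μ.prod μ) :=
     h.measurable_youngAbs.comp_aemeasurable (((hu.1.comp_fst (ν := μ)).aemeasurable.sub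
      (hu.1.comp_snd (μ := μ)).aemeasurable).const_mul _)
  rw [← haverage, ← hinv, ← lintegral_prod _ hmeas]
  refine (h.youngAbs_average_le hprod0
    ((integrable_prod_mul_sub hki hu hku).const_mul m)).trans ?_
  gcongr with p
  refine h.youngAbs_mono ?_
  have hM0 : 0 ≤ M := (abs_nonneg _).trans (hM p.1)
  rw [abs_mul, abs_mul, abs_mul, abs_mul, abs_of_nonneg hM0, ← mul_assoc, mul_comm M]
  gcongr
  exact hM p.1

/-- The mean of `u` with respect to the weight `a`, with the junk value `0` if `a` has no mass. -/
noncomputable def weightedAverage (μ : Measure α) (a u : α → ℝ) : ℝ :=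
  (∫ z, a z * u z ∂μ) / ∫ z, a z ∂μ

lemma weightedAverage_congr {v : α → ℝ} (huv : u =ᵐ[μ] v) :
    weightedAverage μ a u = weightedAverage μ a v := by
  rw [weightedAverage, weightedAverage,
    integral_congr_ae (huv.mono fun z hz => congrArg (a z * ·) hz)]

lemma weightedAverage_restrict {s t : Set α} (hst : s ⊆ t) (ht : MeasurableSet t)
    (ha : ∀ z ∈ t, z ∉ s → a z = 0) :
    weightedAverage (μ.restrict s) a u = weightedAverage (μ.restrict t) a u := by
  have hcongr : ∀ v : α → ℝ, ∫ z in s, a z * v z ∂μ = ∫ z in t, a z * v z ∂μ := fun v =>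
    (setIntegral_eq_of_subset_of_forall_sdiff_eq_zero ht hst fun z hz => by
      rw [ha z hz.1 hz.2, zero_mul]).symm
  rw [weightedAverage, weightedAverage, hcongr u]
  simpa using congrArg _ (hcongr 1)

lemma weightedAverage_indicator_one {s : Set α} (hs : MeasurableSet s) :
    weightedAverage μ (s.indicator 1) u = ⨍ z in s, u z ∂μ := by
  have hmul : (fun z => s.indicator 1 z * u z) = s.indicator u := by
    funext z
    by_cases hz : z ∈ s <;> simp [hz]
  rw [weightedAverage, hmul, integral_indicator hs, integral_indicator_one hs, setAverage_eq,
    smul_eq_mul, div_eq_inv_mul]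

lemma abs_div_sub_div_le {x y A B c m ε : ℝ} (hx : x ∈ Icc 0 1) (hc : 0 < c) (hm : 0 < m)
    (hA : c * m ≤ A) (hB : c * m ≤ B) (hxy : |x - y| ≤ ε) (hAB : |A - B| ≤ ε * m) :
    |x / A - y / B| ≤ (c⁻¹ + c⁻¹ ^ 2) * ε / m := by
  have hA0 : 0 < A := (mul_pos hc hm).trans_le hA
  have hB0 : 0 < B := (mul_pos hc hm).trans_le hB
  have hsplit : x / A - y / B = (x - y) / B - x * (A - B) / (A * B) := by
    field_simp
    ring
  calc |x / A - y / B| ≤ |x - y| / B + |x| * |A - B| / (A * B) := by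
        rw [hsplit]
        refine (abs_sub _ _).trans_eq ?_
        rw [abs_div, abs_div, abs_mul, abs_of_pos hB0, abs_of_pos (mul_pos hA0 hB0)]
    _ ≤ ε / (c * m) + 1 * (ε * m) / (c * m * (c * m)) := by
        have hε : 0 ≤ ε := (abs_nonneg _).trans hxy
        gcongr
        exact abs_le.2 ⟨by linarith [hx.1], hx.2⟩
    _ = (c⁻¹ + c⁻¹ ^ 2) * ε / m := by
        field_simp

lemma IsYoung.youngAbs_weightedAverage_sub_le [IsFiniteMeasure μ] (h : IsYoung φ) (hμ : μ ≠ 0)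
    (ha : Measurable a) (hb : Measurable b) (ha01 : ∀ z, a z ∈ Icc 0 1)
    (hb01 : ∀ z, b z ∈ Icc 0 1) {c ε : ℝ} (hc : 0 < c) (hca : c * μ.real univ ≤ ∫ z, a z ∂μ)
    (hcb : c * μ.real univ ≤ ∫ z, b z ∂μ) (hab : ∀ z, |a z - b z| ≤ ε) (hu : Integrable u μ) :
    youngAbs φ (weightedAverage μ a u - weightedAverage μ b u) ≤ (μ univ)⁻¹ * (μ univ)⁻¹ *
      ∫⁻ z, ∫⁻ w, youngAbs φ ((c⁻¹ + c⁻¹ ^ 2) * ε * (u z - u w)) ∂μ ∂μ := by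
  have : NeZero μ := ⟨hμ⟩
  set m := μ.real univ
  have hm : 0 < m := measureReal_univ_pos
  have hnorm : ∀ {f : α → ℝ}, (∀ z, f z ∈ Icc 0 1) → ∀ z, ‖f z‖ ≤ 1 := fun hf z => by
    rw [Real.norm_of_nonneg (hf z).1]
    exact (hf z).2
  have hint : ∀ {f v : α → ℝ}, Measurable f → (∀ z, f z ∈ Icc 0 1) → Integrable v μ →
      Integrable (fun z => f z * v z) μ := fun hf hf01 hv =>
    hv.bdd_mul hf.aestronglyMeasurable (ae_of_all _ (hnorm hf01))
  have hia : Integrable a μ := .of_bound ha.aestronglyMeasurable 1 (ae_of_all _ (hnorm ha01))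
  have hib : Integrable b μ := .of_bound hb.aestronglyMeasurable 1 (ae_of_all _ (hnorm hb01))
  set A := ∫ z, a z ∂μ
  set B := ∫ z, b z ∂μ
  have hA : A ≠ 0 := ((mul_pos hc hm).trans_le hca).ne'
  have hB : B ≠ 0 := ((mul_pos hc hm).trans_le hcb).ne'
  have hmass : |A - B| ≤ ε * m := by
    rw [← integral_sub hia hib]
    exact norm_integral_le_of_norm_le_const (f := fun z => a z - b z) (ae_of_all _ hab)
  have hmean : ∫ z, (a z / A - b z / B) ∂μ = 0 := by
    rw [integral_sub (hia.div_const _) (hib.div_const _), integral_div, integral_div,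
      div_self hA, div_self hB, sub_self]
  have hval : ∫ z, (a z / A - b z / B) * u z ∂μ =
      weightedAverage μ a u - weightedAverage μ b u := by
    simp only [sub_mul, div_mul_eq_mul_div]
    rw [integral_sub ((hint ha ha01 hu).div_const _) ((hint hb hb01 hu).div_const _), integral_div,
      integral_div, weightedAverage, weightedAverage]
  have hle := h.youngAbs_integral_mul_le hμ hu
    ((ha.div_const A).sub (hb.div_const B)).aestronglyMeasurable
    (fun z => abs_div_sub_div_le (ha01 z) hc hm hca hcb (hab z) hmass) hmean
  rw [div_mul_cancel₀ _ hm.ne'] at hle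
  simpa only [Pi.sub_apply, hval] using hle

lemma IsYoung.youngAbs_setAverage_sub_setAverage_le (h : IsYoung φ) {A A' B : Set α}
    (hA : MeasurableSet A) (hA' : MeasurableSet A') (hAB : A ⊆ B) (hAB' : A' ⊆ B) (hB : μ B ≠ ∞)
    (hB0 : μ B ≠ 0) {c : ℝ} (hc : 0 < c) (hcA : c * μ.real B ≤ μ.real A)
    (hcA' : c * μ.real B ≤ μ.real A') (hu : IntegrableOn u B μ) :
    youngAbs φ ((⨍ z in A, u z ∂μ) - ⨍ z in A', u z ∂μ) ≤ (μ B)⁻¹ * (μ B)⁻¹ *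
      ∫⁻ z in B, ∫⁻ w in B, youngAbs φ ((c⁻¹ + c⁻¹ ^ 2) * (u z - u w)) ∂μ ∂μ := by
  have : IsFiniteMeasure (μ.restrict B) := ⟨by simpa using lt_top_iff_ne_top.2 hB⟩
  have hmass : ∀ {D : Set α}, MeasurableSet D → D ⊆ B → c * μ.real B ≤ μ.real D →
      c * (μ.restrict B).real univ ≤ ∫ z in B, D.indicator 1 z ∂μ := fun hD hDB hcD => by
    rwa [integral_indicator_one hD, measureReal_restrict_apply hD, inter_eq_self_of_subset_left hDB,
      measureReal_restrict_apply_univ]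
  have hle := h.youngAbs_weightedAverage_sub_le (μ := μ.restrict B)
    (by rwa [Ne, Measure.restrict_eq_zero]) (measurable_one.indicator hA)
    (measurable_one.indicator hA') (indicator_one_mem_Icc A) (indicator_one_mem_Icc A') hc
    (hmass hA hAB hcA) (hmass hA' hAB' hcA') (ε := 1)
    (fun z => abs_sub_le_of_nonneg_of_le (indicator_one_mem_Icc A z).1 (indicator_one_mem_Icc A z).2
      (indicator_one_mem_Icc A' z).1 (indicator_one_mem_Icc A' z).2) hu
  rwa [weightedAverage_indicator_one hA, weightedAverage_indicator_one hA',
    Measure.restrict_restrict_of_subset hAB, Measure.restrict_restrict_of_subset hAB', mul_one,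
    Measure.restrict_apply_univ] at hle

end Jensen

/-! ### Power kernels and dyadic sums -/

/-- The radial kernel `r ↦ r^{-s}` with values in `[0,∞]`. It is built on `Real.rpow`, so its value
at `r = 0` is `0` rather than `∞` (for `s ≠ 0`). -/
noncomputable def rpowKernel (s r : ℝ) : ℝ≥0∞ := ENNReal.ofReal (r ^ (-s))

/-- The value `2^{-ks}` of the power kernel at the dyadic scale `2^k`. -/
noncomputable def dyadicKernel (s : ℝ) (k : ℤ) : ℝ≥0∞ := rpowKernel s (2 ^ k)

section Kernel

variable {s t r : ℝ}

lemma rpowKernel_ne_top : rpowKernel s r ≠ ∞ := ENNReal.ofReal_ne_top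

lemma rpowKernel_pos (hr : 0 < r) : 0 < rpowKernel s r :=
  ENNReal.ofReal_pos.2 (Real.rpow_pos_of_pos hr _)

lemma rpowKernel_ne_zero (hr : 0 < r) : rpowKernel s r ≠ 0 := (rpowKernel_pos hr).ne'

lemma measurable_rpowKernel : Measurable (rpowKernel s) := by
  unfold rpowKernel
  fun_prop

lemma rpowKernel_anti (hs : 0 ≤ s) (hr : 0 < r) (hrt : r ≤ t) : rpowKernel s t ≤ rpowKernel s r :=
  ENNReal.ofReal_le_ofReal (Real.rpow_le_rpow_of_nonpos hr hrt (neg_nonpos.2 hs))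

lemma rpowKernel_mul {a b : ℝ} (ha : 0 ≤ a) (hb : 0 ≤ b) :
    rpowKernel s (a * b) = rpowKernel s a * rpowKernel s b := by
  simp only [rpowKernel]
  rw [Real.mul_rpow ha hb, ENNReal.ofReal_mul (by positivity)]

lemma rpowKernel_add (hr : 0 < r) : rpowKernel (s + t) r = rpowKernel s r * rpowKernel t r := by
  simp only [rpowKernel]
  rw [neg_add, Real.rpow_add hr, ENNReal.ofReal_mul (by positivity)]

lemma rpowKernel_neg (hr : 0 < r) : rpowKernel (-s) r = (rpowKernel s r)⁻¹ := by
  rw [rpowKernel, rpowKernel, ← ENNReal.ofReal_inv_of_pos (by positivity), Real.rpow_neg hr.le]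

lemma rpowKernel_pow (hr : 0 ≤ r) (j : ℕ) : rpowKernel s (r ^ j) = rpowKernel s r ^ j := by
  rw [rpowKernel, rpowKernel, ← ENNReal.ofReal_pow (by positivity), ← Real.rpow_natCast_mul hr,
    mul_comm, Real.rpow_mul_natCast hr]

lemma rpowKernel_natCast_mul_ofReal_pow (hr : 0 < r) (n : ℕ) :
    rpowKernel n r * ENNReal.ofReal (r ^ n) = 1 := by
  rw [rpowKernel, ← ENNReal.ofReal_mul (by positivity), Real.rpow_neg hr.le, Real.rpow_natCast,
    inv_mul_cancel₀ (by positivity), ENNReal.ofReal_one]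

lemma rpowKernel_lt_one (hs : 0 < s) (hr : 1 < r) : rpowKernel s r < 1 :=
  ENNReal.ofReal_lt_one.2 (Real.rpow_lt_one_of_one_lt_of_neg hr (neg_neg_of_pos hs))

lemma exists_mul_rpowKernel_lt_one (hs : 0 < s) (C : ℝ≥0) : ∃ a > 0, C * rpowKernel s a < 1 := by
  have hlim : Tendsto (fun j : ℕ => C * rpowKernel s 2 ^ j) atTop (𝓝 (C * 0)) :=
    ENNReal.Tendsto.const_mul (ENNReal.tendsto_pow_atTop_nhds_zero_of_lt_one
      (rpowKernel_lt_one hs one_lt_two)) (.inr ENNReal.coe_ne_top)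
  rw [mul_zero] at hlim
  obtain ⟨j, hj⟩ := (hlim.eventually_lt_const one_pos).exists
  exact ⟨2 ^ j, by positivity, by rwa [rpowKernel_pow zero_le_two]⟩

lemma dyadicKernel_ne_top (k : ℤ) : dyadicKernel s k ≠ ∞ := rpowKernel_ne_top

lemma dyadicKernel_exponent_add (k : ℤ) :
    dyadicKernel (s + t) k = dyadicKernel s k * dyadicKernel t k := rpowKernel_add (by positivity)

lemma dyadicKernel_add (k j : ℤ) :
    dyadicKernel s (k + j) = dyadicKernel s k * dyadicKernel s j := by
  rw [dyadicKernel, zpow_add₀ two_ne_zero, rpowKernel_mul (by positivity) (by positivity)]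
  rfl

lemma exists_tsum_rpowKernel_two_pow_eq (hs : 0 < s) :
    ∃ C : ℝ≥0, ∑' j : ℕ, rpowKernel s (2 ^ j) = C := by
  refine ⟨((1 - rpowKernel s 2)⁻¹).toNNReal, ?_⟩
  simp_rw [rpowKernel_pow zero_le_two]
  rw [ENNReal.tsum_geometric, ENNReal.coe_toNNReal]
  exact ENNReal.inv_ne_top.2 (tsub_pos_of_lt (rpowKernel_lt_one hs one_lt_two)).ne'

lemma exists_tsum_dyadicKernel_le (hs : 0 < s) :
    ∃ C : ℝ≥0, ∀ t : ℝ, 0 < t →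
      ∑' k : ℤ, (if t < (2 : ℝ) ^ k then dyadicKernel s k else 0) ≤ C * rpowKernel s t := by
  obtain ⟨C, hC⟩ := exists_tsum_rpowKernel_two_pow_eq hs
  refine ⟨C, fun t ht => ?_⟩
  obtain ⟨k₀, hk₀, hk₁⟩ := exists_mem_Ico_zpow ht (one_lt_two : (1 : ℝ) < 2)
  have hinj : Function.Injective fun j : ℕ => k₀ + 1 + (j : ℤ) := fun a b hab => by simpa using hab
  have hsupp : (Function.support fun k : ℤ => if t < (2 : ℝ) ^ k then dyadicKernel s k else 0) ⊆
      range fun j : ℕ => k₀ + 1 + (j : ℤ) := by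
    intro k hk
    rw [Function.mem_support, Ne, ite_eq_right_iff, Classical.not_imp] at hk
    have hlt : k₀ < k := (zpow_lt_zpow_iff_right₀ one_lt_two).1 (hk₀.trans_lt hk.1)
    exact ⟨(k - (k₀ + 1)).toNat, by simp only; omega⟩
  rw [← hinj.tsum_eq hsupp, ← hC, ← ENNReal.tsum_mul_right]
  refine ENNReal.tsum_le_tsum fun j => ?_
  split_ifs
  · rw [dyadicKernel_add, mul_comm, dyadicKernel, dyadicKernel, zpow_natCast]
    exact mul_le_mul_right (rpowKernel_anti hs.le ht hk₁.le) _
  · exact zero_le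

lemma exists_rpowKernel_le_dyadicKernel (hs : 0 ≤ s) (hr : 0 < r) :
    ∃ k : ℤ, 8 * r ≤ 2 ^ k ∧ (2 : ℝ) ^ k ≤ 16 * r ∧
      rpowKernel s r ≤ dyadicKernel s (-4) * dyadicKernel s k := by
  obtain ⟨m, hm, hm'⟩ := exists_mem_Ioc_zpow (by positivity : 0 < 8 * r) (one_lt_two (α := ℝ))
  have hupper : (2 : ℝ) ^ (m + 1) ≤ 16 * r := by
    rw [zpow_add_one₀ two_ne_zero]
    linarith
  refine ⟨m + 1, hm', hupper, ?_⟩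
  rw [← dyadicKernel_add, dyadicKernel, zpow_add₀ two_ne_zero]
  refine rpowKernel_anti hs (by positivity) ?_
  norm_num
  linarith

end Kernel

lemma exists_tsum_le_of_le_mul_add {q : ℝ≥0} (hq : q < 1) :
    ∃ C : ℝ≥0, ∀ s b : ℕ → ℝ≥0∞, s 0 ≤ b 0 → (∀ j, s (j + 1) ≤ q * s j + b (j + 1)) →
      ∑' j, s j ≤ C * ∑' j, b j := by
  have hq0 : 1 - q ≠ 0 := (tsub_pos_of_lt hq).ne'
  have hC : (q : ℝ≥0∞) * ((1 - q)⁻¹ : ℝ≥0) + 1 = ((1 - q)⁻¹ : ℝ≥0) := by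
    norm_cast
    calc q * (1 - q)⁻¹ + 1 = (q + (1 - q)) * (1 - q)⁻¹ := by rw [add_mul, mul_inv_cancel₀ hq0]
      _ = (1 - q)⁻¹ := by rw [add_tsub_cancel_of_le hq.le, one_mul]
  refine ⟨(1 - q)⁻¹, fun s b h0 hs => ?_⟩
  set C : ℝ≥0∞ := (((1 - q)⁻¹ : ℝ≥0) : ℝ≥0∞)
  rw [ENNReal.tsum_eq_iSup_nat]
  refine iSup_le fun N => ?_
  induction N with
  | zero => simp
  | succ N ih =>
    calc ∑ j ∈ Finset.range (N + 1), s j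
        ≤ ∑ j ∈ Finset.range N, (q * s j + b (j + 1)) + b 0 := by
          rw [Finset.sum_range_succ']
          gcongr with j
          exact hs j
      _ = q * ∑ j ∈ Finset.range N, s j + ∑ j ∈ Finset.range (N + 1), b j := by
          rw [Finset.sum_add_distrib, ← Finset.mul_sum, add_assoc, ← Finset.sum_range_succ']
      _ ≤ q * (C * ∑' j, b j) + ∑' j, b j := by
          gcongr
          exact ENNReal.sum_le_tsum _
      _ = (q * C + 1) * ∑' j, b j := by ring
      _ = C * ∑' j, b j := by rw [hC]

lemma setLIntegral_le_tsum_mul_measure {α ι : Type*} [MeasurableSpace α] [Countable ι]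
    {μ : Measure α} {A : Set α} {B : ι → Set α} {f : α → ℝ≥0∞} {c : ι → ℝ≥0∞}
    (hA : MeasurableSet A) (hB : ∀ i, MeasurableSet (B i))
    (h : ∀ y ∈ A, ∃ i, y ∈ B i ∧ f y ≤ c i) :
    ∫⁻ y in A, f y ∂μ ≤ ∑' i, c i * μ (B i) := by
  calc ∫⁻ y in A, f y ∂μ ≤ ∫⁻ y in A, ∑' i, (B i).indicator (fun _ => c i) y ∂μ := by
        refine setLIntegral_mono' hA fun y hy => ?_
        obtain ⟨i, hi, hle⟩ := h y hy
        exact (hle.trans_eq (indicator_of_mem hi fun _ => c i).symm).trans (ENNReal.le_tsum i)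
    _ ≤ ∫⁻ y, ∑' i, (B i).indicator (fun _ => c i) y ∂μ := setLIntegral_le_lintegral _ _
    _ = ∑' i, c i * μ (B i) := by
        rw [lintegral_tsum fun i => (measurable_const.indicator (hB i)).aemeasurable]
        simp_rw [lintegral_indicator (hB _), setLIntegral_const]

/-! ### The condition `C_β < ∞` -/

section Cbeta

variable {β : ℝ} {φ : ℝ → ℝ}

lemma CbetaFinite.exists_lintegral_le (hC : CbetaFinite β φ) (h : IsYoung φ) :
    ∃ C : ℝ≥0, ∀ t : ℝ, 0 < t →
      ∫⁻ s in Ioc 0 t, ENNReal.ofReal (φ s / s ^ (β + 1)) ≤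
        C * (rpowKernel β t * youngAbs φ t) := by
  obtain ⟨M, hM⟩ := hC
  refine ⟨M.toNNReal, fun t ht => ?_⟩
  have hφt := h.2.2.2 t ht
  have hinv : rpowKernel β t * youngAbs φ t * ENNReal.ofReal (t ^ β / φ t) = 1 := by
    rw [rpowKernel, youngAbs, abs_of_pos ht, ← ENNReal.ofReal_mul (by positivity),
      ← ENNReal.ofReal_mul (by positivity), Real.rpow_neg ht.le, ENNReal.ofReal_eq_one]
    have : 0 < t ^ β := by positivity
    field_simp
  calc ∫⁻ s in Ioc 0 t, ENNReal.ofReal (φ s / s ^ (β + 1))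
      = rpowKernel β t * youngAbs φ t * (ENNReal.ofReal (t ^ β / φ t) *
          ∫⁻ s in Ioc 0 t, ENNReal.ofReal (φ s / s ^ (β + 1))) := by
        rw [← mul_assoc, hinv, one_mul]
    _ ≤ rpowKernel β t * youngAbs φ t * ENNReal.ofReal M := mul_le_mul_right (hM t ht) _
    _ = M.toNNReal * (rpowKernel β t * youngAbs φ t) := mul_comm _ _

lemma IsYoung.rpowKernel_mul_youngAbs_le_lintegral (h : IsYoung φ) (hβ : 0 < β) {a : ℝ}
    (ha : 0 < a) :
    rpowKernel β (2 * a) * youngAbs φ a ≤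
      2 * ∫⁻ s in Ioc a (2 * a), ENNReal.ofReal (φ s / s ^ (β + 1)) := by
  have hφ := h.nonneg ha.le
  calc rpowKernel β (2 * a) * youngAbs φ a
      = 2 * ∫⁻ _ in Ioc a (2 * a), ENNReal.ofReal (φ a / (2 * a) ^ (β + 1)) := by
        have h2 : (2 : ℝ≥0∞) = ENNReal.ofReal 2 := by simp
        rw [setLIntegral_const, Real.volume_Ioc, rpowKernel, youngAbs, abs_of_pos ha, h2,
          ← ENNReal.ofReal_mul (by positivity), ← ENNReal.ofReal_mul (by positivity),
          ← ENNReal.ofReal_mul (by positivity), Real.rpow_neg (by positivity),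
          Real.rpow_add_one (by positivity)]
        congr 1
        field_simp
        ring
    _ ≤ 2 * ∫⁻ s in Ioc a (2 * a), ENNReal.ofReal (φ s / s ^ (β + 1)) := by
        refine mul_le_mul_right (setLIntegral_mono' measurableSet_Ioc fun s hs =>
          ENNReal.ofReal_le_ofReal ?_) _
        have hs0 : 0 < s := ha.trans hs.1
        exact div_le_div₀ (h.nonneg hs0.le) (h.mono ha.le hs.1.le) (by positivity)
          (Real.rpow_le_rpow hs0.le hs.2 (by linarith))

lemma IsYoung.tsum_rpowKernel_mul_youngAbs_le_lintegral (h : IsYoung φ) (hβ : 0 < β) {t : ℝ}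
    (ht : 0 < t) :
    ∑' j : ℕ, rpowKernel β (2⁻¹ ^ j * t) * youngAbs φ (2⁻¹ ^ (j + 1) * t) ≤
      2 * ∫⁻ s in Ioc 0 t, ENNReal.ofReal (φ s / s ^ (β + 1)) := by
  set I : ℕ → Set ℝ := fun j => Ioc (2⁻¹ ^ (j + 1) * t) (2⁻¹ ^ j * t)
  have hanti : Antitone fun j : ℕ => (2⁻¹ : ℝ) ^ j * t := fun a b hab =>
    mul_le_mul_of_nonneg_right (pow_le_pow_of_le_one (by norm_num) (by norm_num) hab) ht.le
  have hdisj : Pairwise (Function.onFun Disjoint I) := hanti.pairwise_disjoint_on_Ioc_succ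
  have hsub : ⋃ j, I j ⊆ Ioc 0 t := iUnion_subset fun j s hs =>
    ⟨lt_trans (by positivity) hs.1, hs.2.trans (by simpa using hanti (Nat.zero_le j))⟩
  calc ∑' j : ℕ, rpowKernel β (2⁻¹ ^ j * t) * youngAbs φ (2⁻¹ ^ (j + 1) * t)
      ≤ ∑' j, 2 * ∫⁻ s in I j, ENNReal.ofReal (φ s / s ^ (β + 1)) := by
        refine ENNReal.tsum_le_tsum fun j => ?_
        have hj : (2⁻¹ : ℝ) ^ j * t = 2 * (2⁻¹ ^ (j + 1) * t) := by ring
        simp only [I]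
        rw [hj]
        exact h.rpowKernel_mul_youngAbs_le_lintegral hβ (by positivity)
    _ = 2 * ∫⁻ s in ⋃ j, I j, ENNReal.ofReal (φ s / s ^ (β + 1)) := by
        rw [ENNReal.tsum_mul_left, lintegral_iUnion (fun j => measurableSet_Ioc) hdisj]
    _ ≤ 2 * ∫⁻ s in Ioc 0 t, ENNReal.ofReal (φ s / s ^ (β + 1)) :=
        mul_le_mul_right (lintegral_mono_set hsub) _

lemma CbetaFinite.exists_tsum_rpowKernel_mul_youngAbs_le (hC : CbetaFinite β φ) (h : IsYoung φ)
    (hβ : 0 < β) :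
    ∃ C : ℝ≥0, ∀ t : ℝ, 0 < t →
      ∑' j : ℕ, rpowKernel β (2⁻¹ ^ j * t) * youngAbs φ (2⁻¹ ^ j * t) ≤
        C * (rpowKernel β t * youngAbs φ t) := by
  obtain ⟨C, hC⟩ := hC.exists_lintegral_le h
  refine ⟨1 + (rpowKernel β 2⁻¹).toNNReal * (2 * C), fun t ht => ?_⟩
  have hshift : ∀ j : ℕ, rpowKernel β (2⁻¹ ^ (j + 1) * t) =
      rpowKernel β 2⁻¹ * rpowKernel β (2⁻¹ ^ j * t) := by
    intro j
    rw [pow_succ', mul_assoc, rpowKernel_mul (by positivity) (by positivity)]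
  rw [tsum_eq_zero_add' ENNReal.summable]
  simp_rw [hshift, mul_assoc (rpowKernel β 2⁻¹)]
  rw [ENNReal.tsum_mul_left, pow_zero, one_mul, ENNReal.coe_add, ENNReal.coe_mul,
    ENNReal.coe_toNNReal rpowKernel_ne_top, add_mul, ENNReal.coe_one, one_mul, mul_assoc]
  gcongr
  refine (h.tsum_rpowKernel_mul_youngAbs_le_lintegral hβ ht).trans ?_
  rw [ENNReal.coe_mul, mul_assoc]
  exact mul_le_mul_right (hC t ht) _

lemma CbetaFinite.exists_tsum_rpowKernel_two_inv_mul_youngAbs_le (hC : CbetaFinite β φ)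
    (h : IsYoung φ) (hβ : 0 < β) :
    ∃ C : ℝ≥0, ∀ t : ℝ,
      ∑' j : ℕ, rpowKernel β (2⁻¹ ^ j) * youngAbs φ (2⁻¹ ^ j * t) ≤ C * youngAbs φ t := by
  obtain ⟨C, hC⟩ := hC.exists_tsum_rpowKernel_mul_youngAbs_le h hβ
  refine ⟨C, fun t => ?_⟩
  rcases eq_or_ne t 0 with rfl | ht
  · simp [h.youngAbs_zero]
  have ht0 : 0 < |t| := abs_pos.2 ht
  have hterm : ∀ j : ℕ, rpowKernel β |t| * (rpowKernel β (2⁻¹ ^ j) * youngAbs φ (2⁻¹ ^ j * t)) =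
      rpowKernel β (2⁻¹ ^ j * |t|) * youngAbs φ (2⁻¹ ^ j * |t|) := by
    intro j
    have hj : (0 : ℝ) ≤ 2⁻¹ ^ j := by positivity
    rw [rpowKernel_mul hj ht0.le, ← youngAbs_abs (2⁻¹ ^ j * t), abs_mul, abs_of_nonneg hj,
      ← mul_assoc, mul_comm (rpowKernel β |t|)]
  rw [← ENNReal.mul_le_mul_iff_right (rpowKernel_ne_zero ht0 (s := β)) rpowKernel_ne_top,
    ← ENNReal.tsum_mul_left, mul_left_comm, ← youngAbs_abs t]
  simpa only [hterm, youngAbs_abs] using hC |t| ht0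

end Cbeta

/-! ### The modular -/

section Balls

variable {E : Type*} [NormedAddCommGroup E] [NormedSpace ℝ E] [MeasureSpace E]

variable (E) in
/-- The volume `ω` of the unit ball of `E`, as a finite number. -/
noncomputable def unitBallVol : ℝ≥0 := (volume (ball (0 : E) 1)).toNNReal

variable [FiniteDimensional ℝ E] [(volume : Measure E).IsAddHaarMeasure]

lemma unitBallVol_pos : 0 < unitBallVol E :=
  ENNReal.toNNReal_pos (measure_ball_pos volume _ one_pos).ne' measure_ball_lt_top.ne

variable [BorelSpace E]

lemma volume_ball_eq (x : E) {r : ℝ} (hr : 0 < r) :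
    volume (ball x r) = ENNReal.ofReal (r ^ finrank ℝ E) * unitBallVol E := by
  rw [unitBallVol, ENNReal.coe_toNNReal measure_ball_lt_top.ne, Measure.addHaar_ball_of_pos _ _ hr]

lemma volume_real_ball_eq (x : E) {r : ℝ} (hr : 0 < r) :
    volume.real (ball x r) = r ^ finrank ℝ E * unitBallVol E := by
  rw [measureReal_def, volume_ball_eq x hr, ENNReal.toReal_mul,
    ENNReal.toReal_ofReal (by positivity), ENNReal.coe_toReal]

lemma inv_volume_ball_eq (x : E) {r : ℝ} (hr : 0 < r) :
    (volume (ball x r))⁻¹ = ((unitBallVol E)⁻¹ : ℝ≥0) * rpowKernel (finrank ℝ E) r := by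
  refine (ENNReal.eq_inv_of_mul_eq_one_left ?_).symm
  calc ((unitBallVol E)⁻¹ : ℝ≥0) * rpowKernel (finrank ℝ E) r * volume (ball x r)
      = ((unitBallVol E)⁻¹ * unitBallVol E : ℝ≥0) *
          (rpowKernel (finrank ℝ E) r * ENNReal.ofReal (r ^ finrank ℝ E)) := by
        rw [volume_ball_eq x hr]
        push_cast
        ring
    _ = 1 := by
        rw [rpowKernel_natCast_mul_ofReal_pow hr, inv_mul_cancel₀ unitBallVol_pos.ne',
          ENNReal.coe_one, one_mul]

lemma rpowKernel_mul_volume_ball (β : ℝ) (x : E) {c r : ℝ} (hc : 0 < c) (hr : 0 < r) :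
    rpowKernel (finrank ℝ E + β) r * volume (ball x (c * r)) =
      ENNReal.ofReal (c ^ finrank ℝ E) * unitBallVol E * rpowKernel β r := by
  rw [volume_ball_eq x (mul_pos hc hr), mul_pow, ENNReal.ofReal_mul (by positivity),
    rpowKernel_add hr]
  calc rpowKernel (finrank ℝ E) r * rpowKernel β r *
        (ENNReal.ofReal (c ^ finrank ℝ E) * ENNReal.ofReal (r ^ finrank ℝ E) * unitBallVol E)
      = rpowKernel (finrank ℝ E) r * ENNReal.ofReal (r ^ finrank ℝ E) *
        (ENNReal.ofReal (c ^ finrank ℝ E) * unitBallVol E * rpowKernel β r) := by ring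
    _ = _ := by rw [rpowKernel_natCast_mul_ofReal_pow hr, one_mul]

end Balls

section Integrability

variable {α : Type*} [MeasurableSpace α] {μ : Measure α} {φ : ℝ → ℝ}

lemma IsYoung.integrable_of_lintegral_youngAbs_sub_ne_top [IsFiniteMeasure μ] (h : IsYoung φ)
    {u : α → ℝ} (hu : AEStronglyMeasurable u μ) {a : ℝ}
    (hfin : ∫⁻ y, youngAbs φ (a - u y) ∂μ ≠ ∞) : Integrable u μ := by
  have hint : Integrable (fun y => φ |a - u y|) μ :=
    ⟨h.continuous_comp_abs.comp_aestronglyMeasurable (aestronglyMeasurable_const.sub hu),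
      (hasFiniteIntegral_iff_ofReal (ae_of_all _ fun y => h.nonneg (abs_nonneg _))).2
        (lt_top_iff_ne_top.2 hfin)⟩
  refine Integrable.mono' ((integrable_const (|a| + 1)).add (hint.div_const (φ 1))) hu
    (ae_of_all _ fun y => ?_)
  have hle := h.le_one_add_div (abs_nonneg (a - u y))
  have htri := abs_sub_abs_le_abs_sub (u y) a
  rw [abs_sub_comm] at htri
  simp only [Pi.add_apply, Real.norm_eq_abs]
  linarith

end Integrability

section Modular

lemma IsYoung.rpowKernel_mul_setLIntegral_le {X : Type*} [MetricSpace X] [MeasureSpace X]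
    {φ : ℝ → ℝ} (h : IsYoung φ) {s r : ℝ} (hs : 0 ≤ s) {Ω B : Set X} {u : X → ℝ}
    (hB : MeasurableSet B) (hBΩ : B ⊆ Ω) {x : X} (hr : ∀ y ∈ B, dist x y ≤ r) :
    rpowKernel s r * ∫⁻ y in B, youngAbs φ (u x - u y) ≤
      ∫⁻ y in Ω, youngAbs φ (u x - u y) * rpowKernel s (dist x y) := by
  rw [← lintegral_const_mul' _ _ rpowKernel_ne_top]
  refine (setLIntegral_mono' hB fun y hy => ?_).trans (lintegral_mono_set hBΩ)
  rcases eq_or_ne x y with rfl | hne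
  · simp [h.youngAbs_zero]
  · rw [mul_comm]
    exact mul_le_mul_right (rpowKernel_anti hs (dist_pos.2 hne) (hr y hy)) _

variable {E : Type*} [NormedAddCommGroup E] [NormedSpace ℝ E] [MeasureSpace E]

/-- The modular `∫_Ω ∫_Ω φ(|u(x) - u(y)|) |x - y|^{-d-β} dx dy`, where `d = dim E`; the seminorm of
`Ẇ^{β,φ}(Ω)` is the gauge of its unit ball. -/
noncomputable def fracModular (β : ℝ) (φ : ℝ → ℝ) (Ω : Set E) (u : E → ℝ) : ℝ≥0∞ :=
  ∫⁻ x in Ω, ∫⁻ y in Ω, youngAbs φ (u x - u y) * rpowKernel (finrank ℝ E + β) (dist x y)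

variable {β : ℝ} {φ : ℝ → ℝ} {Ω : Set E} {u : E → ℝ}

lemma IsYoung.rpowKernel_mul_lintegral_le_fracModular (h : IsYoung φ) (hβ : 0 < β) {A B : Set E}
    (hA : MeasurableSet A) (hB : MeasurableSet B) (hAΩ : A ⊆ Ω) (hBΩ : B ⊆ Ω) {r : ℝ}
    (hr : ∀ x ∈ A, ∀ y ∈ B, dist x y ≤ r) :
    rpowKernel (finrank ℝ E + β) r * ∫⁻ x in A, ∫⁻ y in B, youngAbs φ (u x - u y) ≤
      fracModular β φ Ω u := by
  rw [← lintegral_const_mul' _ _ rpowKernel_ne_top]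
  exact (setLIntegral_mono' hA fun x hx =>
    h.rpowKernel_mul_setLIntegral_le (by positivity) hB hBΩ (hr x hx)).trans
    (lintegral_mono_set hAΩ)

lemma IsYoung.integrableOn_of_fracModular_ne_top [IsLocallyFiniteMeasure (volume : Measure E)]
    [ProperSpace E] (h : IsYoung φ) (hβ : 0 < β)
    (hΩ0 : volume Ω ≠ 0)
    (hu : AEStronglyMeasurable u (volume.restrict Ω)) (hfin : fracModular β φ Ω u ≠ ∞) {s : Set E}
    (hs : MeasurableSet s) (hsΩ : s ⊆ Ω) (hsb : Bornology.IsBounded s) : IntegrableOn u s := by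
  obtain ⟨x, hx⟩ : ∃ x, ∫⁻ y in Ω,
      youngAbs φ (u x - u y) * rpowKernel (finrank ℝ E + β) (dist x y) ≠ ∞ := by
    by_contra! hall
    refine hfin ?_
    simp [fracModular, hall, hΩ0]
  obtain ⟨R, hR⟩ := hsb.subset_ball x
  have : IsFiniteMeasure (volume.restrict s) := ⟨by simpa using hsb.measure_lt_top⟩
  have hle := h.rpowKernel_mul_setLIntegral_le (u := u) (s := finrank ℝ E + β) (r := max R 1)
    (by positivity) hs hsΩ fun y hy => (mem_ball'.1 (hR hy)).le.trans (le_max_left _ _)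
  refine h.integrable_of_lintegral_youngAbs_sub_ne_top
    (hu.mono_measure (Measure.restrict_mono hsΩ le_rfl)) (a := u x) fun htop => hx ?_
  rwa [htop, ENNReal.mul_top (rpowKernel_ne_zero (by positivity)), top_le_iff] at hle

lemma IsYoung.lintegral_lintegral_ball_le [BorelSpace E] (h : IsYoung φ) (hβ : 0 < β) (x : E)
    {r : ℝ} (hr : 0 < r) :
    ∫⁻ z in ball x r, ∫⁻ y in ball x r, youngAbs φ (u z - u y) ≤
      rpowKernel (-(finrank ℝ E + β)) (2 * r) * fracModular β φ univ u := by
  rw [rpowKernel_neg (by positivity), mul_comm, ← div_eq_mul_inv, ENNReal.le_div_iff_mul_le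
    (.inl (rpowKernel_ne_zero (by positivity))) (.inl rpowKernel_ne_top), mul_comm]
  refine h.rpowKernel_mul_lintegral_le_fracModular hβ measurableSet_ball measurableSet_ball
    (subset_univ _) (subset_univ _) fun z hz y hy => ?_
  rw [mem_ball] at hz hy
  linarith [dist_triangle_right z y x]

end Modular

section KernelIntegrals

lemma IsYoung.exists_youngAbs_mul_rpowKernel_le {X : Type*} [PseudoMetricSpace X] {φ : ℝ → ℝ}
    (h : IsYoung φ) {s ρ : ℝ} (hs : 0 ≤ s) (hρ : 0 < ρ) (t : ℝ) {x y : X} (hy : y ∈ ball x ρ) :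
    ∃ j : ℕ, y ∈ ball x (2 * (2⁻¹ ^ j * ρ)) ∧
      youngAbs φ (dist x y / ρ * t) * rpowKernel s (dist x y) ≤
        youngAbs φ (2⁻¹ ^ j * t) * rpowKernel s (2⁻¹ * (2⁻¹ ^ j * ρ)) := by
  rcases (dist_nonneg (x := x) (y := y)).eq_or_lt with hd | hd
  · exact ⟨0, by rw [mem_ball', ← hd]; positivity, by simp [← hd, h.youngAbs_zero]⟩
  obtain ⟨j, hj, hj'⟩ := exists_nat_pow_near_of_lt_one (div_pos hd hρ)
    ((div_le_one hρ).2 (mem_ball'.1 hy).le) (inv_pos.2 (two_pos (α := ℝ))) (by norm_num)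
  rw [lt_div_iff₀ hρ, pow_succ', mul_assoc] at hj
  refine ⟨j, ?_, mul_le_mul' (h.youngAbs_mono ?_) (rpowKernel_anti hs (by positivity) hj.le)⟩
  · rw [div_le_iff₀ hρ] at hj'
    have : 0 < 2⁻¹ ^ j * ρ := by positivity
    rw [mem_ball']
    linarith
  · rw [abs_mul, abs_mul, abs_of_nonneg (by positivity : 0 ≤ dist x y / ρ),
      abs_of_nonneg (by positivity : (0 : ℝ) ≤ 2⁻¹ ^ j)]
    gcongr

variable {E : Type*} [NormedAddCommGroup E] [NormedSpace ℝ E] [FiniteDimensional ℝ E]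
  [MeasureSpace E] [BorelSpace E] [(volume : Measure E).IsAddHaarMeasure] {β : ℝ} {φ : ℝ → ℝ}

-- Near the diagonal the factor `|x - y| / ρ` tames the kernel: this is what `C_β < ∞` provides.
variable (E) in
lemma CbetaFinite.exists_lintegral_ball_le (hC : CbetaFinite β φ) (h : IsYoung φ) (hβ : 0 < β) :
    ∃ C : ℝ≥0, ∀ (x : E) (ρ t : ℝ), 0 < ρ →
      ∫⁻ y in ball x ρ, youngAbs φ (dist x y / ρ * t) * rpowKernel (finrank ℝ E + β) (dist x y) ≤
        C * rpowKernel β ρ * youngAbs φ t := by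
  obtain ⟨C, hC⟩ := hC.exists_tsum_rpowKernel_two_inv_mul_youngAbs_le h hβ
  set s : ℝ := finrank ℝ E + β
  have hs : 0 ≤ s := by positivity
  refine ⟨(rpowKernel s 2⁻¹).toNNReal * ((2 ^ finrank ℝ E) * unitBallVol E) * C,
    fun x ρ t hρ => ?_⟩
  calc ∫⁻ y in ball x ρ, youngAbs φ (dist x y / ρ * t) * rpowKernel s (dist x y)
      ≤ ∑' j : ℕ, youngAbs φ (2⁻¹ ^ j * t) * rpowKernel s (2⁻¹ * (2⁻¹ ^ j * ρ)) *
          volume (ball x (2 * (2⁻¹ ^ j * ρ))) :=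
        setLIntegral_le_tsum_mul_measure measurableSet_ball (fun _ => measurableSet_ball)
          fun y hy => h.exists_youngAbs_mul_rpowKernel_le hs hρ t hy
    _ = rpowKernel s 2⁻¹ * (2 ^ finrank ℝ E * unitBallVol E) * rpowKernel β ρ *
          ∑' j : ℕ, rpowKernel β (2⁻¹ ^ j) * youngAbs φ (2⁻¹ ^ j * t) := by
        rw [← ENNReal.tsum_mul_left]
        refine tsum_congr fun j => ?_
        rw [rpowKernel_mul (by positivity) (by positivity), mul_assoc, mul_assoc,
          rpowKernel_mul_volume_ball β x two_pos (by positivity),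
          rpowKernel_mul (by positivity) hρ.le, ENNReal.ofReal_pow zero_le_two,
          ENNReal.ofReal_ofNat]
        ring
    _ ≤ rpowKernel s 2⁻¹ * (2 ^ finrank ℝ E * unitBallVol E) * rpowKernel β ρ *
          (C * youngAbs φ t) := mul_le_mul_right (hC t) _
    _ = _ := by
        push_cast
        rw [ENNReal.coe_toNNReal rpowKernel_ne_top]
        ring

variable (E) in
lemma exists_lintegral_compl_ball_rpowKernel_le (hβ : 0 < β) :
    ∃ C : ℝ≥0, ∀ (x : E) (ρ : ℝ), 0 < ρ →
      ∫⁻ y in (ball x ρ)ᶜ, rpowKernel (finrank ℝ E + β) (dist x y) ≤ C * rpowKernel β ρ := by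
  obtain ⟨C, hC⟩ := exists_tsum_rpowKernel_two_pow_eq hβ
  set s : ℝ := finrank ℝ E + β
  have hs : 0 ≤ s := by positivity
  refine ⟨2 ^ finrank ℝ E * unitBallVol E * C, fun x ρ hρ => ?_⟩
  have hscale : ∀ y ∈ (ball x ρ)ᶜ, ∃ j : ℕ, y ∈ ball x (2 * (2 ^ j * ρ)) ∧
      rpowKernel s (dist x y) ≤ rpowKernel s (2 ^ j * ρ) := by
    intro y hy
    have hρy : ρ ≤ dist x y := by simpa [dist_comm] using hy
    obtain ⟨j, hj, hj'⟩ := exists_nat_pow_near ((one_le_div hρ).2 hρy) (one_lt_two (α := ℝ))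
    rw [div_lt_iff₀ hρ, pow_succ', mul_assoc] at hj'
    exact ⟨j, mem_ball'.2 hj', rpowKernel_anti hs (by positivity) ((le_div_iff₀ hρ).1 hj)⟩
  refine (setLIntegral_le_tsum_mul_measure measurableSet_ball.compl
    (fun _ => measurableSet_ball) hscale).trans_eq ?_
  calc ∑' j : ℕ, rpowKernel s (2 ^ j * ρ) * volume (ball x (2 * (2 ^ j * ρ)))
      = ∑' j : ℕ, 2 ^ finrank ℝ E * unitBallVol E * rpowKernel β ρ * rpowKernel β (2 ^ j) := by
        refine tsum_congr fun j => ?_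
        rw [rpowKernel_mul_volume_ball β x two_pos (by positivity),
          rpowKernel_mul (by positivity) hρ.le, ENNReal.ofReal_pow zero_le_two,
          ENNReal.ofReal_ofNat]
        ring
    _ = (2 ^ finrank ℝ E * unitBallVol E * C : ℝ≥0) * rpowKernel β ρ := by
        rw [ENNReal.tsum_mul_left, hC]
        push_cast
        ring

end KernelIntegrals

/-! ### Oscillation of averages on the whole space -/

lemma IsYoung.exists_youngAbs_sub_le_of_geometric {φ : ℝ → ℝ} {K : ℝ} (h : IsYoung φ)
    (hK : IsDoubling φ K) {θ : ℝ≥0} (hθ : θ < 1) :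
    ∃ C : ℝ≥0, ∀ (m : ℕ) (g : ℕ → ℝ) (D : ℝ≥0∞),
      (∀ j, youngAbs φ (g j - g (j + 1)) ≤ D * θ ^ j) → youngAbs φ (g 0 - g m) ≤ C * D := by
  obtain ⟨q, hq, hqθ⟩ : ∃ q : ℝ≥0, 1 < q ∧ q * θ < 1 := by
    rcases eq_or_ne θ 0 with rfl | h0
    · exact ⟨2, one_lt_two, by simp⟩
    · obtain ⟨q, hq, hlt⟩ := exists_between ((one_lt_inv₀ (pos_iff_ne_zero.2 h0)).2 hθ)
      exact ⟨q, hq, (mul_lt_mul_of_pos_right hlt (pos_iff_ne_zero.2 h0)).trans_eq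
        (inv_mul_cancel₀ h0)⟩
  obtain ⟨C₀, hC₀⟩ := h.exists_youngAbs_add_le_mul_add hK hq
  -- The constant is the fixed point of `C ↦ q θ C + C₀`.
  obtain ⟨C, hC⟩ : ∃ C : ℝ≥0, q * θ * C + C₀ = C := by
    refine ⟨C₀ / (1 - q * θ), ?_⟩
    have hne : 1 - q * θ ≠ 0 := (tsub_pos_of_lt hqθ).ne'
    calc q * θ * (C₀ / (1 - q * θ)) + C₀
        = (q * θ + (1 - q * θ)) * (C₀ / (1 - q * θ)) := by rw [add_mul, mul_div_cancel₀ _ hne]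
      _ = C₀ / (1 - q * θ) := by rw [add_tsub_cancel_of_le hqθ.le, one_mul]
  refine ⟨C, fun m => ?_⟩
  induction m with
  | zero => simp [h.youngAbs_zero]
  | succ m ih =>
    intro g D hg
    have htail := ih (fun j => g (j + 1)) (D * θ) fun j =>
      (hg (j + 1)).trans_eq (by rw [pow_succ]; ring)
    have hsplit : g 0 - g (m + 1) = g 1 - g (m + 1) + (g 0 - g 1) := by ring
    calc youngAbs φ (g 0 - g (m + 1))
        ≤ q * youngAbs φ (g 1 - g (m + 1)) + C₀ * youngAbs φ (g 0 - g 1) := hsplit ▸ hC₀ _ _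
      _ ≤ q * (C * (D * θ)) + C₀ * D :=
          add_le_add (mul_le_mul_right (by simpa using htail) _)
            (mul_le_mul_right (by simpa using hg 0) _)
      _ = (q * θ * C + C₀ : ℝ≥0) * D := by push_cast; ring
      _ = C * D := by rw [hC]

section Oscillation

variable {E : Type*} [NormedAddCommGroup E] [NormedSpace ℝ E] [FiniteDimensional ℝ E]
  [MeasureSpace E] [BorelSpace E] [(volume : Measure E).IsAddHaarMeasure]
  {β K : ℝ} {φ : ℝ → ℝ} {w : E → ℝ}

variable (E) in
lemma IsYoung.exists_youngAbs_setAverage_ball_sub_le_lintegral (h : IsYoung φ)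
    (hK : IsDoubling φ K) :
    ∃ C : ℝ≥0, ∀ w : E → ℝ, LocallyIntegrable w → ∀ (x y : E) (r s : ℝ), 0 < r → r ≤ 2 * s →
      s ≤ 2 * r → dist x y ≤ r →
      youngAbs φ ((⨍ z in ball x r, w z) - ⨍ z in ball y s, w z) ≤
        C * ((volume (ball x (4 * r)))⁻¹ * (volume (ball x (4 * r)))⁻¹ *
          ∫⁻ z in ball x (4 * r), ∫⁻ v in ball x (4 * r), youngAbs φ (w z - w v)) := by
  set q : ℝ := (8⁻¹ : ℝ) ^ finrank ℝ E
  obtain ⟨C, -, hC⟩ := h.exists_youngAbs_le_of_abs_le hK (q⁻¹ + q⁻¹ ^ 2)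
  refine ⟨C, fun w hw x y r s hr hrs hsr hxy => ?_⟩
  set B := ball x (4 * r)
  have hsub : ball x r ⊆ B := ball_subset_ball (by linarith)
  have hsub' : ball y s ⊆ B := ball_subset_ball' (by rw [dist_comm]; linarith)
  have hvol : ∀ {t : ℝ} (x' : E), r ≤ 2 * t → q * volume.real B ≤ volume.real (ball x' t) := by
    intro t x' ht
    rw [volume_real_ball_eq x (by positivity), volume_real_ball_eq x' (by linarith), ← mul_assoc,
      ← mul_pow]
    gcongr
    linarith
  have hint : IntegrableOn w B :=
    (hw.integrableOn_isCompact (isCompact_closedBall x (4 * r))).mono_set ball_subset_closedBall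
  calc youngAbs φ ((⨍ z in ball x r, w z) - ⨍ z in ball y s, w z)
      ≤ (volume B)⁻¹ * (volume B)⁻¹ *
          ∫⁻ z in B, ∫⁻ v in B, youngAbs φ ((q⁻¹ + q⁻¹ ^ 2) * (w z - w v)) :=
        h.youngAbs_setAverage_sub_setAverage_le measurableSet_ball measurableSet_ball hsub hsub'
          measure_ball_lt_top.ne (measure_ball_pos _ _ (by positivity)).ne' (by positivity)
          (hvol x (by linarith)) (hvol y hrs) hint
    _ ≤ (volume B)⁻¹ * (volume B)⁻¹ * (C * ∫⁻ z in B, ∫⁻ v in B, youngAbs φ (w z - w v)) := by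
        simp_rw [← lintegral_const_mul' _ _ (ENNReal.coe_ne_top (r := C))]
        gcongr
        exact hC _ _ le_rfl
    _ = _ := by ring

variable (E) in
lemma IsYoung.exists_youngAbs_setAverage_ball_sub_le (h : IsYoung φ) (hK : IsDoubling φ K)
    (hβ : 0 < β) :
    ∃ C : ℝ≥0, ∀ w : E → ℝ, LocallyIntegrable w → ∀ (x y : E) (r s : ℝ), 0 < r → r ≤ 2 * s →
      s ≤ 2 * r → dist x y ≤ r →
      youngAbs φ ((⨍ z in ball x r, w z) - ⨍ z in ball y s, w z) ≤
        C * rpowKernel (finrank ℝ E - β) r * fracModular β φ univ w := by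
  set d := finrank ℝ E
  set ω := unitBallVol E
  obtain ⟨C, hC⟩ := h.exists_youngAbs_setAverage_ball_sub_le_lintegral E hK
  refine ⟨(C * (ω⁻¹ * ω⁻¹)) * (rpowKernel d 4 * rpowKernel d 4 * rpowKernel (-(d + β)) 8).toNNReal,
    fun w hw x y r s hr hrs hsr hxy => (hC w hw x y r s hr hrs hsr hxy).trans ?_⟩
  calc C * ((volume (ball x (4 * r)))⁻¹ * (volume (ball x (4 * r)))⁻¹ *
          ∫⁻ z in ball x (4 * r), ∫⁻ v in ball x (4 * r), youngAbs φ (w z - w v))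
      ≤ C * ((volume (ball x (4 * r)))⁻¹ * (volume (ball x (4 * r)))⁻¹ *
          (rpowKernel (-(d + β)) (2 * (4 * r)) * fracModular β φ univ w)) := by
        gcongr
        exact h.lintegral_lintegral_ball_le hβ x (by positivity)
    _ = (C * (ω⁻¹ * ω⁻¹) : ℝ≥0) * (rpowKernel d 4 * rpowKernel d 4 * rpowKernel (-(d + β)) 8) *
          (rpowKernel d r * rpowKernel d r * rpowKernel (-(d + β)) r) *
            fracModular β φ univ w := by
        rw [inv_volume_ball_eq x (by positivity), ← mul_assoc 2 4 r,
          rpowKernel_mul (by norm_num) hr.le, rpowKernel_mul (by norm_num) hr.le]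
        norm_num
        ring
    _ = _ := by
        rw [← rpowKernel_add hr, ← rpowKernel_add hr, ENNReal.coe_mul _ (ENNReal.toNNReal _),
          ENNReal.coe_toNNReal (ENNReal.mul_ne_top (ENNReal.mul_ne_top rpowKernel_ne_top
            rpowKernel_ne_top) rpowKernel_ne_top)]
        congr 3
        ring

variable (E) in
lemma IsYoung.exists_youngAbs_setAverage_ball_sub_pow_le (h : IsYoung φ) (hK : IsDoubling φ K)
    (hβ : 0 < β) {a : ℝ} (ha : 2⁻¹ ≤ a) (ha' : a ≤ 2)
    (hθ : rpowKernel (finrank ℝ E - β) a < 1) :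
    ∃ C : ℝ≥0, ∀ w : E → ℝ, LocallyIntegrable w → ∀ (x : E) (r : ℝ) (m : ℕ), 0 < r →
      youngAbs φ ((⨍ z in ball x r, w z) - ⨍ z in ball x (a ^ m * r), w z) ≤
        C * rpowKernel (finrank ℝ E - β) r * fracModular β φ univ w := by
  obtain ⟨θ, hθa⟩ : ∃ θ : ℝ≥0, (θ : ℝ≥0∞) = rpowKernel (finrank ℝ E - β) a :=
    ⟨_, ENNReal.coe_toNNReal rpowKernel_ne_top⟩
  obtain ⟨C₁, hC₁⟩ := h.exists_youngAbs_setAverage_ball_sub_le E hK hβ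
  obtain ⟨C₂, hC₂⟩ := h.exists_youngAbs_sub_le_of_geometric hK (θ := θ)
    (by rwa [← hθa, ENNReal.coe_lt_one_iff] at hθ)
  refine ⟨C₂ * C₁, fun w hw x r m hr => ?_⟩
  have ha0 : 0 < a := by linarith
  have := hC₂ m (fun j => ⨍ z in ball x (a ^ j * r), w z)
    (C₁ * rpowKernel (finrank ℝ E - β) r * fracModular β φ univ w) fun j => by
      have hj : 0 < a ^ j * r := by positivity
      refine (hC₁ w hw x x (a ^ j * r) (a ^ (j + 1) * r) hj ?_ ?_ ?_).trans_eq ?_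
      · rw [pow_succ]
        nlinarith
      · rw [pow_succ]
        nlinarith
      · rw [dist_self]
        exact hj.le
      · rw [rpowKernel_mul (by positivity) hr.le, rpowKernel_pow ha0.le, ← hθa]
        ring
  simpa only [pow_zero, one_mul, ENNReal.coe_mul, mul_assoc] using this

lemma IsYoung.lintegral_youngAbs_sub_setAverage_le (h : IsYoung φ) (hβ : 0 < β)
    (hw : LocallyIntegrable w) {r : ℝ} (hr : 0 < r) :
    ∫⁻ x, youngAbs φ (w x - ⨍ z in ball x r, w z) ≤
      ((unitBallVol E)⁻¹ : ℝ≥0) * rpowKernel (-β) r * fracModular β φ univ w := by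
  have hjensen : ∀ x, youngAbs φ (w x - ⨍ z in ball x r, w z) ≤
      (volume (ball x r))⁻¹ * ∫⁻ z in ball x r, youngAbs φ (w x - w z) := by
    intro x
    have hint : IntegrableOn w (ball x r) :=
      (hw.integrableOn_isCompact (isCompact_closedBall x r)).mono_set ball_subset_closedBall
    have hpos := (measure_ball_pos volume x hr).ne'
    have hfin : volume (ball x r) ≠ ∞ := measure_ball_lt_top.ne
    have : IsFiniteMeasure (volume.restrict (ball x r)) := ⟨by simpa using hfin.lt_top⟩
    have hle := h.youngAbs_average_le (μ := volume.restrict (ball x r)) (by simpa using hpos)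
      ((integrable_const (w x)).sub hint)
    have hsub : ⨍ z in ball x r, ((fun _ : E => w x) - w) z = w x - ⨍ z in ball x r, w z := by
      have hone := setAverage_const hpos hfin (w x)
      rw [average_eq, smul_eq_mul] at hone ⊢
      rw [integral_sub' (integrable_const _) hint, mul_sub, hone, setAverage_eq, smul_eq_mul,
        measureReal_restrict_apply_univ]
    rwa [hsub, Measure.restrict_apply_univ] at hle
  have hsplit : rpowKernel (-β) r =
      rpowKernel (finrank ℝ E) r * (rpowKernel (finrank ℝ E + β) r)⁻¹ := by
    rw [← rpowKernel_neg hr, ← rpowKernel_add hr]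
    congr 1
    ring
  simp_rw [inv_volume_ball_eq _ hr] at hjensen
  refine (lintegral_mono hjensen).trans ?_
  rw [lintegral_const_mul' _ _ (ENNReal.mul_ne_top ENNReal.coe_ne_top rpowKernel_ne_top), hsplit,
    mul_assoc, mul_assoc, mul_assoc]
  gcongr
  rw [← ENNReal.mul_le_iff_le_inv (rpowKernel_ne_zero hr) rpowKernel_ne_top,
    ← lintegral_const_mul' _ _ rpowKernel_ne_top, fracModular, Measure.restrict_univ]
  refine lintegral_mono fun x => ?_
  simpa only [Measure.restrict_univ] using h.rpowKernel_mul_setLIntegral_le (u := w)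
    (s := finrank ℝ E + β) (x := x) (r := r) (by positivity) measurableSet_ball
    (subset_univ _) fun y hy => (mem_ball'.1 hy).le

end Oscillation

/-! ### Capacity and Morrey estimates -/

section Capacity

variable {E : Type*} [NormedAddCommGroup E] [NormedSpace ℝ E] [FiniteDimensional ℝ E]
  [MeasureSpace E] [BorelSpace E] [(volume : Measure E).IsAddHaarMeasure]
  {β K : ℝ} {φ : ℝ → ℝ}

variable (E) in
lemma IsYoung.exists_youngAbs_setAverage_ball_sub_le_of_lt (h : IsYoung φ) (hK : IsDoubling φ K)
    (hβ : 0 < β) (hβd : β < finrank ℝ E) :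
    ∃ C : ℝ≥0, ∀ w : E → ℝ, LocallyIntegrable w → ∀ (x y : E) (r : ℝ), 0 < r →
      youngAbs φ ((⨍ z in ball x r, w z) - ⨍ z in ball y r, w z) ≤
        C * rpowKernel (finrank ℝ E - β) r * fracModular β φ univ w := by
  have hs : 0 < finrank ℝ E - β := sub_pos.2 hβd
  obtain ⟨C₁, hC₁⟩ := h.exists_youngAbs_setAverage_ball_sub_le E hK hβ
  obtain ⟨C₂, hC₂⟩ := h.exists_youngAbs_setAverage_ball_sub_pow_le E hK hβ (by norm_num) le_rfl
    (rpowKernel_lt_one hs one_lt_two)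
  obtain ⟨C₃, hC₃⟩ := h.exists_youngAbs_sub_le_add_add hK
  refine ⟨C₃ * (C₂ + C₁ + C₂), fun w hw x y r hr => ?_⟩
  obtain ⟨m, hm⟩ := pow_unbounded_of_one_lt (dist x y / r) (one_lt_two : (1 : ℝ) < 2)
  rw [div_lt_iff₀ hr] at hm
  have hr' : r ≤ 2 ^ m * r := le_mul_of_one_le_left hr.le (one_le_pow₀ one_le_two)
  have hfar := (hC₁ w hw x y (2 ^ m * r) (2 ^ m * r) (by positivity) (by linarith) (by linarith)
    hm.le).trans (mul_le_mul_left (mul_le_mul_right (rpowKernel_anti hs.le hr hr') _) _)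
  have hy := hC₂ w hw y r m hr
  rw [youngAbs_sub_comm] at hy
  refine (hC₃ _ _ _ _).trans ((mul_le_mul_right
    (add_le_add (add_le_add (hC₂ w hw x r m hr) hfar) hy) _).trans_eq ?_)
  push_cast
  ring

lemma IsYoung.exists_youngAbs_sub_setAverage_le (h : IsYoung φ) (hβ : 0 < β) {w : E → ℝ}
    (hw : LocallyIntegrable w) (hM : fracModular β φ univ w ≤ 1) {r H : ℝ} (hr : 0 < r) {A : Set E}
    (hvol : ENNReal.ofReal (r ^ finrank ℝ E) ≤ volume A)
    (hH : ∀ᵐ x ∂volume.restrict A, w x = H) :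
    ∃ x, youngAbs φ (H - ⨍ z in ball x r, w z) ≤
      2 * ((unitBallVol E)⁻¹ : ℝ≥0) * rpowKernel (finrank ℝ E - β) r := by
  by_contra! hlarge
  set c : ℝ≥0 := (unitBallVol E)⁻¹
  set T : ℝ≥0∞ := c * rpowKernel (-β) r
  have hT0 : T ≠ 0 := mul_ne_zero
    (ENNReal.coe_ne_zero.2 (inv_ne_zero unitBallVol_pos.ne')) (rpowKernel_ne_zero hr)
  have hTtop : T ≠ ∞ := ENNReal.mul_ne_top ENNReal.coe_ne_top rpowKernel_ne_top
  have hle : 2 * T ≤ T :=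
    calc 2 * T = 2 * c * rpowKernel (finrank ℝ E - β) r * ENNReal.ofReal (r ^ finrank ℝ E) := by
          rw [sub_eq_add_neg, rpowKernel_add hr, mul_comm (rpowKernel (finrank ℝ E) r), mul_assoc,
            mul_assoc, mul_assoc, rpowKernel_natCast_mul_ofReal_pow hr, mul_one]
      _ ≤ 2 * c * rpowKernel (finrank ℝ E - β) r * volume A := mul_le_mul_right hvol _
      _ = ∫⁻ _ in A, 2 * c * rpowKernel (finrank ℝ E - β) r := (setLIntegral_const _ _).symm
      _ ≤ ∫⁻ x in A, youngAbs φ (w x - ⨍ z in ball x r, w z) := by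
          refine lintegral_mono_ae (hH.mono fun x hx => ?_)
          rw [hx]
          exact (hlarge x).le
      _ ≤ T * fracModular β φ univ w := (setLIntegral_le_lintegral A _).trans
          (h.lintegral_youngAbs_sub_setAverage_le hβ hw hr)
      _ ≤ T := mul_le_of_le_one_right' hM
  rw [two_mul] at hle
  exact (ENNReal.lt_add_right hTtop hT0).not_ge hle

variable (E) in
lemma IsYoung.exists_youngAbs_height_le_of_lt (h : IsYoung φ) (hK : IsDoubling φ K) (hβ : 0 < β)
    (hβd : β < finrank ℝ E) :
    ∃ C : ℝ≥0, ∀ w : E → ℝ, LocallyIntegrable w → fracModular β φ univ w ≤ 1 →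
      ∀ (r H : ℝ) (A A' : Set E), 0 < r → ENNReal.ofReal (r ^ finrank ℝ E) ≤ volume A →
      ENNReal.ofReal (r ^ finrank ℝ E) ≤ volume A' →
      (∀ᵐ x ∂volume.restrict A, w x = H) → (∀ᵐ x ∂volume.restrict A', w x = 0) →
      youngAbs φ H ≤ C * rpowKernel (finrank ℝ E - β) r := by
  obtain ⟨C₁, hC₁⟩ := h.exists_youngAbs_setAverage_ball_sub_le_of_lt E hK hβ hβd
  obtain ⟨C₂, hC₂⟩ := h.exists_youngAbs_sub_le_add_add hK
  refine ⟨C₂ * (2 * (unitBallVol E)⁻¹ + C₁ + 2 * (unitBallVol E)⁻¹),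
    fun w hw hM r H A A' hr hA hA' hH h0 => ?_⟩
  obtain ⟨x, hx⟩ := h.exists_youngAbs_sub_setAverage_le hβ hw hM hr hA hH
  obtain ⟨y, hy⟩ := h.exists_youngAbs_sub_setAverage_le hβ hw hM hr hA' h0
  rw [youngAbs_sub_comm] at hy
  rw [← sub_zero H]
  refine (hC₂ _ _ _ _).trans ((mul_le_mul_right (add_le_add (add_le_add hx
    ((hC₁ w hw x y r hr).trans (mul_le_of_le_one_right' hM))) hy) _).trans_eq ?_)
  push_cast
  ring

variable (E) in
lemma IsYoung.exists_youngAbs_height_le_of_gt (h : IsYoung φ) (hK : IsDoubling φ K)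
    (hβd : finrank ℝ E < β) :
    ∃ C : ℝ≥0, ∀ w : E → ℝ, LocallyIntegrable w → fracModular β φ univ w ≤ 1 →
      ∀ (r H s : ℝ) (x y : E), 0 < s → 0 < r → dist x y ≤ r →
      (∀ᵐ z ∂volume.restrict (ball x s), w z = H) →
      (∀ᵐ z ∂volume.restrict (ball y s), w z = 0) →
      youngAbs φ H ≤ C * rpowKernel (finrank ℝ E - β) r := by
  have hβ : 0 < β := (Nat.cast_nonneg _).trans_lt hβd
  have hθ : rpowKernel (finrank ℝ E - β) 2⁻¹ < 1 :=
    ENNReal.ofReal_lt_one.2 (Real.rpow_lt_one (by norm_num) (by norm_num) (by linarith))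
  obtain ⟨C₁, hC₁⟩ := h.exists_youngAbs_setAverage_ball_sub_le E hK hβ
  obtain ⟨C₂, hC₂⟩ := h.exists_youngAbs_setAverage_ball_sub_pow_le E hK hβ le_rfl (by norm_num) hθ
  obtain ⟨C₃, hC₃⟩ := h.exists_youngAbs_sub_le_add_add hK
  refine ⟨C₃ * (C₂ + C₁ + C₂), fun w hw hM r H s x y hs hr hxy hH h0 => ?_⟩
  obtain ⟨m, hm⟩ := exists_pow_lt_of_lt_one (div_pos hs hr) (by norm_num : (2⁻¹ : ℝ) < 1)
  rw [lt_div_iff₀ hr] at hm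
  have haverage : ∀ (x : E) (a : ℝ), (∀ᵐ z ∂volume.restrict (ball x s), w z = a) →
      ⨍ z in ball x (2⁻¹ ^ m * r), w z = a := by
    intro x a ha
    rw [average_congr (ae_restrict_of_ae_restrict_of_subset (ball_subset_ball hm.le) ha)]
    exact setAverage_const (measure_ball_pos volume x (by positivity)).ne'
      measure_ball_lt_top.ne a
  have hx := hC₂ w hw x r m hr
  have hy := hC₂ w hw y r m hr
  have hmid := hC₁ w hw x y r r hr (by linarith) (by linarith) hxy
  rw [haverage x H hH, youngAbs_sub_comm] at hx
  rw [haverage y 0 h0] at hy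
  rw [← sub_zero H]
  refine (hC₃ _ _ _ _).trans ((mul_le_mul_right (add_le_add (add_le_add
    (hx.trans (mul_le_of_le_one_right' hM)) (hmid.trans (mul_le_of_le_one_right' hM)))
    (hy.trans (mul_le_of_le_one_right' hM))) _).trans_eq ?_)
  push_cast
  ring

end Capacity

/-! ### Cut-off functions -/

section SymmetricKernel

variable {α : Type*} [MeasurableSpace α] {μ : Measure α} [SFinite μ] {B : Set α}
  {f G : α → α → ℝ≥0∞}

lemma lintegral_lintegral_le_two_mul_setLIntegral (hB : MeasurableSet B)
    (hG : Measurable (Function.uncurry G)) (hsymm : ∀ x y, G x y = G y x)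
    (hle : ∀ x y, f x y ≤ G x y) (hzero : ∀ x y, x ∉ B → y ∉ B → f x y = 0) :
    ∫⁻ x, ∫⁻ y, f x y ∂μ ∂μ ≤ 2 * ∫⁻ x in B, ∫⁻ y, G x y ∂μ ∂μ := by
  set F : α → α → ℝ≥0∞ := fun x y => B.indicator (fun x => G x y) x
  have hF : Measurable (Function.uncurry F) := by
    have : Function.uncurry F = (B ×ˢ univ).indicator (Function.uncurry G) := by
      ext ⟨x, y⟩
      by_cases hx : x ∈ B <;> simp [F, hx]
    exact this ▸ hG.indicator (hB.prod .univ)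
  have hfF : ∀ x y, f x y ≤ F x y + F y x := by
    intro x y
    by_cases hx : x ∈ B
    · simpa only [F, indicator_of_mem hx] using (hle x y).trans le_self_add
    by_cases hy : y ∈ B
    · simpa only [F, indicator_of_mem hy, hsymm y x] using (hle x y).trans le_add_self
    · exact (hzero x y hx hy).trans_le zero_le
  calc ∫⁻ x, ∫⁻ y, f x y ∂μ ∂μ ≤ ∫⁻ x, ∫⁻ y, F x y + F y x ∂μ ∂μ :=
        lintegral_mono fun x => lintegral_mono (hfF x)
    _ = ∫⁻ x, ∫⁻ y, F x y ∂μ ∂μ + ∫⁻ x, ∫⁻ y, F y x ∂μ ∂μ := by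
        simp_rw [lintegral_add_left hF.of_uncurry_left]
        exact lintegral_add_left hF.lintegral_prod_right' _
    _ = 2 * ∫⁻ x, ∫⁻ y, F x y ∂μ ∂μ := by
        rw [lintegral_lintegral_swap (f := fun x y => F y x)
          (hF.comp measurable_swap).aemeasurable, two_mul]
    _ = 2 * ∫⁻ x in B, ∫⁻ y, G x y ∂μ ∂μ := by
        rw [← lintegral_indicator hB]
        congr 2 with x
        by_cases hx : x ∈ B <;> simp [F, hx]

end SymmetricKernel

section RadialCutoff

variable {X : Type*} [PseudoMetricSpace X] {x y z : X} {s t H : ℝ}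

/-- The Lipschitz cut-off of height `H`, equal to `H` on `B(x,s)` and to `0` off `B(x,t)`. -/
noncomputable def radialCutoff (x : X) (s t H : ℝ) (z : X) : ℝ :=
  H * max 0 (min 1 ((t - dist z x) / (t - s)))

lemma continuous_radialCutoff : Continuous (radialCutoff x s t H) := by
  unfold radialCutoff
  fun_prop

lemma radialCutoff_eq (hst : s < t) (hz : dist z x ≤ s) : radialCutoff x s t H z = H := by
  have hone : 1 ≤ (t - dist z x) / (t - s) := (one_le_div (sub_pos.2 hst)).2 (by linarith)
  simp [radialCutoff, hone]

lemma radialCutoff_eq_zero (hst : s ≤ t) (hz : t ≤ dist z x) : radialCutoff x s t H z = 0 := by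
  have hneg : (t - dist z x) / (t - s) ≤ 0 :=
    div_nonpos_of_nonpos_of_nonneg (sub_nonpos.2 hz) (sub_nonneg.2 hst)
  rw [radialCutoff, max_eq_left ((min_le_right _ _).trans hneg), mul_zero]

lemma radialCutoff_one_mem_Icc : radialCutoff x s t 1 z ∈ Icc 0 1 := by
  rw [radialCutoff, one_mul]
  exact ⟨le_max_left _ _, max_le zero_le_one (min_le_left _ _)⟩

lemma abs_radialCutoff_sub_le (hst : s < t) :
    |radialCutoff x s t H y - radialCutoff x s t H z| ≤ |min 1 (dist y z / (t - s)) * H| := by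
  have hρ : 0 < t - s := sub_pos.2 hst
  rw [radialCutoff, radialCutoff, ← mul_sub, abs_mul, abs_mul, mul_comm,
    abs_of_nonneg (le_min zero_le_one (by positivity) : 0 ≤ min 1 (dist y z / (t - s)))]
  gcongr
  refine le_min (abs_sub_le_of_nonneg_of_le (le_max_left _ _) ?_ (le_max_left _ _) ?_)
    ((abs_projIcc_sub_projIcc zero_le_one).trans ?_)
  · exact max_le zero_le_one (min_le_left _ _)
  · exact max_le zero_le_one (min_le_left _ _)
  · rw [← sub_div, abs_div, abs_of_pos hρ, sub_sub_sub_cancel_left]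
    gcongr
    rw [dist_comm y z]
    exact abs_dist_sub_le z y x

end RadialCutoff

section CutoffModular

variable {E : Type*} [NormedAddCommGroup E] [NormedSpace ℝ E] [FiniteDimensional ℝ E]
  [MeasureSpace E] [BorelSpace E] [(volume : Measure E).IsAddHaarMeasure] {β : ℝ} {φ : ℝ → ℝ}

variable (E) in
lemma CbetaFinite.exists_lintegral_min_le (hC : CbetaFinite β φ) (h : IsYoung φ) (hβ : 0 < β) :
    ∃ C : ℝ≥0, ∀ (x : E) (ρ H : ℝ), 0 < ρ →
      ∫⁻ y, youngAbs φ (min 1 (dist x y / ρ) * H) * rpowKernel (finrank ℝ E + β) (dist x y) ≤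
        C * rpowKernel β ρ * youngAbs φ H := by
  obtain ⟨C₁, hC₁⟩ := hC.exists_lintegral_ball_le E h hβ
  obtain ⟨C₂, hC₂⟩ := exists_lintegral_compl_ball_rpowKernel_le E hβ
  refine ⟨C₁ + C₂, fun x ρ H hρ => ?_⟩
  have hmono : ∀ {a b : ℝ}, 0 ≤ a → a ≤ b → youngAbs φ (a * H) ≤ youngAbs φ (b * H) := by
    intro a b ha hab
    refine h.youngAbs_mono ?_
    rw [abs_mul, abs_mul, abs_of_nonneg ha, abs_of_nonneg (ha.trans hab)]
    gcongr
  have hmin : ∀ y, 0 ≤ min 1 (dist x y / ρ) := fun y => le_min zero_le_one (by positivity)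
  rw [← lintegral_add_compl _ (measurableSet_ball (x := x) (ε := ρ)), ENNReal.coe_add, add_mul,
    add_mul]
  refine add_le_add ((lintegral_mono fun y => ?_).trans (hC₁ x ρ H hρ)) ?_
  · exact mul_le_mul_left (hmono (hmin y) (min_le_right _ _)) _
  · calc ∫⁻ y in (ball x ρ)ᶜ,
          youngAbs φ (min 1 (dist x y / ρ) * H) * rpowKernel (finrank ℝ E + β) (dist x y)
        ≤ ∫⁻ y in (ball x ρ)ᶜ, youngAbs φ H * rpowKernel (finrank ℝ E + β) (dist x y) := by
          refine lintegral_mono fun y => mul_le_mul_left ?_ _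
          simpa using hmono (hmin y) (min_le_left _ _)
      _ ≤ youngAbs φ H * (C₂ * rpowKernel β ρ) := by
          rw [lintegral_const_mul' _ _ (youngAbs_ne_top H)]
          gcongr
          exact hC₂ x ρ hρ
      _ = C₂ * rpowKernel β ρ * youngAbs φ H := mul_comm _ _

variable (E) in
lemma CbetaFinite.exists_fracModular_radialCutoff_le (hC : CbetaFinite β φ) (h : IsYoung φ)
    (hβ : 0 < β) :
    ∃ C : ℝ≥0, 0 < C ∧ ∀ (Ω : Set E) (x : E) (s t H : ℝ), s < t →
      fracModular β φ Ω (radialCutoff x s t H) ≤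
        C * volume (ball x t ∩ Ω) * rpowKernel β (t - s) * youngAbs φ H := by
  obtain ⟨C, hC⟩ := hC.exists_lintegral_min_le E h hβ
  refine ⟨2 * C + 1, by positivity, fun Ω x s t H hst => ?_⟩
  set G : E → E → ℝ≥0∞ := fun z y =>
    youngAbs φ (min 1 (dist z y / (t - s)) * H) * rpowKernel (finrank ℝ E + β) (dist z y)
  have hG : Measurable (Function.uncurry G) := by
    have hd : Measurable fun p : E × E => dist p.1 p.2 := continuous_dist.measurable
    exact (h.measurable_youngAbs.comp ((measurable_const.min (hd.div_const _)).mul_const H)).mul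
      (measurable_rpowKernel.comp hd)
  calc fracModular β φ Ω (radialCutoff x s t H)
      ≤ 2 * ∫⁻ z in ball x t, ∫⁻ y, G z y ∂volume.restrict Ω ∂volume.restrict Ω := by
        refine lintegral_lintegral_le_two_mul_setLIntegral measurableSet_ball hG
          (fun z y => by simp only [G, dist_comm z y])
          (fun z y => mul_le_mul_left (h.youngAbs_mono (abs_radialCutoff_sub_le hst)) _)
          fun z y hz hy => ?_
        rw [mem_ball, not_lt] at hz hy
        rw [radialCutoff_eq_zero hst.le hz, radialCutoff_eq_zero hst.le hy, sub_self,
          h.youngAbs_zero, zero_mul]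
    _ ≤ 2 * ∫⁻ _ in ball x t, C * rpowKernel β (t - s) * youngAbs φ H ∂volume.restrict Ω := by
        gcongr
        exact (setLIntegral_le_lintegral _ _).trans (hC _ _ H (sub_pos.2 hst))
    _ = (2 * C) * volume (ball x t ∩ Ω) * rpowKernel β (t - s) * youngAbs φ H := by
        rw [setLIntegral_const, Measure.restrict_apply measurableSet_ball]
        ring
    _ ≤ (2 * C + 1 : ℝ≥0) * volume (ball x t ∩ Ω) * rpowKernel β (t - s) * youngAbs φ H := by
        push_cast
        gcongr
        exact le_self_add

end CutoffModular

/-! ### Extension implies regularity -/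

section Iteration

-- Iterate the hypothesis along the radii `r / 2 * (1 + 2⁻ʲ)`, which decrease to `r / 2`.
lemma eq_zero_of_forall_le_ofReal_pow {V : ℝ → ℝ≥0∞} {a r : ℝ} {n : ℕ} (hV : Monotone V)
    (hn : n ≠ 0) (ha : 0 < a) (hr : 0 < r)
    (hstep : ∀ t R, 0 < R → t + a * R ≤ r → V (t + a * R) ≤ ENNReal.ofReal ((2 * R) ^ n) →
      V t ≤ ENNReal.ofReal (R ^ n))
    (hVr : V r ≤ ENNReal.ofReal (((2 * a)⁻¹ * r) ^ n)) : V (r / 2) = 0 := by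
  have hdecay : ∀ j : ℕ, V (r / 2 * (1 + 2⁻¹ ^ j)) ≤
      ENNReal.ofReal (((2 * a)⁻¹ * r * 2⁻¹ ^ j) ^ n) := by
    intro j
    induction j with
    | zero => convert hVr using 3 <;> ring
    | succ j ih =>
      set R := (2 * a)⁻¹ * r * 2⁻¹ ^ (j + 1)
      have ht : r / 2 * (1 + 2⁻¹ ^ (j + 1)) + a * R = r / 2 * (1 + 2⁻¹ ^ j) := by
        simp only [R, pow_succ]
        field_simp
        ring
      have hle : r / 2 * (1 + 2⁻¹ ^ j) ≤ r := by
        have : (2⁻¹ : ℝ) ^ j ≤ 1 := pow_le_one₀ (by norm_num) (by norm_num)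
        nlinarith
      refine hstep _ R (by positivity) (ht ▸ hle) ?_
      rw [ht]
      convert ih using 3
      simp only [R, pow_succ]
      ring
  have hlim : Tendsto (fun j : ℕ => ENNReal.ofReal (((2 * a)⁻¹ * r * 2⁻¹ ^ j) ^ n))
      atTop (𝓝 0) := by
    have := ((tendsto_pow_atTop_nhds_zero_of_lt_one (r := (2⁻¹ : ℝ)) (by norm_num)
      (by norm_num)).const_mul ((2 * a)⁻¹ * r)).pow n
    rw [mul_zero, zero_pow hn] at this
    simpa using ENNReal.tendsto_ofReal this
  refine nonpos_iff_eq_zero.1 (ge_of_tendsto' hlim fun j => le_trans (hV ?_) (hdecay j))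
  exact le_mul_of_one_le_right (by positivity) (le_add_of_nonneg_right (by positivity))

end Iteration

section ModularExtension

variable {E : Type*} [NormedAddCommGroup E] [NormedSpace ℝ E] [MeasureSpace E]

/-- The extension property in modular form: for some normalization `L`, every `u / L` with `u` of
modular at most `1` on `Ω` is the restriction of a function of modular at most `1` on the whole
space. -/
def HasModularExtension (β : ℝ) (φ : ℝ → ℝ) (Ω : Set E) : Prop :=
  ∃ L > 0, ∀ u : E → ℝ, LocallyIntegrableOn u Ω → fracModular β φ Ω u ≤ 1 →
    ∃ w : E → ℝ, LocallyIntegrable w ∧ fracModular β φ univ w ≤ 1 ∧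
      ∀ᵐ x ∂volume.restrict Ω, w x = u x / L

variable [FiniteDimensional ℝ E] [BorelSpace E] [(volume : Measure E).IsAddHaarMeasure]
  {β K : ℝ} {φ : ℝ → ℝ} {Ω : Set E}

lemma HasModularExtension.exists_extended_cutoff (hE : HasModularExtension β φ Ω)
    (h : IsYoung φ) (hK : IsDoubling φ K) (hβ : 0 < β) (hC : CbetaFinite β φ) :
    ∃ C : ℝ≥0, ∀ (x : E) (s t : ℝ), s < t → volume (ball x t ∩ Ω) ≠ 0 →
      ∃ (w : E → ℝ) (H : ℝ), LocallyIntegrable w ∧ fracModular β φ univ w ≤ 1 ∧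
        (∀ᵐ z ∂volume.restrict Ω, dist z x ≤ s → w z = H) ∧
        (∀ᵐ z ∂volume.restrict Ω, t ≤ dist z x → w z = 0) ∧
        1 ≤ C * volume (ball x t ∩ Ω) * rpowKernel β (t - s) * youngAbs φ H := by
  obtain ⟨L, hL, hE⟩ := hE
  obtain ⟨C₁, hC₁pos, hC₁⟩ := hC.exists_fracModular_radialCutoff_le E h hβ
  obtain ⟨C₂, -, hC₂⟩ := h.exists_youngAbs_le_of_abs_le hK L
  refine ⟨C₁ * C₂, fun x s t hst hvol => ?_⟩
  set M := C₁ * volume (ball x t ∩ Ω) * rpowKernel β (t - s)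
  have hM0 : M ≠ 0 := mul_ne_zero (mul_ne_zero (by simpa using hC₁pos.ne') hvol)
    (rpowKernel_ne_zero (sub_pos.2 hst))
  have hMtop : M ≠ ∞ := ENNReal.mul_ne_top (ENNReal.mul_ne_top ENNReal.coe_ne_top
    (measure_inter_lt_top_of_left_ne_top measure_ball_lt_top.ne).ne) rpowKernel_ne_top
  have hMpos : 0 < M.toReal := ENNReal.toReal_pos hM0 hMtop
  obtain ⟨H, hH, hφH⟩ := h.exists_pos_map_eq (inv_pos.2 hMpos)
  have hMH : M * youngAbs φ H = 1 := by
    rw [youngAbs, abs_of_pos hH, hφH, ENNReal.ofReal_inv_of_pos hMpos, ENNReal.ofReal_toReal hMtop,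
      ENNReal.mul_inv_cancel hM0 hMtop]
  obtain ⟨w, hw, hwM, hwu⟩ := hE (radialCutoff x s t H)
    (continuous_radialCutoff.locallyIntegrable.locallyIntegrableOn Ω)
    ((hC₁ Ω x s t H hst).trans hMH.le)
  refine ⟨w, H / L, hw, hwM, hwu.mono fun z hz hd => ?_, hwu.mono fun z hz hd => ?_, ?_⟩
  · rw [hz, radialCutoff_eq hst hd]
  · rw [hz, radialCutoff_eq_zero hst.le hd, zero_div]
  · calc 1 = M * youngAbs φ H := hMH.symm
      _ ≤ M * (C₂ * youngAbs φ (H / L)) := by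
          gcongr
          exact hC₂ _ _ (by rw [mul_div_cancel₀ _ hL.ne'])
      _ = (C₁ * C₂ : ℝ≥0) * volume (ball x t ∩ Ω) * rpowKernel β (t - s) *
            youngAbs φ (H / L) := by
          simp only [M, ENNReal.coe_mul]
          ring

lemma HasModularExtension.exists_one_le_volume_of_lt (hE : HasModularExtension β φ Ω)
    (hΩ : MeasurableSet Ω) (h : IsYoung φ) (hK : IsDoubling φ K) (hβ : 0 < β)
    (hβd : β < finrank ℝ E) (hC : CbetaFinite β φ) :
    ∃ C : ℝ≥0, ∀ (x : E) (s t R : ℝ), s < t → 0 < R →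
      ENNReal.ofReal (R ^ finrank ℝ E) ≤ volume (ball x s ∩ Ω) →
      ENNReal.ofReal (R ^ finrank ℝ E) ≤ volume (Ω \ ball x t) →
      1 ≤ C * volume (ball x t ∩ Ω) * rpowKernel β (t - s) * rpowKernel (finrank ℝ E - β) R := by
  obtain ⟨C₁, hC₁⟩ := hE.exists_extended_cutoff h hK hβ hC
  obtain ⟨C₂, hC₂⟩ := h.exists_youngAbs_height_le_of_lt E hK hβ hβd
  refine ⟨C₁ * C₂, fun x s t R hst hR hin hout => ?_⟩
  have hpos : 0 < volume (ball x t ∩ Ω) :=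
    (ENNReal.ofReal_pos.2 (by positivity)).trans_le (hin.trans (measure_mono
      (inter_subset_inter_left _ (ball_subset_ball hst.le))))
  obtain ⟨w, H, hw, hwM, hwH, hw0, hone⟩ := hC₁ x s t hst hpos.ne'
  have hH : youngAbs φ H ≤ C₂ * rpowKernel (finrank ℝ E - β) R := by
    refine hC₂ w hw hwM R H _ _ hR hin hout ?_ ?_
    · filter_upwards [ae_restrict_of_ae_restrict_of_subset inter_subset_right hwH,
        ae_restrict_mem (measurableSet_ball.inter hΩ)] with z hz hzs
      exact hz (mem_ball.1 hzs.1).le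
    · filter_upwards [ae_restrict_of_ae_restrict_of_subset sdiff_subset hw0,
        ae_restrict_mem (hΩ.diff measurableSet_ball)] with z hz hzt
      exact hz (not_lt.1 hzt.2)
  refine (hone.trans (mul_le_mul_right hH _)).trans_eq ?_
  push_cast
  ring

-- Above the dimension the Morrey estimate bounds the height through the values of the extended
-- cut-off near the two points `x` and `z` only.
lemma HasModularExtension.exists_one_le_volume_of_gt (hE : HasModularExtension β φ Ω)
    (hΩ : IsOpen Ω) (h : IsYoung φ) (hK : IsDoubling φ K) (hβd : finrank ℝ E < β)
    (hC : CbetaFinite β φ) :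
    ∃ C : ℝ≥0, ∀ (x z : E) (s t R : ℝ), 0 < s → s < t → x ∈ Ω → z ∈ Ω → t < dist z x →
      dist z x ≤ R →
      1 ≤ C * volume (ball x t ∩ Ω) * rpowKernel β (t - s) * rpowKernel (finrank ℝ E - β) R := by
  have hβ : 0 < β := (Nat.cast_nonneg _).trans_lt hβd
  obtain ⟨C₁, hC₁⟩ := hE.exists_extended_cutoff h hK hβ hC
  obtain ⟨C₂, hC₂⟩ := h.exists_youngAbs_height_le_of_gt E hK hβd
  refine ⟨C₁ * C₂, fun x z s t R hs hst hx hz htz hzR => ?_⟩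
  have ht : 0 < t := hs.trans hst
  obtain ⟨w, H, hw, hwM, hwH, hw0, hone⟩ := hC₁ x s t hst
    ((isOpen_ball.inter hΩ).measure_pos volume ⟨x, mem_ball_self ht, hx⟩).ne'
  obtain ⟨a, ha, hax⟩ := Metric.isOpen_iff.1 (isOpen_ball.inter hΩ) x ⟨mem_ball_self hs, hx⟩
  obtain ⟨b, hb, hbz⟩ := Metric.isOpen_iff.1 (isClosed_closedBall.isOpen_compl.inter hΩ) z
    ⟨by simpa using htz, hz⟩
  have hH : youngAbs φ H ≤ C₂ * rpowKernel (finrank ℝ E - β) R := by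
    refine hC₂ w hw hwM R H (min a b) x z (lt_min ha hb) (by linarith)
      (by rwa [dist_comm]) ?_ ?_
    · have hsub := (ball_subset_ball (min_le_left a b)).trans hax
      filter_upwards [ae_restrict_of_ae_restrict_of_subset (hsub.trans inter_subset_right) hwH,
        ae_restrict_mem measurableSet_ball] with y hy hyx
      exact hy (mem_ball.1 (hsub hyx).1).le
    · have hsub := (ball_subset_ball (min_le_right a b)).trans hbz
      filter_upwards [ae_restrict_of_ae_restrict_of_subset (hsub.trans inter_subset_right) hw0,
        ae_restrict_mem measurableSet_ball] with y hy hyz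
      exact hy (not_le.1 (mem_compl_iff _ _ |>.1 (hsub hyz).1)).le
  refine (hone.trans (mul_le_mul_right hH _)).trans_eq ?_
  push_cast
  ring

lemma HasModularExtension.exists_volume_ball_inter_le (hE : HasModularExtension β φ Ω)
    (hΩ : MeasurableSet Ω) (h : IsYoung φ) (hK : IsDoubling φ K) (hβ : 0 < β)
    (hβd : β < finrank ℝ E) (hC : CbetaFinite β φ) :
    ∃ a > 0, ∀ (x : E) (s R : ℝ), 0 < R →
      volume (ball x s ∩ Ω) ≤ volume (Ω \ ball x (s + a * R)) →
      volume (ball x (s + a * R) ∩ Ω) ≤ ENNReal.ofReal ((2 * R) ^ finrank ℝ E) →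
      volume (ball x s ∩ Ω) ≤ ENNReal.ofReal (R ^ finrank ℝ E) := by
  obtain ⟨C, hC⟩ := hE.exists_one_le_volume_of_lt hΩ h hK hβ hβd hC
  obtain ⟨a, ha, hsmall⟩ := exists_mul_rpowKernel_lt_one hβ (C * 2 ^ finrank ℝ E)
  refine ⟨a, ha, fun x s R hR hout hle => ?_⟩
  by_contra! hlt
  have hone := hC x s (s + a * R) R (lt_add_of_pos_right s (by positivity)) hR hlt.le
    (hlt.le.trans hout)
  refine hone.not_gt (lt_of_le_of_lt ?_ hsmall)
  calc C * volume (ball x (s + a * R) ∩ Ω) * rpowKernel β (s + a * R - s) *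
        rpowKernel (finrank ℝ E - β) R
      ≤ C * ENNReal.ofReal ((2 * R) ^ finrank ℝ E) * rpowKernel β (a * R) *
        rpowKernel (finrank ℝ E - β) R := by
        rw [add_sub_cancel_left]
        gcongr
    _ = (C * 2 ^ finrank ℝ E) * rpowKernel β a *
        (rpowKernel (β + (finrank ℝ E - β)) R * ENNReal.ofReal (R ^ finrank ℝ E)) := by
        rw [mul_pow, ENNReal.ofReal_mul (by positivity), ENNReal.ofReal_pow zero_le_two,
          ENNReal.ofReal_ofNat, rpowKernel_mul ha.le hR.le, rpowKernel_add hR]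
        ring
    _ = (C * 2 ^ finrank ℝ E : ℝ≥0) * rpowKernel β a := by
        rw [add_sub_cancel, rpowKernel_natCast_mul_ofReal_pow hR, mul_one]
        push_cast
        rfl

lemma HasModularExtension.exists_le_volume_ball_inter (hE : HasModularExtension β φ Ω)
    (hΩ : IsOpen Ω) (h : IsYoung φ) (hK : IsDoubling φ K) (hβ : 0 < β) (hβd : β < finrank ℝ E)
    (hC : CbetaFinite β φ) :
    ∃ δ > 0, ∀ (x y : E) (r : ℝ), x ∈ Ω → 0 < r → 2 * r ≤ dist x y →
      volume (ball x r ∩ Ω) ≤ volume (ball y r ∩ Ω) →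
      ENNReal.ofReal ((δ * r) ^ finrank ℝ E) ≤ volume (ball x r ∩ Ω) := by
  obtain ⟨a, ha, hstep⟩ := hE.exists_volume_ball_inter_le hΩ.measurableSet h hK hβ hβd hC
  refine ⟨(2 * a)⁻¹, by positivity, fun x y r hx hr hxy hle => ?_⟩
  by_contra! hlt
  have hmono : Monotone fun t => volume (ball x t ∩ Ω) := fun s t hst =>
    measure_mono (inter_subset_inter_left _ (ball_subset_ball hst))
  have hout : ∀ s t, s ≤ r → t ≤ r → volume (ball x s ∩ Ω) ≤ volume (Ω \ ball x t) := by
    intro s t hs ht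
    refine (hmono hs).trans (hle.trans (measure_mono fun z hz => ⟨hz.2, fun hzx => ?_⟩))
    have hyz := mem_ball.1 hz.1
    rw [mem_ball] at hzx
    linarith [dist_triangle_left x y z]
  have hd : finrank ℝ E ≠ 0 := by
    rintro hd
    rw [hd, Nat.cast_zero] at hβd
    exact hβ.not_gt hβd
  have hzero : volume (ball x (r / 2) ∩ Ω) = 0 :=
    eq_zero_of_forall_le_ofReal_pow hmono hd ha hr
      (fun t R hR ht => hstep x t R hR (hout _ _ (by nlinarith) ht)) hlt.le
  exact ((isOpen_ball.inter hΩ).measure_pos volume ⟨x, mem_ball_self (by positivity), hx⟩).ne' hzero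

end ModularExtension

section AhlforsRegular

lemma exists_mem_lt_dist_of_lt_ediam {X : Type*} [PseudoMetricSpace X] {Ω : Set X} {r : ℝ} (x : X)
    (hr : ENNReal.ofReal r < 2 * ediam Ω) : ∃ y ∈ Ω, r / 4 < dist y x := by
  by_contra! hnear
  have hdiam : ediam Ω ≤ ENNReal.ofReal (r / 2) := by
    refine ediam_le fun y hy z hz => ?_
    rw [edist_dist]
    exact ENNReal.ofReal_le_ofReal
      (by linarith [dist_triangle_right y z x, hnear y hy, hnear z hz])
  refine hr.not_ge (ENNReal.mul_le_of_le_div' ?_)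
  rwa [← ENNReal.ofReal_ofNat, ← ENNReal.ofReal_div_of_pos two_pos]

lemma ofReal_inv_mul_pow_le_of_one_le {C : ℝ≥0} {V : ℝ≥0∞} {r : ℝ} {n : ℕ} (hr : 0 < r)
    (h : 1 ≤ C * rpowKernel n r * V) : ENNReal.ofReal ((C + 1 : ℝ)⁻¹ * r ^ n) ≤ V := by
  have hC : (0 : ℝ) < C + 1 := by positivity
  rw [ENNReal.ofReal_mul (by positivity), ENNReal.ofReal_inv_of_pos hC,
    ENNReal.ofReal_add (by positivity) zero_le_one, ENNReal.ofReal_coe_nnreal, ENNReal.ofReal_one,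
    ENNReal.inv_mul_le_iff (by simp) (by simp)]
  calc ENNReal.ofReal (r ^ n) ≤ C * rpowKernel n r * V * ENNReal.ofReal (r ^ n) :=
        le_mul_of_one_le_left' h
    _ = C * V * (rpowKernel n r * ENNReal.ofReal (r ^ n)) := by ring
    _ = C * V := by rw [rpowKernel_natCast_mul_ofReal_pow hr, mul_one]
    _ ≤ (C + 1) * V := by
        gcongr
        exact le_self_add

variable {E : Type*} [NormedAddCommGroup E] [NormedSpace ℝ E] [MeasureSpace E]

/-- The quantitative form of `AhlforsRegular`, in any normed space: a measurable set of positive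
measure that is Ahlfors regular with constant `θ` in the dimension of the space. -/
structure IsAhlforsRegularWith (θ : ℝ) (Ω : Set E) : Prop where
  measurableSet : MeasurableSet Ω
  volume_ne_zero : volume Ω ≠ 0
  pos : 0 < θ
  le_volume : ∀ x ∈ Ω, ∀ r, 0 < r → ENNReal.ofReal r < 2 * ediam Ω →
    ENNReal.ofReal (θ * r ^ finrank ℝ E) ≤ volume (ball x r ∩ Ω)

variable [FiniteDimensional ℝ E] [BorelSpace E] [(volume : Measure E).IsAddHaarMeasure]
  {β K : ℝ} {φ : ℝ → ℝ} {Ω : Set E}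

lemma HasModularExtension.exists_isAhlforsRegularWith_of_lt (hE : HasModularExtension β φ Ω)
    (hΩ : IsOpen Ω) (hne : Ω.Nonempty) (h : IsYoung φ) (hK : IsDoubling φ K) (hβ : 0 < β)
    (hβd : β < finrank ℝ E) (hC : CbetaFinite β φ) : ∃ θ, IsAhlforsRegularWith θ Ω := by
  obtain ⟨δ, hδ, hvol⟩ := hE.exists_le_volume_ball_inter hΩ h hK hβ hβd hC
  refine ⟨(δ / 8) ^ finrank ℝ E, hΩ.measurableSet, (hΩ.measure_pos _ hne).ne', by positivity,
    fun x hx r hr hrd => ?_⟩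
  obtain ⟨y, hy, hyx⟩ := exists_mem_lt_dist_of_lt_ediam x hrd
  rw [← mul_pow, div_mul_eq_mul_div, ← mul_div_assoc']
  refine le_trans ?_ (measure_mono (inter_subset_inter_left Ω
    (ball_subset_ball (show r / 8 ≤ r by linarith))))
  rcases le_total (volume (ball x (r / 8) ∩ Ω)) (volume (ball y (r / 8) ∩ Ω)) with hle | hle
  · exact hvol x y (r / 8) hx (by positivity) (by rw [dist_comm]; linarith) hle
  · exact (hvol y x (r / 8) hy (by positivity) (by linarith) hle).trans hle

lemma HasModularExtension.exists_isAhlforsRegularWith_of_gt (hE : HasModularExtension β φ Ω)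
    (hΩ : IsOpen Ω) (hΩc : IsConnected Ω) (h : IsYoung φ) (hK : IsDoubling φ K)
    (hβd : finrank ℝ E < β) (hC : CbetaFinite β φ) : ∃ θ, IsAhlforsRegularWith θ Ω := by
  obtain ⟨C, hC⟩ := hE.exists_one_le_volume_of_gt hΩ h hK hβd hC
  set c := rpowKernel β 16⁻¹ * rpowKernel (finrank ℝ E - β) 4⁻¹
  have hc : c ≠ ∞ := ENNReal.mul_ne_top rpowKernel_ne_top rpowKernel_ne_top
  refine ⟨(↑(C * c.toNNReal) + 1 : ℝ)⁻¹, hΩ.measurableSet,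
    (hΩ.measure_pos _ hΩc.nonempty).ne', by positivity,
    fun x hx r hr hrd => ofReal_inv_mul_pow_le_of_one_le hr ?_⟩
  obtain ⟨y, hy, hyx⟩ := exists_mem_lt_dist_of_lt_ediam x hrd
  obtain ⟨z, hz, hzx : dist z x = r / 4⟩ := hΩc.isPreconnected.intermediate_value hx hy
    (f := fun z => dist z x) (by fun_prop) ⟨by rw [dist_self]; positivity, hyx.le⟩
  calc 1 ≤ C * volume (ball x (r / 8) ∩ Ω) * rpowKernel β (r / 8 - r / 16) *
        rpowKernel (finrank ℝ E - β) (r / 4) :=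
        hC x z (r / 16) (r / 8) (r / 4) (by positivity) (by linarith) hx hz (by linarith) hzx.le
    _ = C * volume (ball x (r / 8) ∩ Ω) * (rpowKernel β 16⁻¹ * rpowKernel β r) *
        (rpowKernel (finrank ℝ E - β) 4⁻¹ * rpowKernel (finrank ℝ E - β) r) := by
        rw [← rpowKernel_mul (by norm_num) hr.le, ← rpowKernel_mul (by norm_num) hr.le]
        ring_nf
    _ = C * c * rpowKernel (β + (finrank ℝ E - β)) r * volume (ball x (r / 8) ∩ Ω) := by
        rw [rpowKernel_add hr]
        ring
    _ ≤ ↑(C * c.toNNReal) * rpowKernel (finrank ℝ E) r * volume (ball x r ∩ Ω) := by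
        rw [add_sub_cancel, ENNReal.coe_mul, ENNReal.coe_toNNReal hc]
        gcongr
        linarith

end AhlforsRegular

/-! ### Averages over regular sets -/

section RegularVolume

variable {E : Type*} [NormedAddCommGroup E] [NormedSpace ℝ E] [MeasureSpace E] {θ : ℝ} {Ω : Set E}

lemma IsAhlforsRegularWith.nonempty (hΩ : IsAhlforsRegularWith θ Ω) : Ω.Nonempty :=
  nonempty_of_measure_ne_zero hΩ.volume_ne_zero

lemma IsAhlforsRegularWith.volume_ball_inter_pos (hΩ : IsAhlforsRegularWith θ Ω) {x : E}
    (hx : x ∈ Ω) {r : ℝ} (hr : 0 < r) : 0 < volume (ball x r ∩ Ω) := by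
  rcases (zero_le : 0 ≤ 2 * ediam Ω).eq_or_lt with h0 | h0
  · have hsub : Ω ⊆ ball x r := fun z hz => by
      rw [ediam_eq_zero_iff.1 (by simpa using h0.symm) hz hx]
      exact mem_ball_self hr
    rw [inter_eq_right.2 hsub]
    exact pos_iff_ne_zero.2 hΩ.volume_ne_zero
  · obtain ⟨s, -, hs⟩ := ENNReal.lt_iff_exists_real_btwn.1 h0
    have hs0' : 0 < s := by simpa using hs.1
    refine lt_of_lt_of_le ?_ ((hΩ.le_volume x hx (min r s) (by positivity)
      ((ENNReal.ofReal_le_ofReal (min_le_right r s)).trans_lt hs.2)).trans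
      (measure_mono (inter_subset_inter_left Ω (ball_subset_ball (min_le_left r s)))))
    have := hΩ.pos
    positivity

lemma IsAhlforsRegularWith.le_volume_or_subset_ball (hΩ : IsAhlforsRegularWith θ Ω) {R : ℝ}
    (hR : 0 < R) :
    (∀ y r, R ≤ r → infDist y Ω ≤ r / 2 →
      ENNReal.ofReal (θ * (R / 4) ^ finrank ℝ E) ≤ volume (ball y r ∩ Ω)) ∨
    ∀ y r, R ≤ r → infDist y Ω ≤ r / 2 → Ω ⊆ ball y r := by
  rcases lt_or_ge (ENNReal.ofReal (R / 4)) (2 * ediam Ω) with hd | hd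
  · refine .inl fun y r hr hy => ?_
    obtain ⟨y₀, hy₀, hyy₀⟩ := (infDist_lt_iff hΩ.nonempty).1 (by linarith : infDist y Ω < 3 / 4 * r)
    refine (hΩ.le_volume y₀ hy₀ (R / 4) (by positivity) hd).trans
      (measure_mono (inter_subset_inter_left _ (ball_subset_ball' ?_)))
    rw [dist_comm]
    linarith
  · refine .inr fun y r hr hy z hz => ?_
    have hbd : Bornology.IsBounded Ω := isBounded_iff_ediam_ne_top.2 fun htop => by
      rw [htop, ENNReal.mul_top two_ne_zero] at hd
      exact ENNReal.ofReal_ne_top (top_le_iff.1 hd)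
    have hdiam : 2 * diam Ω ≤ R / 4 := by
      simpa [diam, ENNReal.toReal_ofReal (by positivity : 0 ≤ R / 4)] using
        ENNReal.toReal_mono ENNReal.ofReal_ne_top hd
    rw [mem_ball, dist_comm]
    linarith [dist_le_infDist_add_diam hbd hz (x := y)]

end RegularVolume

section AveragingKernels

variable {X : Type*} [PseudoMetricSpace X] {Ω : Set X} {x y : X} {r R : ℝ}

/-- The weight defining the extension of a function from `Ω` at the point `x` outside `Ω`. -/
noncomputable def extensionKernel (Ω : Set X) (x : X) : X → ℝ :=
  radialCutoff x (2 * infDist x Ω) (3 * infDist x Ω) 1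

lemma abs_extensionKernel_sub_le (hx : 0 < infDist x Ω)
    (hxy : dist x y ≤ infDist x Ω / 2) (z : X) :
    |extensionKernel Ω x z - extensionKernel Ω y z| ≤ 14 * (dist x y / infDist x Ω) := by
  set d := infDist x Ω
  set d' := infDist y Ω
  have hdd : |d - d'| ≤ dist x y := by
    rw [abs_sub_le_iff]
    exact ⟨by linarith [infDist_le_infDist_add_dist (s := Ω) (x := x) (y := y)],
      by linarith [infDist_le_infDist_add_dist (s := Ω) (x := y) (y := x), dist_comm x y]⟩
  have hd' : d / 2 ≤ d' := by linarith [le_abs_self (d - d')]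
  have hd'0 : 0 < d' := by linarith
  have hd'2 : d' ≤ 3 / 2 * d := by linarith [neg_abs_le (d - d')]
  rcases le_or_gt (dist z x) (6 * d) with hz | hz
  · have hquot : (3 * d - dist z x) / (3 * d - 2 * d) - (3 * d' - dist z y) / (3 * d' - 2 * d') =
        (dist z y - dist z x) / d' + dist z x * (d - d') / (d * d') := by
      rw [show 3 * d - 2 * d = d by ring, show 3 * d' - 2 * d' = d' by ring]
      field_simp
      ring
    rw [extensionKernel, extensionKernel, radialCutoff, radialCutoff, one_mul, one_mul]
    refine (abs_projIcc_sub_projIcc zero_le_one).trans ?_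
    rw [hquot]
    calc |(dist z y - dist z x) / d' + dist z x * (d - d') / (d * d')|
        ≤ |dist z y - dist z x| / d' + dist z x * |d - d'| / (d * d') := by
          refine (abs_add_le _ _).trans (le_of_eq ?_)
          rw [abs_div, abs_div, abs_mul, abs_of_nonneg (dist_nonneg : 0 ≤ dist z x),
            abs_of_pos hd'0, abs_of_pos (by positivity : 0 < d * d')]
      _ ≤ dist x y / (d / 2) + 6 * d * dist x y / (d * (d / 2)) := by
          gcongr
          simpa only [dist_comm z] using abs_dist_sub_le y x z |>.trans_eq (dist_comm y x)
      _ = 14 * (dist x y / d) := by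
          field_simp
          ring
  · rw [extensionKernel, extensionKernel, radialCutoff_eq_zero (by linarith) (by linarith),
      radialCutoff_eq_zero (by linarith)
        (by linarith [dist_triangle z y x, dist_comm x y]), sub_self, abs_zero]
    positivity

variable [MeasurableSpace X]

/-- A weight adapted to averaging over `Ω` near `x` at scale `R`: it takes values in `[0, 1]`,
vanishes off `ball x R`, and is `1` on a ball of comparable radius reaching well into `Ω`. The
constant `16` accommodates all the weights compared below. -/
structure IsAveragingKernel (Ω : Set X) (x : X) (R : ℝ) (a : X → ℝ) : Prop where
  measurable : Measurable a
  mem_Icc : ∀ z, a z ∈ Icc 0 1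
  eq_zero : ∀ z ∉ ball x R, a z = 0
  exists_ball : ∃ y r, R / 16 ≤ r ∧ infDist y Ω ≤ r / 2 ∧ ∀ z ∈ ball y r, a z = 1

lemma isAveragingKernel_indicator_ball [OpensMeasurableSpace X]
    (hyR : dist y x + r ≤ R) (hRr : R / 16 ≤ r) (hy : infDist y Ω ≤ r / 2) :
    IsAveragingKernel Ω x R ((ball y r).indicator 1) where
  measurable := measurable_one.indicator measurableSet_ball
  mem_Icc := indicator_one_mem_Icc _
  eq_zero _ hz := indicator_of_notMem (fun h => hz (ball_subset_ball' (by linarith) h)) _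
  exists_ball := ⟨y, r, hRr, hy, fun _ hz => indicator_of_mem hz _⟩

lemma isAveragingKernel_extensionKernel [OpensMeasurableSpace X]
    (hy : 0 < infDist y Ω) (hyR : dist y x + 3 * infDist y Ω ≤ R)
    (hRy : R / 16 ≤ 2 * infDist y Ω) : IsAveragingKernel Ω x R (extensionKernel Ω y) where
  measurable := continuous_radialCutoff.measurable
  mem_Icc _ := radialCutoff_one_mem_Icc
  eq_zero z hz := radialCutoff_eq_zero (by linarith) <| by
    have := dist_triangle z y x
    rw [mem_ball, not_lt] at hz
    linarith
  exists_ball := ⟨y, 2 * infDist y Ω, hRy, by linarith, fun z hz =>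
    radialCutoff_eq (by linarith) (mem_ball.1 hz).le⟩

end AveragingKernels

section Oscillation

variable {E : Type*} [NormedAddCommGroup E] [NormedSpace ℝ E] [MeasureSpace E]

/-- The double integral of `φ(|u(z) - u(w)|)` over `B(x, 2^k) ∩ Ω`, normalised by the square of the
dyadic volume `2^{kn}`. -/
noncomputable def dyadicOscillation (φ : ℝ → ℝ) (Ω : Set E) (u : E → ℝ) (x : E) (k : ℤ) : ℝ≥0∞ :=
  dyadicKernel (finrank ℝ E) k * dyadicKernel (finrank ℝ E) k *
    ∫⁻ z in ball x (2 ^ k) ∩ Ω, ∫⁻ w in ball x (2 ^ k) ∩ Ω, youngAbs φ (u z - u w)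

variable {φ : ℝ → ℝ} {K θ : ℝ} {Ω : Set E}

lemma IsYoung.exists_dyadicOscillation_const_mul_le (h : IsYoung φ) (hK : IsDoubling φ K) (M : ℝ) :
    ∃ C : ℝ≥0, ∀ (Ω : Set E) (u : E → ℝ) (x : E) (k : ℤ),
      dyadicOscillation φ Ω (fun z => M * u z) x k ≤ C * dyadicOscillation φ Ω u x k := by
  obtain ⟨C, -, hC⟩ := h.exists_youngAbs_le_of_abs_le hK M
  refine ⟨C, fun Ω u x k => ?_⟩
  rw [dyadicOscillation, dyadicOscillation, mul_left_comm,
    ← lintegral_const_mul' _ _ ENNReal.coe_ne_top]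
  gcongr with z
  rw [← lintegral_const_mul' _ _ ENNReal.coe_ne_top]
  gcongr with w
  exact hC _ _ (by rw [mul_sub])

lemma IsAveragingKernel.ball_subset_ball {X : Type*} [PseudoMetricSpace X] [MeasurableSpace X]
    {Ω : Set X} {x y : X} {r R : ℝ} {a : X → ℝ} (ha : IsAveragingKernel Ω x R a)
    (hone : ∀ z ∈ ball y r, a z = 1) : ball y r ⊆ ball x R := fun z hz => by
  by_contra hcon
  exact one_ne_zero ((hone z hz).symm.trans (ha.eq_zero z hcon))

lemma IsAveragingKernel.toReal_le_integral {X : Type*} [PseudoMetricSpace X] [MeasurableSpace X]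
    [OpensMeasurableSpace X] {μ : Measure X} {Ω : Set X} {x : X} {R : ℝ} {m : ℝ≥0∞} {a : X → ℝ}
    (ha : IsAveragingKernel Ω x R a) (hΩ : MeasurableSet Ω) (hfin : μ (ball x R ∩ Ω) ≠ ∞)
    (hm : ∀ y r, R / 16 ≤ r → infDist y Ω ≤ r / 2 → m ≤ μ (ball y r ∩ Ω)) :
    m.toReal ≤ ∫ z in ball x R ∩ Ω, a z ∂μ := by
  obtain ⟨y, r, hr, hy, hone⟩ := ha.exists_ball
  have hsub := inter_subset_inter_left Ω (ha.ball_subset_ball hone)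
  have : IsFiniteMeasure (μ.restrict (ball x R ∩ Ω)) := isFiniteMeasure_restrict.2 hfin
  have hint : IntegrableOn a (ball x R ∩ Ω) μ :=
    .of_mem_Icc 0 1 ha.measurable.aemeasurable (ae_of_all _ ha.mem_Icc)
  calc m.toReal ≤ μ.real (ball y r ∩ Ω) :=
        ENNReal.toReal_mono (measure_ne_top_of_subset hsub hfin) (hm y r hr hy)
    _ = ∫ z in ball y r ∩ Ω, a z ∂μ := by
        rw [setIntegral_congr_fun (measurableSet_ball.inter hΩ) fun z hz => hone z hz.1,
          setIntegral_const, smul_eq_mul, mul_one]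
    _ ≤ ∫ z in ball x R ∩ Ω, a z ∂μ :=
        setIntegral_mono_set hint (ae_of_all _ fun z => (ha.mem_Icc z).1) hsub.eventuallyLE

lemma IsAveragingKernel.weightedAverage_eq_of_subset_ball {X : Type*} [PseudoMetricSpace X]
    [MeasurableSpace X] {μ : Measure X} {Ω : Set X} {x : X} {R : ℝ} {a b : X → ℝ}
    (ha : IsAveragingKernel Ω x R a) (hb : IsAveragingKernel Ω x R b) (hΩ : MeasurableSet Ω)
    (hsub : ∀ y r, R / 16 ≤ r → infDist y Ω ≤ r / 2 → Ω ⊆ ball y r) (u : X → ℝ) :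
    weightedAverage (μ.restrict Ω) a u = weightedAverage (μ.restrict Ω) b u := by
  have hone : ∀ {f : X → ℝ}, IsAveragingKernel Ω x R f → EqOn f 1 Ω := fun hf z hz => by
    obtain ⟨y, r, hr, hy, hfr⟩ := hf.exists_ball
    exact hfr z (hsub y r hr hy hz)
  have hab : EqOn a b Ω := (hone ha).trans (hone hb).symm
  rw [weightedAverage, weightedAverage, setIntegral_congr_fun hΩ hab,
    setIntegral_congr_fun (g := fun z => b z * u z) hΩ fun z hz => by simp only [hab hz]]

variable [FiniteDimensional ℝ E] [BorelSpace E] [(volume : Measure E).IsAddHaarMeasure]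

lemma IsYoung.youngAbs_weightedAverage_sub_le_dyadicOscillation (h : IsYoung φ) {κ : ℝ≥0}
    (hκ : 0 < κ) {u : E → ℝ} {x : E} {k : ℤ} {a b : E → ℝ} {ε : ℝ} (hΩ : MeasurableSet Ω)
    (hm : ∀ y r, 2 ^ k / 16 ≤ r → infDist y Ω ≤ r / 2 →
      κ * volume (ball x (2 ^ k)) ≤ volume (ball y r ∩ Ω))
    (hu : IntegrableOn u (ball x (2 ^ k) ∩ Ω)) (ha : IsAveragingKernel Ω x (2 ^ k) a)
    (hb : IsAveragingKernel Ω x (2 ^ k) b) (hab : ∀ z, |a z - b z| ≤ ε) :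
    youngAbs φ (weightedAverage (volume.restrict Ω) a u -
        weightedAverage (volume.restrict Ω) b u) ≤
      ((κ⁻¹ * (unitBallVol E)⁻¹) ^ 2 : ℝ≥0) *
        dyadicOscillation φ Ω (fun z => ((κ : ℝ)⁻¹ + (κ : ℝ)⁻¹ ^ 2) * ε * u z) x k := by
  set B := ball x (2 ^ k) ∩ Ω with hB
  have hR : (0 : ℝ) < 2 ^ k := by positivity
  have hfin : volume B ≠ ∞ := measure_ne_top_of_subset inter_subset_left measure_ball_lt_top.ne
  have : IsFiniteMeasure (volume.restrict B) := isFiniteMeasure_restrict.2 hfin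
  have hlower : κ * volume (ball x (2 ^ k)) ≤ volume B := by
    obtain ⟨y, r, hr, hy, hone⟩ := ha.exists_ball
    exact (hm y r hr hy).trans
      (measure_mono (inter_subset_inter_left Ω (ha.ball_subset_ball hone)))
  have hB0 : volume.restrict B ≠ 0 := by
    rw [Ne, Measure.restrict_eq_zero]
    exact (lt_of_lt_of_le (ENNReal.mul_pos (ENNReal.coe_ne_zero.2 hκ.ne')
      (measure_ball_pos _ x hR).ne') hlower).ne'
  have hinv : (volume B)⁻¹ ≤ (κ⁻¹ * (unitBallVol E)⁻¹ : ℝ≥0) * dyadicKernel (finrank ℝ E) k := by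
    refine (ENNReal.inv_le_inv.2 hlower).trans_eq ?_
    rw [ENNReal.mul_inv (.inr measure_ball_lt_top.ne) (.inl ENNReal.coe_ne_top),
      inv_volume_ball_eq x hR, ENNReal.coe_mul, ENNReal.coe_inv hκ.ne', mul_assoc, dyadicKernel]
  have hmass : κ * (volume.restrict B).real univ ≤ (κ * volume (ball x (2 ^ k))).toReal := by
    rw [measureReal_restrict_apply_univ, ENNReal.toReal_mul, ENNReal.coe_toReal]
    exact mul_le_mul_of_nonneg_left
      (measureReal_mono inter_subset_left measure_ball_lt_top.ne) κ.coe_nonneg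
  have hrestr : ∀ {f : E → ℝ}, IsAveragingKernel Ω x (2 ^ k) f →
      weightedAverage (volume.restrict Ω) f u = weightedAverage (volume.restrict B) f u :=
    fun hf => (weightedAverage_restrict inter_subset_right hΩ fun z hz hzB =>
      hf.eq_zero z fun hzx => hzB ⟨hzx, hz⟩).symm
  rw [hrestr ha, hrestr hb]
  refine (h.youngAbs_weightedAverage_sub_le hB0 ha.measurable hb.measurable ha.mem_Icc hb.mem_Icc
    (NNReal.coe_pos.2 hκ) (hmass.trans (ha.toReal_le_integral hΩ hfin hm))
    (hmass.trans (hb.toReal_le_integral hΩ hfin hm)) hab hu).trans ?_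
  simp only [Measure.restrict_apply_univ, dyadicOscillation, ← mul_sub, ← hB]
  rw [ENNReal.coe_pow, pow_two (ENNReal.ofNNReal _), ← mul_assoc,
    mul_mul_mul_comm (ENNReal.ofNNReal _)]
  gcongr

lemma IsAhlforsRegularWith.exists_youngAbs_weightedAverage_sub_le_of_abs_sub_le
    (hΩ : IsAhlforsRegularWith θ Ω) (h : IsYoung φ) :
    ∃ (C : ℝ≥0) (M : ℝ), ∀ (u : E → ℝ) (x : E) (k : ℤ) (a b : E → ℝ) (ε : ℝ),
      IntegrableOn u (ball x (2 ^ k) ∩ Ω) →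
      IsAveragingKernel Ω x (2 ^ k) a → IsAveragingKernel Ω x (2 ^ k) b →
      (∀ z, |a z - b z| ≤ ε) →
      youngAbs φ (weightedAverage (volume.restrict Ω) a u -
          weightedAverage (volume.restrict Ω) b u) ≤
        C * dyadicOscillation φ Ω (fun z => M * ε * u z) x k := by
  have hvol : 0 < unitBallVol E := unitBallVol_pos
  set κ : ℝ≥0 := (θ / 64 ^ finrank ℝ E).toNNReal / unitBallVol E with hκ
  have hκ0 : 0 < κ := div_pos (Real.toNNReal_pos.2 (div_pos hΩ.pos (by positivity))) hvol
  refine ⟨(κ⁻¹ * (unitBallVol E)⁻¹) ^ 2, (κ : ℝ)⁻¹ + (κ : ℝ)⁻¹ ^ 2,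
    fun u x k a b ε hu ha hb hab => ?_⟩
  rcases hΩ.le_volume_or_subset_ball (by positivity : (0 : ℝ) < 2 ^ k / 16) with hm | hlarge
  · refine h.youngAbs_weightedAverage_sub_le_dyadicOscillation hκ0 hΩ.measurableSet
      (fun y r hr hy => le_trans (le_of_eq ?_) (hm y r hr hy)) hu ha hb hab
    rw [volume_ball_eq x (by positivity), mul_left_comm, ← ENNReal.coe_mul, hκ,
      div_mul_cancel₀ _ hvol.ne', ← ENNReal.ofReal, ← ENNReal.ofReal_mul (by positivity), div_div,
      div_pow]
    congr 1
    norm_num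
    ring
  · rw [ha.weightedAverage_eq_of_subset_ball hb hΩ.measurableSet hlarge, sub_self, h.youngAbs_zero]
    exact zero_le

end Oscillation

section AveragingExtension

variable {E : Type*} [NormedAddCommGroup E] [MeasureSpace E]

/-- The mean of `u` over `B(x, 2^k) ∩ Ω`. -/
noncomputable def dyadicAverage (Ω : Set E) (u : E → ℝ) (x : E) (k : ℤ) : ℝ :=
  ⨍ z in ball x (2 ^ k) ∩ Ω, u z

/-- The extension of `u` from `Ω`: a point `x` outside `Ω` receives a weighted mean of `u` over the
part of `Ω` whose distance to `x` is comparable to that of `Ω`. -/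
noncomputable def averagingExtension (Ω : Set E) (u : E → ℝ) (x : E) : ℝ :=
  if x ∈ Ω then u x else weightedAverage (volume.restrict Ω) (extensionKernel Ω x) u

variable {φ : ℝ → ℝ} {K θ : ℝ} {Ω : Set E} {u : E → ℝ} {x : E}

lemma averagingExtension_of_mem (hx : x ∈ Ω) : averagingExtension Ω u x = u x := if_pos hx

lemma averagingExtension_of_infDist_pos (hx : 0 < infDist x Ω) :
    averagingExtension Ω u x = weightedAverage (volume.restrict Ω) (extensionKernel Ω x) u :=
  if_neg fun hmem => hx.ne' (infDist_zero_of_mem hmem)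

lemma dyadicAverage_eq_weightedAverage [OpensMeasurableSpace E] (k : ℤ) :
    dyadicAverage Ω u x k =
      weightedAverage (volume.restrict Ω) ((ball x (2 ^ k)).indicator 1) u := by
  rw [weightedAverage_indicator_one measurableSet_ball,
    Measure.restrict_restrict measurableSet_ball, dyadicAverage]

lemma measurable_weightedAverage {X Y : Type*} [MeasurableSpace X] [MeasurableSpace Y]
    {μ : Measure Y} [SFinite μ] {a : X → Y → ℝ} {u : Y → ℝ} (hu : Measurable u)
    (ha : Measurable fun p : X × Y => a p.1 p.2) :
    Measurable fun x => weightedAverage μ (a x) u :=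
  ((ha.mul (hu.comp measurable_snd)).stronglyMeasurable.integral_prod_right'
    (ν := μ)).measurable.div (ha.stronglyMeasurable.integral_prod_right' (ν := μ)).measurable

variable [BorelSpace E] [SFinite (volume : Measure E)] [SecondCountableTopology E]

lemma measurable_dyadicAverage (hu : Measurable u) (k : ℤ) :
    Measurable fun x => dyadicAverage Ω u x k := by
  simp only [dyadicAverage_eq_weightedAverage]
  refine measurable_weightedAverage hu ?_
  have hset : MeasurableSet {p : E × E | dist p.2 p.1 < 2 ^ k} :=
    measurableSet_lt (by fun_prop) measurable_const
  exact measurable_one.indicator hset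

lemma measurable_averagingExtension (hΩ : MeasurableSet Ω) (hu : Measurable u) :
    Measurable (averagingExtension Ω u) := by
  refine Measurable.ite hΩ hu (measurable_weightedAverage hu ?_)
  unfold extensionKernel radialCutoff
  fun_prop

end AveragingExtension

section Comparison

variable {E : Type*} [NormedAddCommGroup E] [NormedSpace ℝ E] [FiniteDimensional ℝ E]
  [MeasureSpace E] [BorelSpace E] [(volume : Measure E).IsAddHaarMeasure]
  {φ : ℝ → ℝ} {K θ : ℝ} {Ω : Set E}

lemma IsAhlforsRegularWith.exists_youngAbs_weightedAverage_sub_le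
    (hΩ : IsAhlforsRegularWith θ Ω) (h : IsYoung φ) (hK : IsDoubling φ K) :
    ∃ C : ℝ≥0, ∀ (u : E → ℝ) (x : E) (k : ℤ) (a b : E → ℝ),
      IntegrableOn u (ball x (2 ^ k) ∩ Ω) → IsAveragingKernel Ω x (2 ^ k) a →
      IsAveragingKernel Ω x (2 ^ k) b →
      youngAbs φ (weightedAverage (volume.restrict Ω) a u -
          weightedAverage (volume.restrict Ω) b u) ≤ C * dyadicOscillation φ Ω u x k := by
  obtain ⟨C, M, hCM⟩ := hΩ.exists_youngAbs_weightedAverage_sub_le_of_abs_sub_le h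
  obtain ⟨C', hC'⟩ := h.exists_dyadicOscillation_const_mul_le (E := E) hK (M * 1)
  refine ⟨C * C', fun u x k a b hu ha hb => (hCM u x k a b 1 hu ha hb fun z =>
    (abs_sub_le_of_nonneg_of_le (ha.mem_Icc z).1 (ha.mem_Icc z).2 (hb.mem_Icc z).1
      (hb.mem_Icc z).2)).trans ?_⟩
  rw [ENNReal.coe_mul, mul_assoc]
  gcongr
  exact hC' Ω u x k

lemma IsAhlforsRegularWith.exists_youngAbs_dyadicAverage_sub_le
    (hΩ : IsAhlforsRegularWith θ Ω) (h : IsYoung φ) (hK : IsDoubling φ K) :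
    ∃ C : ℝ≥0, ∀ u : E → ℝ, (∀ x r, IntegrableOn u (ball x r ∩ Ω)) →
      ∀ (x y : E) (k j : ℤ), j = k ∨ j = k + 1 → infDist x Ω ≤ 2 ^ k / 4 →
        infDist y Ω ≤ 2 ^ k / 4 → dist x y ≤ 2 ^ k →
        youngAbs φ (dyadicAverage Ω u x k - dyadicAverage Ω u y j) ≤
          C * dyadicOscillation φ Ω u x (k + 2) := by
  obtain ⟨C, hC⟩ := hΩ.exists_youngAbs_weightedAverage_sub_le h hK
  refine ⟨C, fun u hu x y k j hj hx hy hxy => ?_⟩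
  have hk : (0 : ℝ) < 2 ^ k := by positivity
  have hk2 : (2 : ℝ) ^ (k + 2) = 4 * 2 ^ k := by
    rw [zpow_add₀ two_ne_zero]
    norm_num [mul_comm]
  have hkj : (2 : ℝ) ^ k ≤ 2 ^ j := zpow_le_zpow_right₀ one_le_two (by lia)
  have hjk : (2 : ℝ) ^ j ≤ 2 * 2 ^ k := by
    rw [← zpow_one_add₀ two_ne_zero]
    exact zpow_le_zpow_right₀ one_le_two (by lia)
  rw [dyadicAverage_eq_weightedAverage, dyadicAverage_eq_weightedAverage]
  exact hC u x (k + 2) _ _ (hu _ _)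
    (isAveragingKernel_indicator_ball (by rw [dist_self]; linarith) (by linarith) (by linarith))
    (isAveragingKernel_indicator_ball (by rw [dist_comm]; linarith) (by linarith) (by linarith))

lemma IsAhlforsRegularWith.exists_youngAbs_averagingExtension_sub_dyadicAverage_le
    (hΩ : IsAhlforsRegularWith θ Ω) (h : IsYoung φ) (hK : IsDoubling φ K) :
    ∃ C : ℝ≥0, ∀ u : E → ℝ, (∀ x r, IntegrableOn u (ball x r ∩ Ω)) →
      ∀ (x : E) (k : ℤ), 0 < infDist x Ω → 4 * infDist x Ω ≤ 2 ^ k → 2 ^ k ≤ 16 * infDist x Ω →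
        youngAbs φ (averagingExtension Ω u x - dyadicAverage Ω u x k) ≤
          C * dyadicOscillation φ Ω u x k := by
  obtain ⟨C, hC⟩ := hΩ.exists_youngAbs_weightedAverage_sub_le h hK
  refine ⟨C, fun u hu x k hx hk hk' => ?_⟩
  rw [averagingExtension_of_infDist_pos hx, dyadicAverage_eq_weightedAverage]
  exact hC u x k _ _ (hu _ _)
    (isAveragingKernel_extensionKernel hx (by rw [dist_self]; linarith) (by linarith))
    (isAveragingKernel_indicator_ball (by rw [dist_self, zero_add]) (by linarith) (by linarith))

lemma IsAhlforsRegularWith.exists_youngAbs_averagingExtension_sub_le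
    (hΩ : IsAhlforsRegularWith θ Ω) (h : IsYoung φ) :
    ∃ (C : ℝ≥0) (M : ℝ), ∀ u : E → ℝ, (∀ x r, IntegrableOn u (ball x r ∩ Ω)) →
      ∀ (x y : E) (k : ℤ), 0 < infDist x Ω → dist x y ≤ infDist x Ω / 2 →
        8 * infDist x Ω ≤ 2 ^ k → 2 ^ k ≤ 16 * infDist x Ω →
        youngAbs φ (averagingExtension Ω u x - averagingExtension Ω u y) ≤
          C * dyadicOscillation φ Ω (fun z => M * (dist x y / infDist x Ω) * u z) x k := by
  obtain ⟨C, M, hCM⟩ := hΩ.exists_youngAbs_weightedAverage_sub_le_of_abs_sub_le h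
  refine ⟨C, M * 14, fun u hu x y k hx hxy hk hk' => ?_⟩
  have hy : infDist x Ω / 2 ≤ infDist y Ω := by
    linarith [infDist_le_infDist_add_dist (s := Ω) (x := x) (y := y)]
  have hy' : infDist y Ω ≤ 3 / 2 * infDist x Ω := by
    linarith [infDist_le_infDist_add_dist (s := Ω) (x := y) (y := x), dist_comm x y]
  rw [averagingExtension_of_infDist_pos hx, averagingExtension_of_infDist_pos (by linarith)]
  refine (hCM u x k _ _ _ (hu _ _)
    (isAveragingKernel_extensionKernel hx (by rw [dist_self]; linarith) (by linarith))
    (isAveragingKernel_extensionKernel (by linarith) (by rw [dist_comm]; linarith) (by linarith))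
    (abs_extensionKernel_sub_le hx hxy)).trans_eq ?_
  simp only [mul_assoc]

end Comparison

/-! ### Sums over dyadic scales -/

section BallIntegrals

variable {X Y : Type*} [PseudoMetricSpace X] [MeasurableSpace X] [OpensMeasurableSpace X]
  {μ : Measure X} {Ω : Set X}

lemma setLIntegral_ball_inter (x : X) (r : ℝ) (f : X → ℝ≥0∞) :
    ∫⁻ z in ball x r ∩ Ω, f z ∂μ = ∫⁻ z in Ω, (ball x r).indicator f z ∂μ := by
  rw [lintegral_indicator measurableSet_ball, Measure.restrict_restrict measurableSet_ball]

variable [SecondCountableTopology X] [SFinite μ] {f : Y → X → ℝ≥0∞} {c : Y → X}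

lemma measurable_indicator_ball [MeasurableSpace Y] (hf : Measurable (Function.uncurry f))
    (hc : Measurable c) (r : ℝ) :
    Measurable fun p : Y × X => (ball (c p.1) r).indicator (f p.1) p.2 := by
  have hset : MeasurableSet {p : Y × X | dist p.2 (c p.1) < r} :=
    measurableSet_lt (measurable_snd.dist (hc.comp measurable_fst)) measurable_const
  exact hf.indicator hset

lemma measurable_setLIntegral_ball_inter [MeasurableSpace Y]
    (hf : Measurable (Function.uncurry f)) (hc : Measurable c) (r : ℝ) :
    Measurable fun y => ∫⁻ w in ball (c y) r ∩ Ω, f y w ∂μ := by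
  simp only [setLIntegral_ball_inter]
  exact (measurable_indicator_ball hf hc r).lintegral_prod_right'

lemma lintegral_setLIntegral_ball_inter {ν : Measure X} [SFinite ν] {f : X → ℝ≥0∞}
    (hf : Measurable f) (r : ℝ) :
    ∫⁻ x, ∫⁻ z in ball x r ∩ Ω, f z ∂μ ∂ν = ∫⁻ z in Ω, f z * ν (ball z r) ∂μ := by
  simp only [setLIntegral_ball_inter]
  have hf' : Measurable (Function.uncurry fun _ : X => f) := hf.comp measurable_snd
  rw [lintegral_lintegral_swap (measurable_indicator_ball hf' measurable_id r).aemeasurable]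
  congr 1 with z
  rw [← setLIntegral_const, ← lintegral_indicator measurableSet_ball]
  simp only [indicator_apply, mem_ball, dist_comm z]

lemma exists_tsum_dyadicKernel_mul_setLIntegral_le {X : Type*} [MetricSpace X] [MeasurableSpace X]
    [OpensMeasurableSpace X] {s : ℝ} (hs : 0 < s) :
    ∃ C : ℝ≥0, ∀ (μ : Measure X) (Ω : Set X) (x : X) (f : X → ℝ≥0∞), Measurable f → f x = 0 →
      ∑' k : ℤ, dyadicKernel s k * ∫⁻ z in ball x (2 ^ k) ∩ Ω, f z ∂μ ≤
        C * ∫⁻ z in Ω, rpowKernel s (dist x z) * f z ∂μ := by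
  obtain ⟨C, hC⟩ := exists_tsum_dyadicKernel_le hs
  refine ⟨C, fun μ Ω x f hf hfx => ?_⟩
  simp only [setLIntegral_ball_inter, ← lintegral_const_mul' _ _ (dyadicKernel_ne_top _)]
  rw [← lintegral_tsum fun k => ((hf.indicator measurableSet_ball).const_mul _).aemeasurable,
    ← lintegral_const_mul' _ _ ENNReal.coe_ne_top]
  refine lintegral_mono fun z => ?_
  rcases eq_or_ne x z with rfl | hxz
  · simp [hfx, indicator]
  calc ∑' k : ℤ, dyadicKernel s k * (ball x (2 ^ k)).indicator f z
      = (∑' k : ℤ, if dist x z < 2 ^ k then dyadicKernel s k else 0) * f z := by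
        rw [← ENNReal.tsum_mul_right]
        simp only [indicator_apply, mem_ball', mul_ite, mul_zero, ite_mul, zero_mul]
    _ ≤ C * (rpowKernel s (dist x z) * f z) := by
        rw [← mul_assoc]
        gcongr
        exact hC _ (dist_pos.2 hxz)

end BallIntegrals

section Scales

variable {E : Type*} [NormedAddCommGroup E] [NormedSpace ℝ E] [MeasureSpace E] {β θ : ℝ} {φ : ℝ → ℝ}
  {Ω : Set E} {u : E → ℝ}

lemma IsAhlforsRegularWith.le_volume_ball_dist (hΩ : IsAhlforsRegularWith θ Ω) {x z : E}
    (hx : x ∈ Ω) (hz : z ∈ Ω) (hxz : x ≠ z) :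
    ENNReal.ofReal (θ * dist x z ^ finrank ℝ E) ≤ volume (ball x (dist x z) ∩ Ω) := by
  refine hΩ.le_volume x hx _ (dist_pos.2 hxz) ?_
  rw [← edist_dist]
  calc edist x z < edist x z + edist x z :=
        ENNReal.lt_add_right (edist_ne_top _ _) (edist_pos.2 hxz).ne'
    _ ≤ 2 * ediam Ω := by
        rw [← two_mul]
        gcongr
        exact edist_le_ediam_of_mem hx hz

lemma IsAhlforsRegularWith.inv_volume_ball_dist_inter_le (hΩ : IsAhlforsRegularWith θ Ω) {x z : E}
    (hx : x ∈ Ω) (hz : z ∈ Ω) (hxz : x ≠ z) :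
    (volume (ball x (dist x z) ∩ Ω))⁻¹ ≤ θ.toNNReal⁻¹ * rpowKernel (finrank ℝ E) (dist x z) := by
  have hθ := hΩ.pos
  refine (ENNReal.inv_le_inv.2 (hΩ.le_volume_ball_dist hx hz hxz)).trans_eq ?_
  rw [ENNReal.ofReal_mul hθ.le, ENNReal.mul_inv (by simp [hθ]) (by simp),
    ENNReal.coe_inv (by simpa using hθ)]
  congr 1
  exact (ENNReal.eq_inv_of_mul_eq_one_left
    (rpowKernel_natCast_mul_ofReal_pow (dist_pos.2 hxz) _)).symm

lemma IsYoung.measurable_youngAbs_sub {X : Type*} [MeasurableSpace X] {u : X → ℝ} (h : IsYoung φ)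
    (hu : Measurable u) :
    Measurable (Function.uncurry fun x y => youngAbs φ (u x - u y)) :=
  h.measurable_youngAbs.comp ((hu.comp measurable_fst).sub (hu.comp measurable_snd))

lemma IsYoung.youngAbs_sub_dyadicAverage_le {E : Type*} [NormedAddCommGroup E] [MeasureSpace E]
    {Ω : Set E} {u : E → ℝ} (h : IsYoung φ) {x : E} {k : ℤ}
    (hu : IntegrableOn u (ball x (2 ^ k) ∩ Ω)) (hpos : 0 < volume (ball x (2 ^ k) ∩ Ω))
    (hfin : volume (ball x (2 ^ k) ∩ Ω) ≠ ∞) :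
    youngAbs φ (u x - dyadicAverage Ω u x k) ≤ (volume (ball x (2 ^ k) ∩ Ω))⁻¹ *
      ∫⁻ z in ball x (2 ^ k) ∩ Ω, youngAbs φ (u x - u z) := by
  have hne : volume.restrict (ball x (2 ^ k) ∩ Ω) ≠ 0 := by simpa using hpos.ne'
  have : IsFiniteMeasure (volume.restrict (ball x (2 ^ k) ∩ Ω)) := isFiniteMeasure_restrict.2 hfin
  have : NeZero (volume.restrict (ball x (2 ^ k) ∩ Ω)) := ⟨hne⟩
  have hsub : u x - dyadicAverage Ω u x k = ⨍ z in ball x (2 ^ k) ∩ Ω, (u x - u z) := by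
    have hint := integral_sub (integrable_const (u x)) (hu.smul_measure (c := (volume.restrict
      (ball x (2 ^ k) ∩ Ω) univ)⁻¹) (by simpa using hpos.ne'))
    rw [average, hint, dyadicAverage]
    exact congrArg (· - _) (average_const _ _).symm
  rw [hsub]
  simpa using h.youngAbs_average_le hne ((integrable_const (u x)).sub hu)

variable [FiniteDimensional ℝ E] [BorelSpace E] [(volume : Measure E).IsAddHaarMeasure]

lemma IsYoung.measurable_dyadicOscillation (h : IsYoung φ) (hu : Measurable u) (k : ℤ) :
    Measurable fun x => dyadicOscillation φ Ω u x k := by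
  have hinner : Measurable (Function.uncurry fun x z : E =>
      ∫⁻ w in ball x (2 ^ k) ∩ Ω, youngAbs φ (u z - u w)) :=
    measurable_setLIntegral_ball_inter (f := fun (p : E × E) w => youngAbs φ (u p.2 - u w))
      ((h.measurable_youngAbs_sub hu).comp
        ((measurable_snd.comp measurable_fst).prodMk measurable_snd)) measurable_fst _
  exact (measurable_setLIntegral_ball_inter hinner measurable_id _).const_mul _

lemma IsYoung.lintegral_dyadicOscillation_le (h : IsYoung φ) (hu : Measurable u) (k : ℤ) :
    ∫⁻ x, dyadicOscillation φ Ω u x k ≤ unitBallVol E * (dyadicKernel (finrank ℝ E) k *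
      ∫⁻ z in Ω, ∫⁻ w in ball z (2 ^ (k + 1)) ∩ Ω, youngAbs φ (u z - u w)) := by
  set d : ℝ := (finrank ℝ E : ℝ)
  set g : E → ℝ≥0∞ := fun z => ∫⁻ w in ball z (2 ^ (k + 1)) ∩ Ω, youngAbs φ (u z - u w)
  have hgm : Measurable g :=
    measurable_setLIntegral_ball_inter (h.measurable_youngAbs_sub hu) measurable_id _
  have hsub : ∀ x : E, ∀ z ∈ ball x (2 ^ k : ℝ), ball x (2 ^ k) ⊆ ball z (2 ^ (k + 1)) := by
    intro x z hz
    refine ball_subset_ball' ?_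
    rw [zpow_add_one₀ two_ne_zero]
    linarith [mem_ball'.1 hz]
  calc ∫⁻ x, dyadicOscillation φ Ω u x k
      ≤ ∫⁻ x, dyadicKernel d k * dyadicKernel d k * ∫⁻ z in ball x (2 ^ k) ∩ Ω, g z := by
        refine lintegral_mono fun x => mul_le_mul_right ?_ _
        rw [setLIntegral_ball_inter, setLIntegral_ball_inter]
        refine lintegral_mono fun z => indicator_le_indicator' fun hz => ?_
        exact lintegral_mono_set (inter_subset_inter_left Ω (hsub x z hz))
    _ = dyadicKernel d k * dyadicKernel d k * ∫⁻ z in Ω, g z * volume (ball z (2 ^ k)) := by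
        rw [lintegral_const_mul' _ _ (ENNReal.mul_ne_top (dyadicKernel_ne_top _)
          (dyadicKernel_ne_top _)), lintegral_setLIntegral_ball_inter hgm]
    _ = (dyadicKernel d k * ENNReal.ofReal ((2 ^ k) ^ finrank ℝ E)) *
          (unitBallVol E * (dyadicKernel d k * ∫⁻ z in Ω, g z)) := by
        simp only [volume_ball_eq _ (show (0 : ℝ) < 2 ^ k by positivity)]
        rw [lintegral_mul_const _ hgm]
        ring
    _ = unitBallVol E * (dyadicKernel d k * ∫⁻ z in Ω, g z) := by
        rw [dyadicKernel, rpowKernel_natCast_mul_ofReal_pow (by positivity), one_mul]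

variable (E) in
lemma IsYoung.exists_lintegral_tsum_dyadicOscillation_le (h : IsYoung φ) (hβ : 0 < β) :
    ∃ C : ℝ≥0, ∀ (Ω : Set E) (u : E → ℝ), Measurable u →
      ∫⁻ x, ∑' k : ℤ, dyadicKernel β k * dyadicOscillation φ Ω u x k ≤
        C * fracModular β φ Ω u := by
  set s : ℝ := finrank ℝ E + β with hs
  obtain ⟨C, hC⟩ := exists_tsum_dyadicKernel_mul_setLIntegral_le (X := E)
    (show 0 < s by positivity)
  refine ⟨unitBallVol E * (dyadicKernel s (-1)).toNNReal * C, fun Ω u hu => ?_⟩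
  set G : ℤ → E → ℝ≥0∞ := fun k z => ∫⁻ w in ball z (2 ^ k) ∩ Ω, youngAbs φ (u z - u w)
  have hG : ∀ k, Measurable (G k) := fun k =>
    measurable_setLIntegral_ball_inter (h.measurable_youngAbs_sub hu) measurable_id _
  have hscale : ∀ k : ℤ, ∫⁻ x, dyadicKernel β k * dyadicOscillation φ Ω u x k ≤
      unitBallVol E * dyadicKernel s (-1) * ∫⁻ z in Ω, dyadicKernel s (k + 1) * G (k + 1) z := by
    intro k
    rw [lintegral_const_mul' _ _ (dyadicKernel_ne_top _),
      lintegral_const_mul' _ _ (dyadicKernel_ne_top _)]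
    refine (mul_le_mul_right (h.lintegral_dyadicOscillation_le hu k) _).trans_eq ?_
    have hshift : dyadicKernel s k = dyadicKernel s (-1) * dyadicKernel s (k + 1) := by
      rw [← dyadicKernel_add, neg_add_cancel_comm_assoc]
    rw [mul_assoc, ← mul_assoc (dyadicKernel s (-1)), ← hshift, hs, dyadicKernel_exponent_add]
    ring
  calc ∫⁻ x, ∑' k : ℤ, dyadicKernel β k * dyadicOscillation φ Ω u x k
      = ∑' k : ℤ, ∫⁻ x, dyadicKernel β k * dyadicOscillation φ Ω u x k :=
        lintegral_tsum fun k => ((h.measurable_dyadicOscillation hu k).const_mul _).aemeasurable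
    _ ≤ ∑' k : ℤ, unitBallVol E * dyadicKernel s (-1) *
          ∫⁻ z in Ω, dyadicKernel s (k + 1) * G (k + 1) z := ENNReal.tsum_le_tsum hscale
    _ = unitBallVol E * dyadicKernel s (-1) * ∫⁻ z in Ω, ∑' k : ℤ, dyadicKernel s k * G k z := by
        rw [ENNReal.tsum_mul_left, lintegral_tsum fun k => ((hG k).const_mul _).aemeasurable]
        congr 1
        exact (Equiv.addRight (1 : ℤ)).tsum_eq fun k => ∫⁻ z in Ω, dyadicKernel s k * G k z
    _ ≤ unitBallVol E * dyadicKernel s (-1) * ∫⁻ z in Ω, C * ∫⁻ w in Ω,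
          rpowKernel s (dist z w) * youngAbs φ (u z - u w) := by
        gcongr with z
        exact hC _ Ω z _ (h.measurable_youngAbs_sub hu).of_uncurry_left
          (by rw [sub_self, h.youngAbs_zero])
    _ = _ := by
        rw [lintegral_const_mul' _ _ ENNReal.coe_ne_top]
        simp only [fracModular, mul_comm (rpowKernel _ _)]
        push_cast
        rw [ENNReal.coe_toNNReal (dyadicKernel_ne_top _), mul_assoc _ (C : ℝ≥0∞)]

lemma IsAhlforsRegularWith.youngAbs_sub_dyadicAverage_le (hΩ : IsAhlforsRegularWith θ Ω)
    (h : IsYoung φ) {x : E} (hx : x ∈ Ω) (k : ℤ) (hu : IntegrableOn u (ball x (2 ^ k) ∩ Ω)) :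
    youngAbs φ (u x - dyadicAverage Ω u x k) ≤ ∫⁻ z in ball x (2 ^ k) ∩ Ω,
      θ.toNNReal⁻¹ * rpowKernel (finrank ℝ E) (dist x z) * youngAbs φ (u x - u z) := by
  have hpos := hΩ.volume_ball_inter_pos hx (r := 2 ^ k) (by positivity)
  refine (h.youngAbs_sub_dyadicAverage_le hu hpos
    (measure_ne_top_of_subset inter_subset_left measure_ball_lt_top.ne)).trans ?_
  rw [← lintegral_const_mul' _ _ (ENNReal.inv_ne_top.2 hpos.ne')]
  refine setLIntegral_mono' (measurableSet_ball.inter hΩ.measurableSet) fun z hz => ?_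
  rcases eq_or_ne x z with rfl | hxz
  · simp [h.youngAbs_zero]
  refine mul_le_mul_left (le_trans (ENNReal.inv_le_inv.2 ?_)
    (hΩ.inv_volume_ball_dist_inter_le hx hz.2 hxz)) _
  exact measure_mono (inter_subset_inter_left Ω (ball_subset_ball (mem_ball'.1 hz.1).le))

lemma IsAhlforsRegularWith.exists_lintegral_tsum_sub_dyadicAverage_le
    (hΩ : IsAhlforsRegularWith θ Ω) (h : IsYoung φ) (hβ : 0 < β) :
    ∃ C : ℝ≥0, ∀ u : E → ℝ, Measurable u → (∀ x r, IntegrableOn u (ball x r ∩ Ω)) →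
      ∫⁻ x in Ω, ∑' k : ℤ, dyadicKernel β k * youngAbs φ (u x - dyadicAverage Ω u x k) ≤
        C * fracModular β φ Ω u := by
  obtain ⟨C, hC⟩ := exists_tsum_dyadicKernel_mul_setLIntegral_le (X := E) hβ
  refine ⟨C * θ.toNNReal⁻¹, fun u hum hui => ?_⟩
  rw [fracModular, ← lintegral_const_mul' _ _ ENNReal.coe_ne_top]
  refine setLIntegral_mono' hΩ.measurableSet fun x hx => ?_
  set f : E → ℝ≥0∞ := fun z =>
    θ.toNNReal⁻¹ * rpowKernel (finrank ℝ E) (dist x z) * youngAbs φ (u x - u z)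
  have hfm : Measurable f :=
    ((measurable_rpowKernel.comp (measurable_const.dist measurable_id)).const_mul _).mul
      (h.measurable_youngAbs_sub hum).of_uncurry_left
  calc ∑' k : ℤ, dyadicKernel β k * youngAbs φ (u x - dyadicAverage Ω u x k)
      ≤ ∑' k : ℤ, dyadicKernel β k * ∫⁻ z in ball x (2 ^ k) ∩ Ω, f z := by
        gcongr with k
        exact hΩ.youngAbs_sub_dyadicAverage_le h hx k (hui _ _)
    _ ≤ C * ∫⁻ z in Ω, rpowKernel β (dist x z) * f z :=
        hC volume Ω x f hfm (by simp [f, h.youngAbs_zero])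
    _ = (C * θ.toNNReal⁻¹ : ℝ≥0) * ∫⁻ z in Ω,
          youngAbs φ (u x - u z) * rpowKernel (finrank ℝ E + β) (dist x z) := by
        rw [ENNReal.coe_mul, mul_assoc]
        congr 1
        rw [← lintegral_const_mul' _ _ ENNReal.coe_ne_top]
        refine lintegral_congr fun z => ?_
        rcases eq_or_ne x z with rfl | hxz
        · simp [f, h.youngAbs_zero]
        rw [rpowKernel_add (dist_pos.2 hxz)]
        simp only [f]
        ring

end Scales

section Telescoping

variable {β K : ℝ} {φ : ℝ → ℝ}

lemma exists_one_lt_dyadicKernel_one_mul_eq_coe (hβ : 0 < β) :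
    ∃ t q : ℝ≥0, 1 < t ∧ q < 1 ∧ dyadicKernel β 1 * t = q := by
  set q : ℝ≥0 := (rpowKernel (β / 2) 2).toNNReal with hq
  have hq0 : 0 < q := ENNReal.toNNReal_pos (rpowKernel_ne_zero two_pos) rpowKernel_ne_top
  have hq1 : q < 1 := by
    rw [← ENNReal.coe_lt_coe, hq, ENNReal.coe_toNNReal rpowKernel_ne_top]
    exact rpowKernel_lt_one (by positivity) one_lt_two
  have hsq : dyadicKernel β 1 = q * q := by
    rw [hq, ENNReal.coe_toNNReal rpowKernel_ne_top, ← rpowKernel_add two_pos, add_halves,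
      dyadicKernel, zpow_one]
  refine ⟨q⁻¹, q, (one_lt_inv₀ hq0).2 hq1, hq1, ?_⟩
  rw [hsq, mul_assoc, ← ENNReal.coe_mul, mul_inv_cancel₀ hq0.ne', ENNReal.coe_one, mul_one]

lemma dyadicKernel_add_one_mul_le {t q : ℝ≥0} (htq : dyadicKernel β 1 * t = q) (k : ℤ)
    {a b c d : ℝ≥0∞} (hb : b ≤ t * a + c * d) :
    dyadicKernel β (k + 1) * b ≤
      q * (dyadicKernel β k * a) + c * (dyadicKernel β (k + 1) * d) := by
  calc dyadicKernel β (k + 1) * b ≤ dyadicKernel β (k + 1) * (t * a + c * d) := by gcongr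
    _ = dyadicKernel β 1 * t * (dyadicKernel β k * a) + c * (dyadicKernel β (k + 1) * d) := by
        rw [dyadicKernel_add]
        ring
    _ = _ := by rw [htq]

/-- The constant of the quasi-triangle inequality can be taken so close to `1` that the decay of
`dyadicKernel β` compensates it. -/
lemma IsYoung.exists_tsum_dyadicKernel_mul_youngAbs_sub_le (h : IsYoung φ) (hK : IsDoubling φ K)
    (hβ : 0 < β) :
    ∃ C : ℝ≥0, ∀ (c : ℝ) (a : ℤ → ℝ) (g : ℤ → ℝ≥0∞) (m : ℤ), youngAbs φ (c - a m) ≤ g m →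
      (∀ k, m ≤ k → youngAbs φ (a k - a (k + 1)) ≤ g (k + 2)) →
      ∑' j : ℕ, dyadicKernel β (m + j) * youngAbs φ (c - a (m + j)) ≤
        C * ∑' k : ℤ, dyadicKernel β k * g k := by
  obtain ⟨t, q, ht, hq, htq⟩ := exists_one_lt_dyadicKernel_one_mul_eq_coe hβ
  obtain ⟨A, hA⟩ := h.exists_youngAbs_add_le_mul_add hK ht
  obtain ⟨B, hB⟩ := exists_tsum_le_of_le_mul_add hq
  refine ⟨B * (1 + A * (dyadicKernel β (-1)).toNNReal), fun c a g m h0 hstep => ?_⟩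
  set G : ℤ → ℝ≥0∞ := fun k => dyadicKernel β k * g k
  have hsum : ∀ i : ℤ, ∑' j : ℕ, G (m + j + i) ≤ ∑' k, G k := fun i =>
    ENNReal.tsum_comp_le_tsum_of_injective (f := fun j : ℕ => m + j + i) (fun j j' => by simp) G
  have hshift : ∀ k, dyadicKernel β k * g (k + 1) = dyadicKernel β (-1) * G (k + 1) := by
    intro k
    rw [← mul_assoc, ← dyadicKernel_add, neg_add_cancel_comm_assoc]
  calc ∑' j : ℕ, dyadicKernel β (m + j) * youngAbs φ (c - a (m + j))
      ≤ B * ∑' j : ℕ, (G (m + j) + A * dyadicKernel β (-1) * G (m + j + 1)) := by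
        refine hB _ _ ?_ fun j => ?_
        · simpa [G] using le_add_right (mul_le_mul_right h0 _)
        have htri := hA (c - a (m + j)) (a (m + j) - a (m + j + 1))
        rw [sub_add_sub_cancel] at htri
        simp only [Nat.cast_add_one, ← add_assoc, mul_assoc (A : ℝ≥0∞), ← hshift]
        refine (dyadicKernel_add_one_mul_le htq _ (htri.trans (add_le_add_right
          (mul_le_mul_right (hstep _ (by omega)) _) _))).trans ?_
        rw [add_assoc _ 1 1, one_add_one_eq_two]
        gcongr
        exact le_self_add
    _ ≤ B * (∑' k, G k + A * dyadicKernel β (-1) * ∑' k, G k) := by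
        rw [ENNReal.tsum_add, ENNReal.tsum_mul_left]
        gcongr
        · simpa using hsum 0
        · exact hsum 1
    _ = _ := by
        push_cast
        rw [ENNReal.coe_toNNReal (dyadicKernel_ne_top _)]
        ring

end Telescoping

section ExtensionError

variable {E : Type*} [NormedAddCommGroup E] [NormedSpace ℝ E] [MeasureSpace E] [BorelSpace E]
  [FiniteDimensional ℝ E] [(volume : Measure E).IsAddHaarMeasure]
  {β K θ : ℝ} {φ : ℝ → ℝ} {Ω : Set E} {u : E → ℝ}

lemma IsAhlforsRegularWith.eventually_le_volume_div (hΩ : IsAhlforsRegularWith θ Ω) {x : E}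
    (hxΩ : x ∉ Ω) (hx : infDist x Ω = 0) :
    ∀ᶠ r in 𝓝[>] (0 : ℝ), ENNReal.ofReal (θ / 4 ^ finrank ℝ E) / unitBallVol E ≤
      volume (Ω ∩ closedBall x r) / volume (closedBall x r) := by
  obtain ⟨z, hz⟩ := hΩ.nonempty
  have hne : z ≠ x := fun heq => hxΩ (heq ▸ hz)
  have hzx : 0 < dist z x := dist_pos.2 hne
  have := hΩ.pos
  have : Nontrivial E := ⟨z, x, hne⟩
  filter_upwards [Ioo_mem_nhdsGT hzx] with r ⟨hr0, hr⟩
  have hlow := (hΩ.le_volume_or_subset_ball hr0).resolve_right fun hsub =>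
    hr.not_ge (mem_ball.1 (hsub x r le_rfl (hx ▸ by positivity) hz)).le
  have hvol : volume (closedBall x r) = ENNReal.ofReal (r ^ finrank ℝ E) * unitBallVol E := by
    rw [Measure.addHaar_closedBall_eq_addHaar_ball, volume_ball_eq x hr0]
  have hball : volume (ball x r ∩ Ω) ≤ volume (Ω ∩ closedBall x r) := by
    rw [inter_comm]
    exact measure_mono (inter_subset_inter_right _ ball_subset_closedBall)
  rw [ENNReal.le_div_iff_mul_le (.inl (measure_closedBall_pos _ _ hr0).ne')
    (.inl measure_closedBall_lt_top.ne)]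
  refine le_trans (le_of_eq ?_) ((hlow x r le_rfl (hx ▸ by positivity)).trans hball)
  rw [hvol, mul_comm (ENNReal.ofReal (r ^ _)), ← mul_assoc, ENNReal.div_mul_cancel
    (by exact_mod_cast unitBallVol_pos.ne') ENNReal.coe_ne_top, mul_comm,
    ← ENNReal.ofReal_mul (by positivity), div_pow, mul_div_left_comm]

lemma IsAhlforsRegularWith.ae_infDist_pos (hΩ : IsAhlforsRegularWith θ Ω) :
    ∀ᵐ x : E, x ∉ Ω → 0 < infDist x Ω := by
  filter_upwards [Besicovitch.ae_tendsto_measure_inter_div_of_measurableSet volume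
    hΩ.measurableSet] with x hx hxΩ
  rw [indicator_of_notMem hxΩ] at hx
  refine infDist_nonneg.lt_of_ne' fun h0 => ?_
  have hθ := hΩ.pos
  have hle := ge_of_tendsto hx (hΩ.eventually_le_volume_div hxΩ h0)
  exact (ENNReal.div_pos (by positivity) ENNReal.coe_ne_top).not_ge hle

/-- The error made in replacing the extension of `u` at `x` by the mean of `u` at scale `2 ^ k`. It
is set to zero below the distance from `x` to `Ω`, where that mean is not available. -/
noncomputable def extensionError (φ : ℝ → ℝ) (Ω : Set E) (u : E → ℝ) (x : E) (k : ℤ) : ℝ≥0∞ :=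
  if 4 * infDist x Ω ≤ 2 ^ k then youngAbs φ (averagingExtension Ω u x - dyadicAverage Ω u x k)
  else 0

lemma IsYoung.measurable_extensionError (h : IsYoung φ) (hΩ : MeasurableSet Ω) (hu : Measurable u)
    (k : ℤ) : Measurable fun x => extensionError φ Ω u x k :=
  Measurable.ite (measurableSet_le (measurable_infDist.const_mul 4) measurable_const)
    (h.measurable_youngAbs.comp
      ((measurable_averagingExtension hΩ hu).sub (measurable_dyadicAverage hu k)))
    measurable_const

lemma IsAhlforsRegularWith.exists_tsum_extensionError_le (hΩ : IsAhlforsRegularWith θ Ω)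
    (h : IsYoung φ) (hK : IsDoubling φ K) (hβ : 0 < β) :
    ∃ C : ℝ≥0, ∀ u : E → ℝ, (∀ x r, IntegrableOn u (ball x r ∩ Ω)) → ∀ x, 0 < infDist x Ω →
      ∑' k : ℤ, dyadicKernel β k * extensionError φ Ω u x k ≤
        C * ∑' k : ℤ, dyadicKernel β k * dyadicOscillation φ Ω u x k := by
  obtain ⟨C₁, hC₁⟩ := hΩ.exists_youngAbs_averagingExtension_sub_dyadicAverage_le h hK
  obtain ⟨C₂, hC₂⟩ := hΩ.exists_youngAbs_dyadicAverage_sub_le h hK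
  obtain ⟨C₃, hC₃⟩ := h.exists_tsum_dyadicKernel_mul_youngAbs_sub_le hK hβ
  refine ⟨C₃ * (C₁ + C₂), fun u hu x hx => ?_⟩
  obtain ⟨k₀, hk₀, hk₁⟩ := exists_mem_Ioc_zpow (by positivity : 0 < 4 * infDist x Ω)
    (one_lt_two (α := ℝ))
  have hlarge : ∀ k, k₀ + 1 ≤ k → 4 * infDist x Ω ≤ 2 ^ k := fun k hk =>
    hk₁.trans (zpow_le_zpow_right₀ one_le_two hk)
  have hinj : Function.Injective fun j : ℕ => k₀ + 1 + (j : ℤ) := fun i j => by simp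
  have hsupp : Function.support (fun k => dyadicKernel β k * extensionError φ Ω u x k) ⊆
      range fun j : ℕ => k₀ + 1 + (j : ℤ) := by
    refine Function.support_subset_iff'.2 fun k hk => ?_
    have hk' : k ≤ k₀ := by
      by_contra! hlt
      exact hk ⟨(k - (k₀ + 1)).toNat, by dsimp only; omega⟩
    have hsmall : ¬ 4 * infDist x Ω ≤ 2 ^ k :=
      ((zpow_le_zpow_right₀ one_le_two hk').trans_lt hk₀).not_ge
    rw [extensionError, if_neg hsmall, mul_zero]
  calc ∑' k : ℤ, dyadicKernel β k * extensionError φ Ω u x k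
      = ∑' j : ℕ, dyadicKernel β (k₀ + 1 + j) *
          youngAbs φ (averagingExtension Ω u x - dyadicAverage Ω u x (k₀ + 1 + j)) := by
        rw [← hinj.tsum_eq hsupp]
        exact tsum_congr fun j => by rw [extensionError, if_pos (hlarge _ (by omega))]
    _ ≤ C₃ * ∑' k : ℤ, dyadicKernel β k * ((C₁ + C₂) * dyadicOscillation φ Ω u x k) := by
        refine hC₃ _ _ _ _ ?_ fun k hk => ?_
        · refine (hC₁ u hu x _ hx hk₁ ?_).trans (mul_le_mul_left le_self_add _)
          rw [zpow_add_one₀ two_ne_zero]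
          linarith
        · have hk' := hlarge k hk
          refine (hC₂ u hu x x k (k + 1) (.inr rfl) (by linarith) (by linarith)
            (by rw [dist_self]; positivity)).trans (mul_le_mul_left le_add_self _)
    _ = _ := by
        simp only [mul_left_comm _ ((C₁ : ℝ≥0∞) + C₂), ENNReal.tsum_mul_left]
        push_cast
        ring

lemma IsAhlforsRegularWith.exists_lintegral_tsum_extensionError_le
    (hΩ : IsAhlforsRegularWith θ Ω) (h : IsYoung φ) (hK : IsDoubling φ K) (hβ : 0 < β) :
    ∃ C : ℝ≥0, ∀ u : E → ℝ, Measurable u → (∀ x r, IntegrableOn u (ball x r ∩ Ω)) →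
      ∫⁻ x, ∑' k : ℤ, dyadicKernel β k * extensionError φ Ω u x k ≤ C * fracModular β φ Ω u := by
  obtain ⟨C₁, hC₁⟩ := hΩ.exists_lintegral_tsum_sub_dyadicAverage_le h hβ
  obtain ⟨C₂, hC₂⟩ := hΩ.exists_tsum_extensionError_le h hK hβ
  obtain ⟨C₃, hC₃⟩ := h.exists_lintegral_tsum_dyadicOscillation_le E hβ
  refine ⟨C₁ + C₂ * C₃, fun u hum hui => ?_⟩
  rw [← lintegral_add_compl _ hΩ.measurableSet, ENNReal.coe_add, add_mul]
  refine add_le_add ((setLIntegral_mono' hΩ.measurableSet fun x hx =>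
    ENNReal.tsum_le_tsum fun k => mul_le_mul_right ?_ _).trans (hC₁ u hum hui)) ?_
  · rw [extensionError, averagingExtension_of_mem hx]
    split_ifs
    · exact le_rfl
    · exact zero_le
  · calc ∫⁻ x in Ωᶜ, ∑' k : ℤ, dyadicKernel β k * extensionError φ Ω u x k
        ≤ ∫⁻ x in Ωᶜ, C₂ * ∑' k : ℤ, dyadicKernel β k * dyadicOscillation φ Ω u x k := by
          refine lintegral_mono_ae ((ae_restrict_iff' hΩ.measurableSet.compl).2 ?_)
          filter_upwards [hΩ.ae_infDist_pos] with x hx hxΩ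
          exact hC₂ u hui x (hx hxΩ)
      _ ≤ C₂ * ∫⁻ x, ∑' k : ℤ, dyadicKernel β k * dyadicOscillation φ Ω u x k := by
          rw [lintegral_const_mul' _ _ ENNReal.coe_ne_top]
          exact mul_le_mul_right (setLIntegral_le_lintegral _ _) _
      _ ≤ _ := by
          rw [ENNReal.coe_mul, mul_assoc]
          exact mul_le_mul_right (hC₃ Ω u hum) _

end ExtensionError

/-! ### Boundedness of the extension -/

section Near

variable {E : Type*} [NormedAddCommGroup E] [NormedSpace ℝ E] [MeasureSpace E]
  {β K θ : ℝ} {φ : ℝ → ℝ} {Ω : Set E}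

lemma IsYoung.dyadicOscillation_eq_lintegral_prod [SFinite (volume : Measure E)] {u : E → ℝ}
    (h : IsYoung φ) (hu : Measurable u) (x : E) (k : ℤ) :
    dyadicOscillation φ Ω u x k = dyadicKernel (finrank ℝ E) k * dyadicKernel (finrank ℝ E) k *
      ∫⁻ p, youngAbs φ (u p.1 - u p.2) ∂((volume.restrict (ball x (2 ^ k) ∩ Ω)).prod
        (volume.restrict (ball x (2 ^ k) ∩ Ω))) := by
  rw [dyadicOscillation]
  congr 1
  exact (lintegral_prod (fun p => youngAbs φ (u p.1 - u p.2))
    (h.measurable_youngAbs_sub hu).aemeasurable).symm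

variable [FiniteDimensional ℝ E] [BorelSpace E] [(volume : Measure E).IsAddHaarMeasure]

variable (E) in
lemma CbetaFinite.exists_lintegral_dyadicOscillation_mul_le (hC : CbetaFinite β φ) (h : IsYoung φ)
    (hβ : 0 < β) :
    ∃ C : ℝ≥0, ∀ (Ω : Set E) (u : E → ℝ) (x : E) (k : ℤ) (ρ : ℝ), Measurable u → 0 < ρ →
      ∫⁻ y in ball x ρ, dyadicOscillation φ Ω (fun z => dist x y / ρ * u z) x k *
        rpowKernel (finrank ℝ E + β) (dist x y) ≤
          C * rpowKernel β ρ * dyadicOscillation φ Ω u x k := by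
  obtain ⟨C, hC⟩ := hC.exists_lintegral_ball_le E h hβ
  refine ⟨C, fun Ω u x k ρ hu hρ => ?_⟩
  set D := dyadicKernel (finrank ℝ E) k * dyadicKernel (finrank ℝ E) k
  have hD : D ≠ ∞ := ENNReal.mul_ne_top (dyadicKernel_ne_top k) (dyadicKernel_ne_top k)
  set μ := volume.restrict (ball x (2 ^ k) ∩ Ω)
  have hmeas : Measurable (Function.uncurry fun (y : E) (p : E × E) =>
      youngAbs φ (dist x y / ρ * (u p.1 - u p.2)) * rpowKernel (finrank ℝ E + β) (dist x y)) :=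
    (h.measurable_youngAbs.comp (by fun_prop)).mul (measurable_rpowKernel.comp (by fun_prop))
  calc ∫⁻ y in ball x ρ, dyadicOscillation φ Ω (fun z => dist x y / ρ * u z) x k *
        rpowKernel (finrank ℝ E + β) (dist x y)
      = D * ∫⁻ y in ball x ρ, ∫⁻ p, youngAbs φ (dist x y / ρ * (u p.1 - u p.2)) *
          rpowKernel (finrank ℝ E + β) (dist x y) ∂(μ.prod μ) := by
        rw [← lintegral_const_mul' _ _ hD]
        refine lintegral_congr fun y => ?_
        rw [h.dyadicOscillation_eq_lintegral_prod (hu.const_mul _),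
          lintegral_mul_const' _ _ rpowKernel_ne_top, mul_assoc]
        simp only [mul_sub]
        rfl
    _ = D * ∫⁻ p, (∫⁻ y in ball x ρ, youngAbs φ (dist x y / ρ * (u p.1 - u p.2)) *
          rpowKernel (finrank ℝ E + β) (dist x y)) ∂(μ.prod μ) := by
        rw [lintegral_lintegral_swap hmeas.aemeasurable]
    _ ≤ D * ∫⁻ p, C * rpowKernel β ρ * youngAbs φ (u p.1 - u p.2) ∂(μ.prod μ) := by
        gcongr with p
        exact hC x ρ _ hρ
    _ = C * rpowKernel β ρ * dyadicOscillation φ Ω u x k := by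
        rw [lintegral_const_mul' _ _ (ENNReal.mul_ne_top ENNReal.coe_ne_top rpowKernel_ne_top),
          h.dyadicOscillation_eq_lintegral_prod hu]
        ring

lemma IsAhlforsRegularWith.exists_lintegral_averagingExtension_sub_near_le
    (hΩ : IsAhlforsRegularWith θ Ω) (h : IsYoung φ) (hK : IsDoubling φ K) (hβ : 0 < β)
    (hC : CbetaFinite β φ) :
    ∃ C : ℝ≥0, ∀ u : E → ℝ, Measurable u → (∀ x r, IntegrableOn u (ball x r ∩ Ω)) →
      ∀ x, ∫⁻ y in ball x (infDist x Ω / 2),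
        youngAbs φ (averagingExtension Ω u x - averagingExtension Ω u y) *
          rpowKernel (finrank ℝ E + β) (dist x y) ≤
            C * ∑' k : ℤ, dyadicKernel β k * dyadicOscillation φ Ω u x k := by
  obtain ⟨C₁, M, hC₁⟩ := hΩ.exists_youngAbs_averagingExtension_sub_le h
  obtain ⟨C₂, hC₂⟩ := hC.exists_lintegral_dyadicOscillation_mul_le E h hβ
  obtain ⟨C₃, hC₃⟩ := h.exists_dyadicOscillation_const_mul_le (E := E) hK M
  refine ⟨C₁ * (C₂ * (dyadicKernel β (-4)).toNNReal * C₃), fun u hum hui x => ?_⟩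
  rcases (infDist_nonneg (x := x) (s := Ω)).eq_or_lt with hx | hx
  · simp [← hx]
  set d := infDist x Ω
  set κ : E → ℝ≥0∞ := fun y => rpowKernel (finrank ℝ E + β) (dist x y)
  obtain ⟨k, hk, hk', hd⟩ := exists_rpowKernel_le_dyadicKernel hβ.le hx
  calc ∫⁻ y in ball x (d / 2),
        youngAbs φ (averagingExtension Ω u x - averagingExtension Ω u y) * κ y
      ≤ ∫⁻ y in ball x (d / 2),
          C₁ * (dyadicOscillation φ Ω (fun z => dist x y / d * (M * u z)) x k * κ y) := by
        refine setLIntegral_mono' measurableSet_ball fun y hy => ?_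
        rw [← mul_assoc]
        refine mul_le_mul_left ((hC₁ u hui x y k hx (mem_ball'.1 hy).le hk hk').trans_eq ?_) _
        simp only [d, mul_comm M, mul_assoc]
    _ ≤ C₁ * ∫⁻ y in ball x d,
          dyadicOscillation φ Ω (fun z => dist x y / d * (M * u z)) x k * κ y := by
        rw [lintegral_const_mul' _ _ ENNReal.coe_ne_top]
        gcongr
        linarith
    _ ≤ C₁ * (C₂ * rpowKernel β d * (C₃ * dyadicOscillation φ Ω u x k)) := by
        gcongr
        exact (hC₂ Ω _ x k d (hum.const_mul M) hx).trans (mul_le_mul_right (hC₃ _ _ _ _) _)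
    _ ≤ C₁ * (C₂ * (dyadicKernel β (-4) * dyadicKernel β k) *
          (C₃ * dyadicOscillation φ Ω u x k)) := by gcongr
    _ = C₁ * (C₂ * dyadicKernel β (-4) * C₃) *
          (dyadicKernel β k * dyadicOscillation φ Ω u x k) := by ring
    _ ≤ _ := by
        push_cast
        rw [ENNReal.coe_toNNReal (dyadicKernel_ne_top _)]
        gcongr
        exact ENNReal.le_tsum (f := fun k : ℤ => dyadicKernel β k * dyadicOscillation φ Ω u x k) k

end Near

lemma tsum_dyadicKernel_mul_comp_add_right (β : ℝ) (f : ℤ → ℝ≥0∞) (j : ℤ) :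
    ∑' k : ℤ, dyadicKernel β k * f (k + j) =
      dyadicKernel β (-j) * ∑' k : ℤ, dyadicKernel β k * f k := by
  rw [← (Equiv.addRight j).tsum_eq fun k => dyadicKernel β k * f k, ← ENNReal.tsum_mul_left]
  refine tsum_congr fun k => ?_
  rw [Equiv.coe_addRight, ← mul_assoc, ← dyadicKernel_add, (by ring : -j + (k + j) = k)]

section Symmetry

variable {α : Type*} [MeasurableSpace α] {μ : Measure α} [SFinite μ] {G : α → α → ℝ≥0∞} {δ : α → ℝ}

lemma lintegral_lintegral_le_two_mul_of_symm (hG : Measurable (Function.uncurry G))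
    (hsymm : ∀ x y, G x y = G y x) (hδ : Measurable δ) :
    ∫⁻ x, ∫⁻ y, G x y ∂μ ∂μ ≤ 2 * ∫⁻ x, ∫⁻ y in {y | δ y ≤ δ x}, G x y ∂μ ∂μ := by
  set F : α → α → ℝ≥0∞ := fun x y => {y | δ y ≤ δ x}.indicator (G x) y
  have hset : MeasurableSet {p : α × α | δ p.2 ≤ δ p.1} :=
    measurableSet_le (hδ.comp measurable_snd) (hδ.comp measurable_fst)
  have hF : Measurable (Function.uncurry F) := hG.indicator hset
  calc ∫⁻ x, ∫⁻ y, G x y ∂μ ∂μ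
      ≤ ∫⁻ x, ∫⁻ y, (F x y + F y x) ∂μ ∂μ := by
        refine lintegral_mono fun x => lintegral_mono fun y => ?_
        rcases le_total (δ y) (δ x) with h | h
        · exact le_add_right (indicator_of_mem (s := {y | δ y ≤ δ x}) h (G x)).ge
        · exact le_add_left ((hsymm x y).trans_le
            (indicator_of_mem (s := {x | δ x ≤ δ y}) h (G y)).ge)
    _ = (∫⁻ x, ∫⁻ y, F x y ∂μ ∂μ) + ∫⁻ x, ∫⁻ y, F y x ∂μ ∂μ := by
        exact (lintegral_congr fun x => lintegral_add_left hF.of_uncurry_left _).trans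
          (lintegral_add_left hF.lintegral_prod_right' _)
    _ = 2 * ∫⁻ x, ∫⁻ y in {y | δ y ≤ δ x}, G x y ∂μ ∂μ := by
        rw [← lintegral_lintegral_swap hF.aemeasurable, two_mul]
        simp only [F, lintegral_indicator (measurableSet_le hδ measurable_const)]

end Symmetry

section Far

variable {E : Type*} [NormedAddCommGroup E] [NormedSpace ℝ E] [FiniteDimensional ℝ E]
  [MeasureSpace E] [BorelSpace E] [(volume : Measure E).IsAddHaarMeasure]
  {β K θ : ℝ} {φ : ℝ → ℝ} {Ω : Set E}

lemma dyadicKernel_mul_lintegral_setLIntegral_ball {f g : E → ℝ≥0∞} (hf : Measurable f)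
    (hg : Measurable g) (k : ℤ) :
    dyadicKernel (finrank ℝ E + β) k * ∫⁻ x, ∫⁻ y in ball x (2 ^ k), (f x + g y) =
      unitBallVol E * (dyadicKernel β k * ((∫⁻ x, f x) + ∫⁻ x, g x)) := by
  have hvol : ∀ x : E, volume (ball x (2 ^ k)) =
      ENNReal.ofReal ((2 ^ k) ^ finrank ℝ E) * unitBallVol E := fun x =>
    volume_ball_eq x (by positivity)
  have hconv : ∫⁻ x, ∫⁻ y in ball x (2 ^ k), g y =
      (∫⁻ x, g x) * (ENNReal.ofReal ((2 ^ k) ^ finrank ℝ E) * unitBallVol E) := by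
    have := lintegral_setLIntegral_ball_inter (Ω := univ) (μ := volume) (ν := volume) hg (2 ^ k)
    simpa only [inter_univ, Measure.restrict_univ, hvol, lintegral_mul_const _ hg] using this
  simp only [lintegral_add_left measurable_const, setLIntegral_const, hvol]
  rw [lintegral_add_left (hf.mul_const _), lintegral_mul_const _ hf, hconv,
    dyadicKernel_exponent_add]
  calc dyadicKernel (finrank ℝ E) k * dyadicKernel β k *
        ((∫⁻ x, f x) * (ENNReal.ofReal ((2 ^ k) ^ finrank ℝ E) * unitBallVol E) +
          (∫⁻ x, g x) * (ENNReal.ofReal ((2 ^ k) ^ finrank ℝ E) * unitBallVol E))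
      = dyadicKernel (finrank ℝ E) k * ENNReal.ofReal ((2 ^ k) ^ finrank ℝ E) *
          (unitBallVol E * (dyadicKernel β k * ((∫⁻ x, f x) + ∫⁻ x, g x))) := by ring
    _ = _ := by
        rw [dyadicKernel, rpowKernel_natCast_mul_ofReal_pow (by positivity), one_mul]

lemma lintegral_tsum_dyadicKernel_mul_indicator_ball {f g : E → ℤ → ℝ≥0∞}
    (hf : ∀ k, Measurable fun x => f x k) (hg : ∀ k, Measurable fun x => g x k) :
    ∫⁻ x, ∫⁻ y, ∑' k : ℤ, dyadicKernel (finrank ℝ E + β) k *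
        (ball x (2 ^ k)).indicator (fun y => f x k + g y k) y =
      unitBallVol E * ((∫⁻ x, ∑' k : ℤ, dyadicKernel β k * f x k) +
        ∫⁻ x, ∑' k : ℤ, dyadicKernel β k * g x k) := by
  have hfg : ∀ k, Measurable (Function.uncurry fun x y => f x k + g y k) := fun k =>
    ((hf k).comp measurable_fst).add ((hg k).comp measurable_snd)
  have hind : ∀ k : ℤ, Measurable (Function.uncurry fun x y =>
      (ball x (2 ^ k)).indicator (fun y => f x k + g y k) y) := fun k =>
    measurable_indicator_ball (hfg k) measurable_id _
  have hinner : ∀ x, ∫⁻ y, ∑' k : ℤ, dyadicKernel (finrank ℝ E + β) k *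
      (ball x (2 ^ k)).indicator (fun y => f x k + g y k) y =
        ∑' k : ℤ, dyadicKernel (finrank ℝ E + β) k * ∫⁻ y in ball x (2 ^ k), (f x k + g y k) := by
    intro x
    rw [lintegral_tsum fun k => ((hind k).of_uncurry_left.const_mul _).aemeasurable]
    refine tsum_congr fun k => ?_
    rw [lintegral_const_mul' _ _ (dyadicKernel_ne_top k), lintegral_indicator measurableSet_ball]
  have hmeas : ∀ k : ℤ, Measurable fun x => ∫⁻ y in ball x (2 ^ k), (f x k + g y k) := fun k => by
    simpa only [inter_univ, id] using
      measurable_setLIntegral_ball_inter (Ω := univ) (hfg k) measurable_id _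
  simp only [hinner]
  rw [lintegral_tsum fun k => ((hmeas k).const_mul _).aemeasurable,
    lintegral_tsum fun k => ((hf k).const_mul _).aemeasurable,
    lintegral_tsum fun k => ((hg k).const_mul _).aemeasurable, ← ENNReal.tsum_add,
    ← ENNReal.tsum_mul_left]
  refine tsum_congr fun k => ?_
  simp only [lintegral_const_mul' _ _ (dyadicKernel_ne_top k)]
  rw [dyadicKernel_mul_lintegral_setLIntegral_ball (hf k) (hg k), mul_add]

/-- The bound for the integrand of the modular of the extension at points `x` and `y` whose distance
dominates their distances to `Ω`: the scales `2^k > |x - y|` contribute the errors of replacing the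
extension by averages of `u`, and the oscillation of `u` between these averages. -/
noncomputable def farMajorant (β : ℝ) (φ : ℝ → ℝ) (Ω : Set E) (u : E → ℝ) (x y : E) : ℝ≥0∞ :=
  ∑' k : ℤ, dyadicKernel (finrank ℝ E + β) k *
    (ball x (2 ^ k)).indicator (fun y => (extensionError φ Ω u x k +
      dyadicOscillation φ Ω u x (k + 2)) + extensionError φ Ω u y k) y

lemma IsAhlforsRegularWith.exists_youngAbs_averagingExtension_sub_far_le
    (hΩ : IsAhlforsRegularWith θ Ω) (h : IsYoung φ) (hK : IsDoubling φ K) (hβ : 0 < β) :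
    ∃ C : ℝ≥0, ∀ u : E → ℝ, (∀ x r, IntegrableOn u (ball x r ∩ Ω)) → ∀ x y,
      infDist x Ω / 2 ≤ dist x y → infDist y Ω ≤ infDist x Ω →
        youngAbs φ (averagingExtension Ω u x - averagingExtension Ω u y) *
          rpowKernel (finrank ℝ E + β) (dist x y) ≤
            C * farMajorant β φ Ω u x y := by
  obtain ⟨C₁, hC₁⟩ := hΩ.exists_youngAbs_dyadicAverage_sub_le h hK
  obtain ⟨C₂, hC₂⟩ := h.exists_youngAbs_sub_le_add_add hK
  refine ⟨C₂ * (1 + C₁) * (dyadicKernel (finrank ℝ E + β) (-4)).toNNReal,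
    fun u hui x y hxy hyx => ?_⟩
  rcases eq_or_ne x y with rfl | hne
  · simp [h.youngAbs_zero]
  have hd : 0 < dist x y := dist_pos.2 hne
  obtain ⟨k, hk, -, hkernel⟩ :=
    exists_rpowKernel_le_dyadicKernel (by positivity : 0 ≤ finrank ℝ E + β) hd
  have herror : ∀ z, infDist z Ω ≤ 2 * dist x y → extensionError φ Ω u z k =
      youngAbs φ (averagingExtension Ω u z - dyadicAverage Ω u z k) := fun z hz => by
    rw [extensionError, if_pos (by linarith)]
  set R := (extensionError φ Ω u x k + dyadicOscillation φ Ω u x (k + 2)) +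
    extensionError φ Ω u y k
  have hvalue : youngAbs φ (averagingExtension Ω u x - averagingExtension Ω u y) ≤
      C₂ * ((1 + C₁) * R) := by
    refine (hC₂ _ (dyadicAverage Ω u x k) (dyadicAverage Ω u y k) _).trans ?_
    gcongr
    calc _ ≤ extensionError φ Ω u x k + C₁ * dyadicOscillation φ Ω u x (k + 2) +
          extensionError φ Ω u y k := by
          rw [herror x (by linarith), herror y (by linarith),
            youngAbs_sub_comm (averagingExtension Ω u y)]
          gcongr
          exact hC₁ u hui x y k k (Or.inl rfl) (by linarith) (by linarith) (by linarith)
      _ ≤ (extensionError φ Ω u x k + C₁ * dyadicOscillation φ Ω u x (k + 2) +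
          extensionError φ Ω u y k) + (dyadicOscillation φ Ω u x (k + 2) +
            C₁ * (extensionError φ Ω u x k + extensionError φ Ω u y k)) := le_self_add
      _ = (1 + C₁) * R := by ring
  calc youngAbs φ (averagingExtension Ω u x - averagingExtension Ω u y) *
        rpowKernel (finrank ℝ E + β) (dist x y)
      ≤ C₂ * ((1 + C₁) * R) *
          (dyadicKernel (finrank ℝ E + β) (-4) * dyadicKernel (finrank ℝ E + β) k) := by gcongr
    _ = C₂ * (1 + C₁) * dyadicKernel (finrank ℝ E + β) (-4) *
          (dyadicKernel (finrank ℝ E + β) k * R) := by ring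
    _ ≤ _ := by
        push_cast
        rw [ENNReal.coe_toNNReal (dyadicKernel_ne_top _)]
        gcongr
        refine le_trans (le_of_eq ?_) (ENNReal.le_tsum k)
        rw [indicator_of_mem (mem_ball'.2 (by linarith))]

lemma IsAhlforsRegularWith.exists_setLIntegral_averagingExtension_sub_le
    (hΩ : IsAhlforsRegularWith θ Ω) (h : IsYoung φ) (hK : IsDoubling φ K) (hβ : 0 < β)
    (hC : CbetaFinite β φ) :
    ∃ C : ℝ≥0, ∀ u : E → ℝ, Measurable u → (∀ x r, IntegrableOn u (ball x r ∩ Ω)) → ∀ x,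
      ∫⁻ y in {y | infDist y Ω ≤ infDist x Ω},
        youngAbs φ (averagingExtension Ω u x - averagingExtension Ω u y) *
          rpowKernel (finrank ℝ E + β) (dist x y) ≤
            C * ((∑' k : ℤ, dyadicKernel β k * dyadicOscillation φ Ω u x k) +
              ∫⁻ y, farMajorant β φ Ω u x y) := by
  obtain ⟨C₁, hC₁⟩ := hΩ.exists_lintegral_averagingExtension_sub_near_le h hK hβ hC
  obtain ⟨C₂, hC₂⟩ := hΩ.exists_youngAbs_averagingExtension_sub_far_le h hK hβ
  refine ⟨max C₁ C₂, fun u hum hui x => ?_⟩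
  rw [← lintegral_inter_add_sdiff _ _ (measurableSet_ball (x := x) (ε := infDist x Ω / 2)), mul_add,
    ← lintegral_const_mul' _ (farMajorant β φ Ω u x) ENNReal.coe_ne_top]
  refine add_le_add ?_ ?_
  · refine (lintegral_mono_set inter_subset_right).trans ((hC₁ u hum hui x).trans ?_)
    gcongr
    exact le_max_left _ _
  · refine (setLIntegral_mono' ((measurableSet_le measurable_infDist measurable_const).diff
      measurableSet_ball) fun y hy => ?_).trans (setLIntegral_le_lintegral _ _)
    refine (hC₂ u hui x y (not_lt.1 fun hlt => hy.2 (mem_ball'.2 hlt)) hy.1).trans ?_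
    gcongr
    exact le_max_right _ _

lemma IsAhlforsRegularWith.exists_lintegral_farMajorant_le (hΩ : IsAhlforsRegularWith θ Ω)
    (h : IsYoung φ) (hK : IsDoubling φ K) (hβ : 0 < β) :
    ∃ C : ℝ≥0, ∀ u : E → ℝ, Measurable u → (∀ x r, IntegrableOn u (ball x r ∩ Ω)) →
      ∫⁻ x, ∫⁻ y, farMajorant β φ Ω u x y ≤ C * fracModular β φ Ω u := by
  obtain ⟨C₁, hC₁⟩ := hΩ.exists_lintegral_tsum_extensionError_le h hK hβ
  obtain ⟨C₂, hC₂⟩ := h.exists_lintegral_tsum_dyadicOscillation_le E hβ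
  refine ⟨unitBallVol E * (C₁ + (dyadicKernel β (-2)).toNNReal * C₂ + C₁), fun u hum hui => ?_⟩
  have hOm := fun k => h.measurable_dyadicOscillation (Ω := Ω) hum k
  have hEm := fun k => h.measurable_extensionError hΩ.measurableSet hum k
  have hshift : ∀ x, ∑' k : ℤ, dyadicKernel β k *
      (extensionError φ Ω u x k + dyadicOscillation φ Ω u x (k + 2)) =
        (∑' k : ℤ, dyadicKernel β k * extensionError φ Ω u x k) +
          dyadicKernel β (-2) * ∑' k : ℤ, dyadicKernel β k * dyadicOscillation φ Ω u x k :=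
    fun x => by rw [← tsum_dyadicKernel_mul_comp_add_right, ← ENNReal.tsum_add]; simp only [mul_add]
  calc ∫⁻ x, ∫⁻ y, farMajorant β φ Ω u x y
      = unitBallVol E * ((∫⁻ x, ∑' k : ℤ, dyadicKernel β k *
          (extensionError φ Ω u x k + dyadicOscillation φ Ω u x (k + 2))) +
            ∫⁻ x, ∑' k : ℤ, dyadicKernel β k * extensionError φ Ω u x k) :=
        lintegral_tsum_dyadicKernel_mul_indicator_ball (fun k => (hEm k).add (hOm (k + 2))) hEm
    _ = unitBallVol E * ((∫⁻ x, ∑' k : ℤ, dyadicKernel β k * extensionError φ Ω u x k) +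
          dyadicKernel β (-2) *
            (∫⁻ x, ∑' k : ℤ, dyadicKernel β k * dyadicOscillation φ Ω u x k) +
          ∫⁻ x, ∑' k : ℤ, dyadicKernel β k * extensionError φ Ω u x k) := by
        simp only [hshift]
        rw [lintegral_add_left (Measurable.tsum fun k => (hEm k).const_mul _),
          lintegral_const_mul' _ _ (dyadicKernel_ne_top _)]
    _ ≤ unitBallVol E * (C₁ * fracModular β φ Ω u + dyadicKernel β (-2) *
          (C₂ * fracModular β φ Ω u) + C₁ * fracModular β φ Ω u) := by
        gcongr
        exacts [hC₁ u hum hui, hC₂ Ω u hum, hC₁ u hum hui]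
    _ = _ := by
        push_cast
        rw [ENNReal.coe_toNNReal (dyadicKernel_ne_top _)]
        ring

lemma IsAhlforsRegularWith.exists_fracModular_averagingExtension_le_of_measurable
    (hΩ : IsAhlforsRegularWith θ Ω) (h : IsYoung φ) (hK : IsDoubling φ K) (hβ : 0 < β)
    (hC : CbetaFinite β φ) :
    ∃ C : ℝ≥0, ∀ u : E → ℝ, Measurable u → (∀ x r, IntegrableOn u (ball x r ∩ Ω)) →
      fracModular β φ univ (averagingExtension Ω u) ≤ C * fracModular β φ Ω u := by
  obtain ⟨C₁, hC₁⟩ := hΩ.exists_setLIntegral_averagingExtension_sub_le h hK hβ hC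
  obtain ⟨C₂, hC₂⟩ := h.exists_lintegral_tsum_dyadicOscillation_le E hβ
  obtain ⟨C₃, hC₃⟩ := hΩ.exists_lintegral_farMajorant_le h hK hβ
  refine ⟨2 * (C₁ * (C₂ + C₃)), fun u hum hui => ?_⟩
  set v := averagingExtension Ω u
  have hvm : Measurable v := measurable_averagingExtension hΩ.measurableSet hum
  have hSm : Measurable fun x => ∑' k : ℤ, dyadicKernel β k * dyadicOscillation φ Ω u x k :=
    Measurable.tsum fun k => (h.measurable_dyadicOscillation hum k).const_mul _
  calc fracModular β φ univ v
      = ∫⁻ x, ∫⁻ y, youngAbs φ (v x - v y) * rpowKernel (finrank ℝ E + β) (dist x y) := by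
        simp only [fracModular, Measure.restrict_univ]
    _ ≤ 2 * ∫⁻ x, ∫⁻ y in {y | infDist y Ω ≤ infDist x Ω},
          youngAbs φ (v x - v y) * rpowKernel (finrank ℝ E + β) (dist x y) :=
        lintegral_lintegral_le_two_mul_of_symm
          ((h.measurable_youngAbs_sub hvm).mul (measurable_rpowKernel.comp (by fun_prop)))
          (fun x y => by rw [dist_comm, youngAbs_sub_comm]) measurable_infDist
    _ ≤ 2 * ∫⁻ x, C₁ * ((∑' k : ℤ, dyadicKernel β k * dyadicOscillation φ Ω u x k) +
          ∫⁻ y, farMajorant β φ Ω u x y) := by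
        gcongr with x
        exact hC₁ u hum hui x
    _ = 2 * (C₁ * ((∫⁻ x, ∑' k : ℤ, dyadicKernel β k * dyadicOscillation φ Ω u x k) +
          ∫⁻ x, ∫⁻ y, farMajorant β φ Ω u x y)) := by
        rw [lintegral_const_mul' _ _ ENNReal.coe_ne_top, lintegral_add_left hSm]
    _ ≤ 2 * (C₁ * (C₂ * fracModular β φ Ω u + C₃ * fracModular β φ Ω u)) := by
        gcongr
        exacts [hC₂ Ω u hum, hC₃ u hum hui]
    _ = _ := by
        push_cast
        ring

end Far

section ModularCalculus

variable {E : Type*} [NormedAddCommGroup E] [NormedSpace ℝ E] [MeasureSpace E]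
  {β : ℝ} {φ : ℝ → ℝ} {Ω : Set E} {u v : E → ℝ}

lemma fracModular_congr (huv : u =ᵐ[volume.restrict Ω] v) :
    fracModular β φ Ω u = fracModular β φ Ω v := by
  refine lintegral_congr_ae ?_
  filter_upwards [huv] with x hx
  refine lintegral_congr_ae ?_
  filter_upwards [huv] with y hy
  rw [hx, hy]

lemma IsYoung.fracModular_div_le (h : IsYoung φ) {c : ℝ} (hc : 1 ≤ c) :
    fracModular β φ Ω (fun x => u x / c) ≤ ENNReal.ofReal c⁻¹ * fracModular β φ Ω u := by
  have hc0 : 0 ≤ c⁻¹ := by positivity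
  have hYoung : ∀ t, youngAbs φ (t / c) ≤ ENNReal.ofReal c⁻¹ * youngAbs φ t := fun t => by
    rw [youngAbs, youngAbs, ← ENNReal.ofReal_mul hc0, div_eq_inv_mul, abs_mul, abs_of_nonneg hc0]
    exact ENNReal.ofReal_le_ofReal
      (h.map_mul_le hc0 (inv_le_one_of_one_le₀ hc) (abs_nonneg t))
  simp only [fracModular, ← lintegral_const_mul' _ _ ENNReal.ofReal_ne_top, ← sub_div, ← mul_assoc]
  gcongr with x y
  exact hYoung _

end ModularCalculus

section AveragingOperator

variable {E : Type*} [NormedAddCommGroup E] [MeasureSpace E] {Ω : Set E} {u v : E → ℝ}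

lemma averagingExtension_congr (hΩ : MeasurableSet Ω) (huv : u =ᵐ[volume.restrict Ω] v) :
    averagingExtension Ω u =ᵐ[volume] averagingExtension Ω v := by
  filter_upwards [(ae_restrict_iff' hΩ).1 huv] with x hx
  unfold averagingExtension
  split_ifs with hxΩ
  · exact hx hxΩ
  · exact weightedAverage_congr huv

lemma averagingExtension_smul (c : ℝ) (u : E → ℝ) :
    averagingExtension Ω (c • u) = c • averagingExtension Ω u := by
  funext x
  simp only [averagingExtension, Pi.smul_apply, smul_eq_mul]
  split_ifs
  · rfl
  · simp only [weightedAverage, Pi.smul_apply, smul_eq_mul, mul_left_comm, integral_const_mul,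
      mul_div_assoc]

lemma averagingExtension_div (u : E → ℝ) (c : ℝ) :
    averagingExtension Ω (fun x => u x / c) = fun x => averagingExtension Ω u x / c := by
  simpa only [Pi.smul_def, smul_eq_mul, div_eq_inv_mul] using averagingExtension_smul c⁻¹ u

variable [OpensMeasurableSpace E]

lemma integrableOn_extensionKernel_mul (hΩ : MeasurableSet Ω)
    (hu : ∀ x r, IntegrableOn u (ball x r ∩ Ω)) (x : E) :
    IntegrableOn (fun z => extensionKernel Ω x z * u z) Ω := by
  have hnorm : ∀ z, ‖extensionKernel Ω x z‖ ≤ 1 := fun z =>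
    (Real.norm_of_nonneg radialCutoff_one_mem_Icc.1).trans_le radialCutoff_one_mem_Icc.2
  have hball : IntegrableOn (fun z => extensionKernel Ω x z * u z) (ball x (3 * infDist x Ω) ∩ Ω) :=
    (hu x _).bdd_mul continuous_radialCutoff.measurable.aestronglyMeasurable (ae_of_all _ hnorm)
  refine hball.of_forall_sdiff_eq_zero hΩ fun z hz => ?_
  rw [extensionKernel, radialCutoff_eq_zero (by linarith [infDist_nonneg (x := x) (s := Ω)])
    (not_lt.1 fun hzx => hz.2 ⟨hzx, hz.1⟩), zero_mul]

lemma averagingExtension_add (hΩ : MeasurableSet Ω) (hu : ∀ x r, IntegrableOn u (ball x r ∩ Ω))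
    (hv : ∀ x r, IntegrableOn v (ball x r ∩ Ω)) :
    averagingExtension Ω (u + v) = averagingExtension Ω u + averagingExtension Ω v := by
  funext x
  simp only [averagingExtension, Pi.add_apply]
  split_ifs
  · rfl
  · simp only [weightedAverage, Pi.add_apply, mul_add]
    rw [integral_add (integrableOn_extensionKernel_mul hΩ hu x)
      (integrableOn_extensionKernel_mul hΩ hv x), add_div]

end AveragingOperator

section ExtensionBound

variable {E : Type*} [NormedAddCommGroup E] [NormedSpace ℝ E] [FiniteDimensional ℝ E]
  [MeasureSpace E] [BorelSpace E] [(volume : Measure E).IsAddHaarMeasure]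
  {β θ K : ℝ} {φ : ℝ → ℝ} {Ω : Set E}

lemma aestronglyMeasurable_averagingExtension (hΩ : MeasurableSet Ω) {u : E → ℝ}
    (hu : AEStronglyMeasurable u (volume.restrict Ω)) :
    AEStronglyMeasurable (averagingExtension Ω u) :=
  ⟨averagingExtension Ω (hu.mk u),
    (measurable_averagingExtension hΩ hu.stronglyMeasurable_mk.measurable).stronglyMeasurable,
    averagingExtension_congr hΩ hu.ae_eq_mk⟩

lemma IsAhlforsRegularWith.exists_fracModular_averagingExtension_le
    (hΩ : IsAhlforsRegularWith θ Ω) (h : IsYoung φ) (hK : IsDoubling φ K) (hβ : 0 < β)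
    (hC : CbetaFinite β φ) :
    ∃ C : ℝ≥0, ∀ u : E → ℝ, AEStronglyMeasurable u (volume.restrict Ω) →
      (∀ x r, IntegrableOn u (ball x r ∩ Ω)) →
      fracModular β φ univ (averagingExtension Ω u) ≤ C * fracModular β φ Ω u := by
  obtain ⟨C, hC⟩ := hΩ.exists_fracModular_averagingExtension_le_of_measurable h hK hβ hC
  refine ⟨C, fun u hum hui => ?_⟩
  rw [fracModular_congr (ae_restrict_of_ae
    (averagingExtension_congr hΩ.measurableSet hum.ae_eq_mk)), fracModular_congr hum.ae_eq_mk]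
  exact hC _ hum.stronglyMeasurable_mk.measurable fun x r => (hui x r).congr_fun_ae
    (ae_restrict_of_ae_restrict_of_subset inter_subset_right hum.ae_eq_mk)

lemma IsAhlforsRegularWith.exists_fracModular_averagingExtension_div_le_one
    (hΩ : IsAhlforsRegularWith θ Ω) (h : IsYoung φ) (hK : IsDoubling φ K) (hβ : 0 < β)
    (hC : CbetaFinite β φ) :
    ∃ C > 0, ∀ u : E → ℝ, AEStronglyMeasurable u (volume.restrict Ω) →
      (∀ x r, IntegrableOn u (ball x r ∩ Ω)) → ∀ lam,
      fracModular β φ Ω (fun x => u x / lam) ≤ 1 →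
        fracModular β φ univ (fun x => averagingExtension Ω u x / (C * lam)) ≤ 1 := by
  obtain ⟨C, hC⟩ := hΩ.exists_fracModular_averagingExtension_le h hK hβ hC
  refine ⟨max C 1, by positivity, fun u hum hui lam hlam => ?_⟩
  have hbound : fracModular β φ univ (fun x => averagingExtension Ω u x / lam) ≤ C := by
    rw [← averagingExtension_div]
    refine (hC _ ?_ fun x r => (hui x r).div_const lam).trans (mul_le_of_le_one_right' hlam)
    simpa only [div_eq_mul_inv] using hum.mul_const lam⁻¹
  simp only [mul_comm (max (C : ℝ) 1) lam, ← div_div]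
  calc fracModular β φ univ (fun x => averagingExtension Ω u x / lam / max C 1)
      ≤ ENNReal.ofReal (max C 1)⁻¹ * fracModular β φ univ
          (fun x => averagingExtension Ω u x / lam) := h.fracModular_div_le (le_max_right _ _)
    _ ≤ ENNReal.ofReal (max C 1)⁻¹ * ENNReal.ofReal (max C 1) := by
        gcongr
        exact hbound.trans (ENNReal.le_ofReal_iff_toReal_le ENNReal.coe_ne_top (by positivity) |>.2
          (le_max_left _ _))
    _ = 1 := by
        rw [← ENNReal.ofReal_mul (by positivity), inv_mul_cancel₀ (by positivity),
          ENNReal.ofReal_one]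

end ExtensionBound

/-! ### The seminorm -/

section Euclidean

variable {n : ℕ} {β K θ : ℝ} {φ : ℝ → ℝ} {Ω : Set (EuclideanSpace ℝ (Fin n))}
  {u : EuclideanSpace ℝ (Fin n) → ℝ}

lemma fracIntegral_eq_fracModular {lam : ℝ} (hlam : 0 < lam) :
    fracIntegral n β φ Ω u lam = fracModular β φ Ω fun x => u x / lam := by
  refine lintegral_congr fun x => lintegral_congr fun y => ?_
  rw [youngAbs, rpowKernel, ← ENNReal.ofReal_mul' (Real.rpow_nonneg dist_nonneg _), ← sub_div,
    abs_div, abs_of_pos hlam, Real.rpow_neg dist_nonneg, finrank_euclideanSpace_fin,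
    ← div_eq_mul_inv]

lemma fracNorm_lt_iff {a : ℝ≥0∞} : fracNorm n β φ Ω u < a ↔
    ∃ lam > 0, ENNReal.ofReal lam < a ∧ fracModular β φ Ω (fun x => u x / lam) ≤ 1 := by
  rw [fracNorm, sInf_lt_iff]
  constructor
  · rintro ⟨lam, ⟨h0, htop, hlam⟩, hlt⟩
    have hpos := ENNReal.toReal_pos h0.ne' htop
    exact ⟨lam.toReal, hpos, by rwa [ENNReal.ofReal_toReal htop],
      by rwa [← fracIntegral_eq_fracModular hpos]⟩
  · rintro ⟨lam, hpos, hlt, hlam⟩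
    refine ⟨ENNReal.ofReal lam, ⟨ENNReal.ofReal_pos.2 hpos, ENNReal.ofReal_ne_top, ?_⟩, hlt⟩
    rwa [ENNReal.toReal_ofReal hpos.le, fracIntegral_eq_fracModular hpos]

lemma fracNorm_le_ofReal {lam : ℝ} (hlam : 0 < lam)
    (h : fracModular β φ Ω (fun x => u x / lam) ≤ 1) : fracNorm n β φ Ω u ≤ ENNReal.ofReal lam :=
  sInf_le ⟨ENNReal.ofReal_pos.2 hlam, ENNReal.ofReal_ne_top,
    by rwa [ENNReal.toReal_ofReal hlam.le, fracIntegral_eq_fracModular hlam]⟩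

lemma fracNorm_le_mul_fracNorm {Ω' : Set (EuclideanSpace ℝ (Fin n))}
    {v : EuclideanSpace ℝ (Fin n) → ℝ} {C : ℝ} (hC : 0 < C)
    (h : ∀ lam > 0, fracModular β φ Ω (fun x => u x / lam) ≤ 1 →
      fracModular β φ Ω' (fun x => v x / (C * lam)) ≤ 1) :
    fracNorm n β φ Ω' v ≤ ENNReal.ofReal C * fracNorm n β φ Ω u := by
  have hC0 : ENNReal.ofReal C ≠ 0 := (ENNReal.ofReal_pos.2 hC).ne'
  rw [← ENNReal.div_le_iff' hC0 ENNReal.ofReal_ne_top]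
  refine le_of_forall_gt fun a ha => ?_
  obtain ⟨lam, hlam, hlt, hmod⟩ := fracNorm_lt_iff.1 ha
  refine lt_of_le_of_lt (ENNReal.div_le_of_le_mul' ?_) hlt
  rw [← ENNReal.ofReal_mul hC.le]
  exact fracNorm_le_ofReal (mul_pos hC hlam) (h lam hlam hmod)

lemma MemW.exists_fracModular_le_one (hu : MemW n β φ Ω u) :
    ∃ lam > 0, fracModular β φ Ω (fun x => u x / lam) ≤ 1 := by
  obtain ⟨lam, hlam, -, hmod⟩ := fracNorm_lt_iff.1 hu.2.lt_top
  exact ⟨lam, hlam, hmod⟩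

lemma IsYoung.integrableOn_of_fracModular_div_le_one (h : IsYoung φ) (hβ : 0 < β)
    (hΩ : volume Ω ≠ 0) (hu : AEStronglyMeasurable u (volume.restrict Ω)) {lam : ℝ}
    (hlam : lam ≠ 0) (hmod : fracModular β φ Ω (fun x => u x / lam) ≤ 1)
    {s : Set (EuclideanSpace ℝ (Fin n))} (hs : MeasurableSet s) (hsΩ : s ⊆ Ω)
    (hsb : Bornology.IsBounded s) : IntegrableOn u s := by
  have hint : IntegrableOn (fun x => u x / lam) s :=
    h.integrableOn_of_fracModular_ne_top hβ hΩ
      (by simpa only [div_eq_mul_inv] using hu.mul_const lam⁻¹)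
      (ne_top_of_le_ne_top ENNReal.one_ne_top hmod) hs hsΩ hsb
  simpa only [IntegrableOn, div_mul_cancel₀ _ hlam] using hint.mul_const lam

lemma MemW.integrableOn_ball_inter (hu : MemW n β φ Ω u) (hΩ : IsAhlforsRegularWith θ Ω)
    (h : IsYoung φ) (hβ : 0 < β) (x : EuclideanSpace ℝ (Fin n)) (r : ℝ) :
    IntegrableOn u (ball x r ∩ Ω) := by
  obtain ⟨lam, hlam, hmod⟩ := hu.exists_fracModular_le_one
  exact h.integrableOn_of_fracModular_div_le_one hβ hΩ.volume_ne_zero hu.1.aestronglyMeasurable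
    hlam.ne' hmod (measurableSet_ball.inter hΩ.measurableSet) inter_subset_right
    (isBounded_ball.subset inter_subset_left)

lemma IsAhlforsRegularWith.isExtensionDomain (hΩ : IsAhlforsRegularWith θ Ω) (h : IsYoung φ)
    (hK : IsDoubling φ K) (hβ : 0 < β) (hC : CbetaFinite β φ) : IsExtensionDomain n β φ Ω := by
  obtain ⟨C, hC0, hC⟩ := hΩ.exists_fracModular_averagingExtension_div_le_one h hK hβ hC
  refine ⟨C, hC0, averagingExtension Ω, fun u v hu hv => averagingExtension_add hΩ.measurableSet
    (hu.integrableOn_ball_inter hΩ h hβ) (hv.integrableOn_ball_inter hΩ h hβ),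
    fun c u _ => averagingExtension_smul c u, fun u hu => ?_⟩
  have hum := hu.1.aestronglyMeasurable
  have hmod := hC u hum (hu.integrableOn_ball_inter hΩ h hβ)
  have hnorm : fracNorm n β φ univ (averagingExtension Ω u) ≤
      ENNReal.ofReal C * fracNorm n β φ Ω u := fracNorm_le_mul_fracNorm hC0 fun lam _ => hmod lam
  refine ⟨⟨locallyIntegrableOn_univ.2 fun x => ⟨ball x 1, ball_mem_nhds x one_pos, ?_⟩,
      ne_top_of_le_ne_top (ENNReal.mul_ne_top ENNReal.ofReal_ne_top hu.2) hnorm⟩,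
    (ae_restrict_iff' hΩ.measurableSet).2 (ae_of_all _ fun x hx => averagingExtension_of_mem hx),
    hnorm⟩
  obtain ⟨lam, hlam, hone⟩ := hu.exists_fracModular_le_one
  refine h.integrableOn_of_fracModular_div_le_one hβ
    (isOpen_univ.measure_ne_zero _ univ_nonempty) ?_ (mul_pos hC0 hlam).ne' (hmod lam hone)
    measurableSet_ball (subset_univ _) isBounded_ball
  rw [Measure.restrict_univ]
  exact aestronglyMeasurable_averagingExtension hΩ.measurableSet hum

lemma IsExtensionDomain.hasModularExtension (hE : IsExtensionDomain n β φ Ω) (h : IsYoung φ) :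
    HasModularExtension β φ Ω := by
  obtain ⟨C, hC, E, -, -, hE⟩ := hE
  refine ⟨C + 1, by positivity, fun u hu hmod => ?_⟩
  have hu1 : fracNorm n β φ Ω u ≤ 1 := by
    simpa using fracNorm_le_ofReal one_pos (by simpa only [div_one] using hmod)
  obtain ⟨⟨hEint, -⟩, hEeq, hEnorm⟩ := hE u ⟨hu, ne_top_of_le_ne_top ENNReal.one_ne_top hu1⟩
  have hlt : fracNorm n β φ univ (E u) < ENNReal.ofReal (C + 1) :=
    (hEnorm.trans (mul_le_of_le_one_right' hu1)).trans_lt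
      ((ENNReal.ofReal_lt_ofReal_iff (by positivity)).2 (lt_add_one C))
  obtain ⟨lam, hlam, hlamC, hone⟩ := fracNorm_lt_iff.1 hlt
  have hratio : 1 ≤ (C + 1) / lam :=
    (one_le_div hlam).2 (ENNReal.ofReal_le_ofReal_iff (by positivity) |>.1 hlamC.le)
  refine ⟨fun x => E u x / (C + 1), ?_, ?_, hEeq.mono fun x hx => congrArg (· / (C + 1)) hx⟩
  · simpa only [Pi.smul_def, smul_eq_mul, div_eq_inv_mul] using
      (locallyIntegrableOn_univ.1 hEint).smul (C + 1)⁻¹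
  · calc fracModular β φ univ (fun x => E u x / (C + 1))
        = fracModular β φ univ (fun x => E u x / lam / ((C + 1) / lam)) := by
          simp only [div_div, mul_div_cancel₀ _ hlam.ne']
      _ ≤ ENNReal.ofReal ((C + 1) / lam)⁻¹ * fracModular β φ univ (fun x => E u x / lam) :=
          h.fracModular_div_le hratio
      _ ≤ 1 := mul_le_one' (ENNReal.ofReal_le_one.2 (inv_le_one_of_one_le₀ hratio)) hone

lemma ahlforsRegular_iff_exists_isAhlforsRegularWith (hΩ : IsOpen Ω) (hne : Ω.Nonempty) :
    AhlforsRegular n Ω ↔ ∃ θ, IsAhlforsRegularWith θ Ω := by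
  constructor
  · rintro ⟨θ, hθ, hvol⟩
    exact ⟨θ, hΩ.measurableSet, hΩ.measure_ne_zero _ hne, hθ,
      by rwa [finrank_euclideanSpace_fin]⟩
  · rintro ⟨θ, hθ⟩
    have hvol := hθ.le_volume
    rw [finrank_euclideanSpace_fin] at hvol
    exact ⟨θ, hθ.pos, hvol⟩

end Euclidean

/-- a domain is a `Ẇ^{β,φ}`-extension domain iff it is Ahlfors `n`-regular. -/
theorem extension_iff_ahlfors
    (n : ℕ) (hn : 1 ≤ n) (β : ℝ)
    (hβ : β ∈ Set.Ioo (0 : ℝ) (n : ℝ) ∪ Set.Ioi (n : ℝ))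
    (φ : ℝ → ℝ) (hφ : IsYoung φ) (hdbl : ∃ K : ℝ, IsDoubling φ K)
    (hCβ : CbetaFinite β φ)
    (Ω : Set (EuclideanSpace ℝ (Fin n))) (hΩopen : IsOpen Ω) (hΩconn : IsConnected Ω) :
    IsExtensionDomain n β φ Ω ↔ AhlforsRegular n Ω := by
  obtain ⟨K, hK⟩ := hdbl
  have hβ0 : 0 < β := hβ.elim (fun hβ => hβ.1) fun hβ => n.cast_nonneg.trans_lt hβ
  rw [ahlforsRegular_iff_exists_isAhlforsRegularWith hΩopen hΩconn.nonempty]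
  refine ⟨fun hE => ?_, fun ⟨_, hΩ⟩ => hΩ.isExtensionDomain hφ hK hβ0 hCβ⟩
  have hE' := hE.hasModularExtension hφ
  rcases hβ with ⟨-, hlt⟩ | hgt
  · exact hE'.exists_isAhlforsRegularWith_of_lt hΩopen hΩconn.nonempty hφ hK hβ0
      (by rwa [finrank_euclideanSpace_fin]) hCβ
  · exact hE'.exists_isAhlforsRegularWith_of_gt hΩopen hΩconn hφ hK
      (by rwa [finrank_euclideanSpace_fin]) hCβ
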